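/- Let a ∈ (0,1) and s* = 1/2 + a/2. There exist b ∈ (0,1/2) and a constant C > 0 such that for all Schwartz functions u, v on ℝ² one has ‖∂ₓ(uv)‖_{Y^{−b}_{−s*, s*}} ≤ C ‖u‖_{Y^{1/2}_{−s*, s*}} ( ‖v‖_{X^{1/2}_{s*}} + ‖v‖_{X^{1/2}_{s*}}^{1/2} ‖v‖_{Y^{1/2}_{−s*, s*}}^{1/2} ) + C ‖v‖_{Y^{1/2}_{−s*, s*}} ( ‖u‖_{X^{1/2}_{s*}} + ‖u‖_{X^{1/2}_{s*}}^{1/2} ‖u‖_{Y^{1/2}_{−s*, s*}}^{1/2} ) + C ‖u‖_{X^{1/2}_{s*}} ‖v‖_{X^{1/2}_{s*}}. -/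

import Mathlib

/-!
On the Fourier side, `∂ₓ` becomes multiplication by `ξ`, products become convolutions, and the
weights `x` and `t` become derivatives in `ξ` and `λ`. Everything is estimated through absolute
values of Fourier transforms, with norms `eXnorm` in `[0, ∞]`; for Schwartz functions these are
finite and agree with `Xnorm`. The exponent is `b = 1/2 - a/16`.

**Placing the weight.** For a fixed output frequency `ξ`, let `θ` be a smooth function of the ratio
of the first input frequency to `ξ`, vanishing below `1/4` and equal to one above `3/4`. The
derivative representing the weight is kept on the first factor where `θ` lives and is integrated by
parts onto the second factor where `1 - θ` lives. The weighted factor then always carries a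
frequency comparable to or larger than the other two (`firstDominantSet`). Since `∂θ` is of size
`1 / |ξ|`, the error is a convolution without weight and without derivative, which Cauchy–Schwarz
handles; it produces the term `‖u‖_X ‖v‖_X`.

**The paraproduct.** What remains is a paraproduct of the weighted factor `F` and the other factor
`V`, both localized to dyadic modulations.
* If `V` has much lower frequency than `F`, the resonance function is at least of size
  `|ξ₁|^{1+a} |ξ₂|` and at most of the size of the largest modulation. Schur's test applies, because
  the derivative `|ξ₁|` splits as the geometric mean of `|ξ₁|^{1+a}`, absorbed by transversality of
  the modulation strips, and `|ξ₁|^{1-a}`, absorbed by the resonance bound, which confines `ξ₂` to a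
  short interval. Only a majorant of `V` depending on `λ` alone enters.
* If the frequencies are comparable or bounded, the resonance bound leaves an integrable power of
  the input frequency to spare, and Cauchy–Schwarz over a modulation strip suffices.

Both cases gain a power of the largest modulation, which makes the dyadic sums converge for `b`
slightly below `1/2`.

**The majorant.** The fundamental theorem of calculus in `ξ`, applied to `χ_j(λ - ω(ξ)) v̂(ξ, λ)²`,
bounds the pieces of `v̂` by functions of `λ` alone (`timeMajorant`). As `∂_ξ v̂` is the transform
of `i x v`, the sum of their `L²` norms is at most a multiple of
`‖v‖_X + ‖v‖_X^{1/2} ‖v‖_Y^{1/2}`.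
-/

open MeasureTheory Complex

noncomputable section

/-- The dispersive symbol `ω(ξ) = ξ |ξ|^(1+a)`. -/
def disp (a ξ : ℝ) : ℝ := ξ * |ξ| ^ (1 + a)

/-- Fourier transform on `ℝ`, convention `f̂(ξ) = ∫ e^{ixξ} f(x) dx`. -/
def FT1 (f : ℝ → ℂ) (ξ : ℝ) : ℂ :=
  ∫ x : ℝ, Complex.exp (Complex.I * ((x * ξ : ℝ) : ℂ)) * f x

/-- Spacetime Fourier transform, convention `f̂(ξ,λ) = ∫ e^{i(xξ+tλ)} f(x,t) dx dt`,
for `f : ℝ × ℝ → ℂ` with first coordinate `x` (space) and second `t` (time). -/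
def FT2 (f : ℝ × ℝ → ℂ) (ξ lam : ℝ) : ℂ :=
  ∫ p : ℝ × ℝ, Complex.exp (Complex.I * ((p.1 * ξ + p.2 * lam : ℝ) : ℂ)) * f p

/-- The dyadic cutoffs `χ_j`: `χ_0 = χ₀` and `χ_j(z) = χ(2^{-j} z)` for `j ≥ 1`. -/
def chiJ (χ₀ χ : ℝ → ℝ) (j : ℕ) (z : ℝ) : ℝ :=
  if j = 0 then χ₀ z else χ ((2 : ℝ) ^ (-(j : ℝ)) * z)

/-- Hypotheses on the fixed dyadic cutoffs. -/
structure DyadicCutoffs (χ₀ χ : ℝ → ℝ) : Prop where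
  smooth0 : ContDiff ℝ (⊤ : ℕ∞) χ₀
  even0 : ∀ z, χ₀ (-z) = χ₀ z
  mem0 : ∀ z, χ₀ z ∈ Set.Icc (0 : ℝ) 1
  supp0 : ∀ z, 2 < |z| → χ₀ z = 0
  one0 : ∀ z, |z| ≤ 1 → χ₀ z = 1
  smooth1 : ContDiff ℝ (⊤ : ℕ∞) χ
  even1 : ∀ z, χ (-z) = χ z
  mem1 : ∀ z, χ z ∈ Set.Icc (0 : ℝ) 1
  supp1 : ∀ z, χ z ≠ 0 → 1 / 2 < |z| ∧ |z| < 2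
  partition : ∀ z, ∑' j : ℕ, chiJ χ₀ χ j z = 1

/-- A smooth time cutoff supported in `[-1,1]`. -/
structure TimeCutoff (ψ : ℝ → ℝ) : Prop where
  smooth : ContDiff ℝ (⊤ : ℕ∞) ψ
  supp : ∀ t, ψ t ≠ 0 → |t| ≤ 1

/-- The norm `‖f‖_{X^b_s}`. -/
def Xnorm (a : ℝ) (χ₀ χ : ℝ → ℝ) (b s : ℝ) (f : ℝ × ℝ → ℂ) : ℝ :=
  ∑' j : ℕ, (2 : ℝ) ^ ((j : ℝ) * b) *
    (∫ p : ℝ × ℝ, chiJ χ₀ χ j (p.2 - disp a p.1) * (1 + |p.1|) ^ (2 * s) *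
      ‖FT2 f p.1 p.2‖ ^ 2) ^ ((1 : ℝ) / 2)

/-- The norm `‖f‖_{Y^b_{s₀,s₁}} = ‖x·f‖_{X^b_{s₀}} + ‖t·f‖_{X^b_{s₁}}`. -/
def Ynorm (a : ℝ) (χ₀ χ : ℝ → ℝ) (b s₀ s₁ : ℝ) (f : ℝ × ℝ → ℂ) : ℝ :=
  Xnorm a χ₀ χ b s₀ (fun p => (p.1 : ℂ) * f p) +
    Xnorm a χ₀ χ b s₁ (fun p => (p.2 : ℂ) * f p)

/-- The norm `‖f‖_{Z^b_s} = ‖f‖_{X^b_s} + ‖f‖_{Y^b_{s-2s*,s}}`, where `s* = 1/2 + a/2`. -/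
def Znorm (a : ℝ) (χ₀ χ : ℝ → ℝ) (b s : ℝ) (f : ℝ × ℝ → ℂ) : ℝ :=
  Xnorm a χ₀ χ b s f + Ynorm a χ₀ χ b (s - 2 * (1 / 2 + a / 2)) s f

/-- The norm `‖f‖_{X̃^b_s}`. -/
def XtildeNorm (a b s : ℝ) (f : ℝ × ℝ → ℂ) : ℝ :=
  (∫ p : ℝ × ℝ, (1 + |p.2 - disp a p.1|) ^ (2 * b) * (1 + |p.1|) ^ (2 * s) *
    ‖FT2 f p.1 p.2‖ ^ 2) ^ ((1 : ℝ) / 2)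

/-- The Sobolev norm `‖g‖_{H^s} = (∫ (1+|ξ|)^{2s} |ĝ(ξ)|² dξ)^{1/2}`. -/
def Hnorm (s : ℝ) (g : ℝ → ℂ) : ℝ :=
  (∫ ξ : ℝ, (1 + |ξ|) ^ (2 * s) * ‖FT1 g ξ‖ ^ 2) ^ ((1 : ℝ) / 2)

/-- The weighted norm `‖g‖_{F^s} = ‖g‖_{H^s} + ‖x·g‖_{H^{s-2s*}}` (here `sstar = s*`). -/
def Fnorm (sstar s : ℝ) (g : ℝ → ℂ) : ℝ :=
  Hnorm s g + Hnorm (s - 2 * sstar) (fun x => (x : ℂ) * g x)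

/-- The `L^p` norm `(∫ ‖f‖^p)^{1/p}`. -/
def Lpnorm {α : Type*} [MeasureSpace α] {E : Type*} [NormedAddCommGroup E]
    (p : ℝ) (f : α → E) : ℝ :=
  (∫ x, ‖f x‖ ^ p) ^ (1 / p)

/-- The linear propagator `W(t)`, defined via Fourier inversion so that its Fourier
transform in `x` is `e^{itω(ξ)} û₀(ξ)`. -/
def Wgrp (a : ℝ) (u₀ : ℝ → ℂ) (t x : ℝ) : ℂ :=
  ((1 / (2 * Real.pi) : ℝ) : ℂ) *
    ∫ ξ : ℝ, Complex.exp (-(Complex.I * ((x * ξ : ℝ) : ℂ))) *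
      (Complex.exp (Complex.I * ((t * disp a ξ : ℝ) : ℂ)) * FT1 u₀ ξ)

/-- The Fourier multiplier `D^σ` with symbol `|ξ|^σ`, via Fourier inversion. -/
def Dop (σ : ℝ) (g : ℝ → ℂ) (x : ℝ) : ℂ :=
  ((1 / (2 * Real.pi) : ℝ) : ℂ) *
    ∫ ξ : ℝ, Complex.exp (-(Complex.I * ((x * ξ : ℝ) : ℂ))) *
      (((|ξ| ^ σ : ℝ) : ℂ) * FT1 g ξ)

open scoped ENNReal

/-! ### The dispersion relation and its resonance function -/

section Dispersion
variable {a : ℝ}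

lemma disp_neg (a x : ℝ) : disp a (-x) = -disp a x := by
  simp [disp]

lemma hasDerivAt_disp (ha : 0 < a) (x : ℝ) :
    HasDerivAt (disp a) ((2 + a) * |x| ^ (1 + a)) x := by
  have h := (hasDerivAt_id x).mul (hasDerivAt_abs_rpow x (p := 1 + a) (by linarith))
  refine h.congr_deriv ?_
  simp only [id]
  rcases eq_or_ne x 0 with rfl | hx
  · simp [Real.zero_rpow (by linarith : (1 + a) ≠ 0)]
  · have hsplit : |x| ^ (1 + a) = |x| ^ (1 + a - 2) * |x| ^ (2 : ℝ) := by
      rw [← Real.rpow_add (abs_pos.mpr hx)]; ring_nf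
    rw [hsplit, Real.rpow_two, sq_abs]; ring

lemma continuous_disp (ha : 0 < a) : Continuous (disp a) :=
  continuous_iff_continuousAt.mpr fun x => (hasDerivAt_disp ha x).continuousAt

lemma abs_disp_sub_disp_le (ha : 0 < a) {R x y : ℝ} (hx : |x| ≤ R) (hy : |y| ≤ R) :
    |disp a x - disp a y| ≤ (2 + a) * R ^ (1 + a) * |x - y| := by
  have hderiv : ∀ z ∈ Set.Icc (-R) R, ‖(2 + a) * |z| ^ (1 + a)‖ ≤ (2 + a) * R ^ (1 + a) := by
    intro z hz
    rw [Real.norm_of_nonneg (by positivity)]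
    have := abs_le.mpr hz
    gcongr
  simpa only [Real.norm_eq_abs] using
    (convex_Icc _ _).norm_image_sub_le_of_norm_hasDerivWithin_le
      (fun z _ => (hasDerivAt_disp ha z).hasDerivWithinAt) hderiv (abs_le.mp hy) (abs_le.mp hx)

lemma mul_sub_le_disp_sub_disp (ha : 0 < a) {r x y : ℝ} (hr : 0 ≤ r) (hy : r ≤ y) (hxy : y ≤ x) :
    r ^ (1 + a) * (x - y) ≤ disp a x - disp a y := by
  have hy0 : 0 ≤ y := hr.trans hy
  have hx0 : 0 ≤ x := hy0.trans hxy
  simp only [disp, abs_of_nonneg hy0, abs_of_nonneg hx0]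
  have hrx : r ^ (1 + a) ≤ x ^ (1 + a) := Real.rpow_le_rpow hr (hy.trans hxy) (by linarith)
  have hyx : y ^ (1 + a) ≤ x ^ (1 + a) := Real.rpow_le_rpow hy0 hxy (by linarith)
  nlinarith [mul_le_mul_of_nonneg_left hyx hy0, mul_le_mul_of_nonneg_right hrx (sub_nonneg.mpr hxy)]

lemma mul_abs_sub_le_abs_disp_sub_disp (ha : 0 < a) {r x y : ℝ} (hr : 0 ≤ r) (hx : r ≤ |x|)
    (hy : r ≤ |y|) (hxy : 0 ≤ x * y) :
    r ^ (1 + a) * |x - y| ≤ |disp a x - disp a y| := by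
  wlog hle : y ≤ x generalizing x y
  · simpa only [abs_sub_comm] using this hy hx (by linarith) (le_of_not_ge hle)
  rw [abs_of_nonneg (sub_nonneg.mpr hle)]
  refine le_trans ?_ (le_abs_self _)
  rcases mul_nonneg_iff.mp hxy with ⟨-, hy0⟩ | ⟨hx0, -⟩
  · exact mul_sub_le_disp_sub_disp ha hr (by rwa [abs_of_nonneg hy0] at hy) hle
  · have := mul_sub_le_disp_sub_disp ha hr (by rwa [abs_of_nonpos hx0] at hx) (neg_le_neg hle)
    simp only [disp_neg] at this
    linarith

lemma abs_le_max_one_of_abs_disp_le (ha : 0 < a) {x R : ℝ} (h : |disp a x| ≤ R) :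
    |x| ≤ max 1 R := by
  rcases le_or_gt |x| 1 with hx | hx
  · exact hx.trans (le_max_left _ _)
  · refine le_trans ?_ (h.trans (le_max_right _ _))
    rw [disp, abs_mul, abs_of_nonneg (by positivity : 0 ≤ |x| ^ (1 + a))]
    exact le_mul_of_one_le_right (abs_nonneg x) (Real.one_le_rpow hx.le (by linarith))

/-- The resonance function `ω(x + y) - ω(x) - ω(y)`: the amount by which the modulations
`λ - ω(ξ)` of two waves fail to add up to the modulation of their product. -/
def resonance (a x y : ℝ) : ℝ := disp a (x + y) - disp a x - disp a y

lemma resonance_neg_neg (a x y : ℝ) : resonance a (-x) (-y) = -resonance a x y := by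
  simp only [resonance, ← neg_add, disp_neg]; ring

lemma resonance_add_neg_right (a x y : ℝ) : resonance a (x + y) (-y) = -resonance a x y := by
  simp only [resonance, add_neg_cancel_right, disp_neg]; ring

lemma resonance_comm (a x y : ℝ) : resonance a x y = resonance a y x := by
  simp only [resonance, add_comm x y]; ring

lemma le_resonance_of_nonneg (ha : 0 < a) {x y : ℝ} (hx : 0 ≤ x) (hy : 0 ≤ y) :
    x * y ^ (1 + a) + y * x ^ (1 + a) ≤ resonance a x y := by
  simp only [resonance, disp, abs_of_nonneg hx, abs_of_nonneg hy, abs_of_nonneg (add_nonneg hx hy)]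
  have h := Real.add_rpow_le_rpow_add hx hy (p := 1 + a) (by linarith)
  nlinarith [mul_le_mul_of_nonneg_left h hx, mul_le_mul_of_nonneg_left h hy]

/-- Of three numbers with sum zero, the two smaller in absolute value have the same sign. -/
lemma abs_resonance_trichotomy (ha : 0 < a) (x y : ℝ) :
    (|x + y| = |x| + |y| ∧ |x| * |y| ^ (1 + a) + |y| * |x| ^ (1 + a) ≤ |resonance a x y|) ∨
    (|x| = |x + y| + |y| ∧
      |x + y| * |y| ^ (1 + a) + |y| * |x + y| ^ (1 + a) ≤ |resonance a x y|) ∨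
    (|y| = |x + y| + |x| ∧
      |x + y| * |x| ^ (1 + a) + |x| * |x + y| ^ (1 + a) ≤ |resonance a x y|) := by
  wlog hxy : 0 ≤ x + y generalizing x y
  · have := this (-x) (-y) (by linarith)
    rwa [resonance_neg_neg, ← neg_add, abs_neg, abs_neg, abs_neg, abs_neg] at this
  rcases le_total 0 x with hx | hx
  · rcases le_total 0 y with hy | hy
    · refine Or.inl ⟨?_, ?_⟩ <;> simp only [abs_of_nonneg hx, abs_of_nonneg hy, abs_of_nonneg hxy]
      exact (le_resonance_of_nonneg ha hx hy).trans (le_abs_self _)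
    · have := (le_resonance_of_nonneg ha hxy (neg_nonneg.mpr hy)).trans (le_abs_self _)
      rw [resonance_add_neg_right, abs_neg] at this
      refine Or.inr (Or.inl ⟨?_, ?_⟩) <;>
        simp only [abs_of_nonneg hx, abs_of_nonpos hy, abs_of_nonneg hxy]
      · ring
      · exact this
  · have hy : 0 ≤ y := by linarith
    have := (le_resonance_of_nonneg ha hxy (neg_nonneg.mpr hx)).trans (le_abs_self _)
    rw [add_comm x, resonance_add_neg_right, abs_neg, resonance_comm] at this
    refine Or.inr (Or.inr ⟨?_, ?_⟩) <;>
      simp only [abs_of_nonpos hx, abs_of_nonneg hy, abs_of_nonneg hxy]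
    · ring
    · rwa [add_comm x]

lemma rpow_one_add_div_sq_le (ha : a ≤ 1) {x c : ℝ} (hx : 0 ≤ x) (hc : 1 ≤ c) :
    x ^ (1 + a) / c ^ 2 ≤ (x / c) ^ (1 + a) := by
  rw [Real.div_rpow hx (by positivity)]
  gcongr
  rw [← Real.rpow_two]
  exact Real.rpow_le_rpow_of_exponent_le hc (by linarith)

lemma rpow_mul_abs_le_abs_resonance_of_high_low (ha : 0 < a) (ha1 : a ≤ 1) {x y : ℝ}
    (h : |y| ≤ |x| / 8) : |x| ^ (1 + a) * |y| ≤ 4 * |resonance a x y| := by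
  have hhalf : |x| ^ (1 + a) / 2 ^ 2 ≤ (|x| / 2) ^ (1 + a) :=
    rpow_one_add_div_sq_le ha1 (abs_nonneg x) one_le_two
  rcases abs_resonance_trichotomy ha x y with ⟨-, hres⟩ | ⟨hsum, hres⟩ | ⟨hsum, -⟩
  · nlinarith [show 0 ≤ |x| * |y| ^ (1 + a) by positivity,
      show 0 ≤ |y| * |x| ^ (1 + a) by positivity]
  · have hxy : (|x| / 2) ^ (1 + a) ≤ |x + y| ^ (1 + a) :=
      Real.rpow_le_rpow (by positivity) (by linarith [abs_nonneg y]) (by linarith)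
    nlinarith [show 0 ≤ |x + y| * |y| ^ (1 + a) by positivity,
      mul_le_mul_of_nonneg_left (hhalf.trans hxy) (abs_nonneg y)]
  · have hy : |y| = 0 := by linarith [abs_nonneg x, abs_nonneg y, abs_nonneg (x + y)]
    simp [hy]

lemma rpow_mul_abs_add_le_abs_resonance (ha : 0 < a) (ha1 : a ≤ 1) {x y : ℝ}
    (h : |x| ≤ 8 * |y|) : |x| ^ (1 + a) * |x + y| ≤ 64 * |resonance a x y| := by
  have hxy : |x| ^ (1 + a) / 8 ^ 2 ≤ |y| ^ (1 + a) :=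
    (rpow_one_add_div_sq_le ha1 (abs_nonneg x) (by norm_num)).trans
      (Real.rpow_le_rpow (by positivity) (by linarith) (by linarith))
  rcases abs_resonance_trichotomy ha x y with ⟨hsum, hres⟩ | ⟨-, hres⟩ | ⟨-, hres⟩
  · rw [hsum]
    nlinarith [mul_le_mul_of_nonneg_left hxy (abs_nonneg x),
      show 0 ≤ |y| * |x| ^ (1 + a) by positivity]
  · nlinarith [show 0 ≤ |y| * |x + y| ^ (1 + a) by positivity,
      mul_le_mul_of_nonneg_left hxy (abs_nonneg (x + y))]
  · nlinarith [show 0 ≤ |x| * |x + y| ^ (1 + a) by positivity,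
      show 0 ≤ |x + y| * |x| ^ (1 + a) by positivity]

lemma three_mul_rpow_add_le_rpow (ha : 0 ≤ a) (ha1 : a ≤ 1) {k : ℝ} (hk : 0 ≤ k) :
    3 * (k / 7) ^ (1 + a) + k ^ (1 + a) / 20 ≤ (6 / 7 * k) ^ (1 + a) := by
  have h7 : k ^ (1 + a) / 7 ^ 2 ≤ (k / 7) ^ (1 + a) :=
    rpow_one_add_div_sq_le ha1 hk (by norm_num)
  have h6 : (6 : ℝ) ≤ 6 ^ (1 + a) := Real.self_le_rpow_of_one_le (by norm_num) (by linarith)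
  calc 3 * (k / 7) ^ (1 + a) + k ^ (1 + a) / 20
      ≤ 6 * (k / 7) ^ (1 + a) := by linarith [Real.rpow_nonneg hk (1 + a)]
    _ ≤ 6 ^ (1 + a) * (k / 7) ^ (1 + a) := by gcongr
    _ = (6 / 7 * k) ^ (1 + a) := by
        rw [← Real.mul_rpow (by norm_num) (by positivity)]; ring_nf

/-- The high frequency `k - x` has group velocity at least twice that of the low frequency `x`. -/
lemma mul_abs_sub_le_of_fixed_sum (ha : 0 < a) (ha1 : a ≤ 1) {k x y : ℝ}
    (hx : |x| ≤ |k| / 7) (hy : |y| ≤ |k| / 7) :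
    |k| ^ (1 + a) / 20 * |x - y| ≤
      |(disp a x + disp a (k - x)) - (disp a y + disp a (k - y))| := by
  have hlow : |disp a x - disp a y| ≤ 3 * (|k| / 7) ^ (1 + a) * |x - y| := by
    refine (abs_disp_sub_disp_le ha hx hy).trans ?_
    gcongr; linarith
  have hfar : ∀ x : ℝ, |x| ≤ |k| / 7 → 6 / 7 * |k| ≤ |k - x| := fun x hx => by
    linarith [abs_sub_abs_le_abs_sub k x]
  have hsign : 0 ≤ (k - x) * (k - y) := by
    have hx' := abs_le.mp hx
    have hy' := abs_le.mp hy
    rcases le_total 0 k with h | h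
    · rw [abs_of_nonneg h] at hx' hy'
      exact mul_nonneg (by linarith) (by linarith)
    · rw [abs_of_nonpos h] at hx' hy'
      exact mul_nonneg_of_nonpos_of_nonpos (by linarith) (by linarith)
  have hhigh := mul_abs_sub_le_abs_disp_sub_disp ha (by positivity) (hfar x hx) (hfar y hy) hsign
  rw [sub_sub_sub_cancel_left, abs_sub_comm] at hhigh
  have hconst := mul_le_mul_of_nonneg_right
    (three_mul_rpow_add_le_rpow ha.le ha1 (abs_nonneg k)) (abs_nonneg (x - y))
  have htriangle := abs_sub_abs_le_abs_sub (disp a (k - x) - disp a (k - y))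
    (-(disp a x - disp a y))
  rw [abs_neg, sub_neg_eq_add, sub_add_sub_comm, add_comm (disp a (k - x)),
    add_comm (disp a (k - y))] at htriangle
  linarith

lemma mul_abs_sub_le_of_fixed_diff (ha : 0 < a) (ha1 : a ≤ 1) {k x y : ℝ}
    (hx : |x| ≤ |k| / 7) (hy : |y| ≤ |k| / 7) :
    |k| ^ (1 + a) / 20 * |x - y| ≤
      |(disp a (k + x) - disp a x) - (disp a (k + y) - disp a y)| := by
  have := mul_abs_sub_le_of_fixed_sum ha ha1 (k := k) (x := -x) (y := -y) (by rwa [abs_neg])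
    (by rwa [abs_neg])
  simpa only [disp_neg, sub_neg_eq_add, neg_add_eq_sub, neg_sub_neg, abs_sub_comm y x] using this

end Dispersion

/-! ### Quadratic estimates in `[0, ∞]` -/

section Quadratic
variable {α : Type*} [MeasurableSpace α] {μ : Measure α}

lemma sq_rpow_half (x : ℝ≥0∞) : (x ^ 2) ^ (1 / 2 : ℝ) = x := by
  rw [← ENNReal.rpow_natCast, ← ENNReal.rpow_mul]; simp

lemma rpow_half_sq (x : ℝ≥0∞) : (x ^ (1 / 2 : ℝ)) ^ 2 = x := by
  rw [← ENNReal.rpow_natCast, ← ENNReal.rpow_mul]; simp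

lemma le_rpow_half_of_sq_le {x y : ℝ≥0∞} (h : x ^ 2 ≤ y) : x ≤ y ^ (1 / 2 : ℝ) := by
  rw [← sq_rpow_half x]
  gcongr

lemma eLpNorm_two_eq_lintegral (f : α → ℝ≥0∞) :
    eLpNorm f 2 μ = (∫⁻ x, f x ^ 2 ∂μ) ^ (1 / 2 : ℝ) := by
  simp [eLpNorm_eq_lintegral_rpow_enorm_toReal]

lemma eLpNorm_two_sq (f : α → ℝ≥0∞) : eLpNorm f 2 μ ^ 2 = ∫⁻ x, f x ^ 2 ∂μ := by
  rw [eLpNorm_two_eq_lintegral, rpow_half_sq]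

lemma eLpNorm_const_mul_ennreal {p : ℝ≥0∞} (hp : p ≠ ∞) (c : ℝ≥0∞) {f : α → ℝ≥0∞}
    (hf : Measurable f) : eLpNorm (fun x => c * f x) p μ = c * eLpNorm f p μ := by
  rcases eq_or_ne p 0 with rfl | hp0
  · simp
  have hpos : 0 < p.toReal := ENNReal.toReal_pos hp0 hp
  simp only [eLpNorm_eq_lintegral_rpow_enorm_toReal hp0 hp, enorm_eq_self,
    ENNReal.mul_rpow_of_nonneg _ _ hpos.le]
  rw [lintegral_const_mul _ (hf.pow_const _), ENNReal.mul_rpow_of_nonneg _ _ (by positivity),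
    ← ENNReal.rpow_mul, mul_one_div_cancel hpos.ne', ENNReal.rpow_one]

lemma eLpNorm_tsum_le {p : ℝ≥0∞} (hp : 1 ≤ p) (hp' : p ≠ ∞) {f : ℕ → α → ℝ≥0∞}
    (hf : ∀ i, Measurable (f i)) :
    eLpNorm (fun x => ∑' i, f i x) p μ ≤ ∑' i, eLpNorm (f i) p μ := by
  have hp0 : p ≠ 0 := (zero_lt_one.trans_le hp).ne'
  have hpos : 0 < p.toReal := ENNReal.toReal_pos hp0 hp'
  have hpartial : ∀ n : ℕ, ∫⁻ x, (∑ i ∈ Finset.range n, f i x) ^ p.toReal ∂μ ≤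
      (∑' i, eLpNorm (f i) p μ) ^ p.toReal := fun n => by
    rw [← ENNReal.rpow_inv_le_iff hpos, ← one_div]
    have := (eLpNorm_sum_le (s := Finset.range n) (p := p) (μ := μ)
      (fun i _ => (hf i).aestronglyMeasurable) hp).trans (ENNReal.sum_le_tsum _)
    simpa only [eLpNorm_eq_lintegral_rpow_enorm_toReal hp0 hp', enorm_eq_self,
      Finset.sum_apply] using this
  have hlimit : ∫⁻ x, (∑' i, f i x) ^ p.toReal ∂μ =
      ⨆ n : ℕ, ∫⁻ x, (∑ i ∈ Finset.range n, f i x) ^ p.toReal ∂μ := by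
    rw [← lintegral_iSup]
    · congr 1 with x
      rw [ENNReal.tsum_eq_iSup_nat]
      exact (ENNReal.orderIsoRpow _ hpos).map_iSup _
    · exact fun n => (Finset.measurable_fun_sum _ fun i _ => hf i).pow_const _
    · intro m n hmn x
      dsimp only
      gcongr
  rw [eLpNorm_eq_lintegral_rpow_enorm_toReal hp0 hp', one_div, ENNReal.rpow_inv_le_iff hpos]
  simpa only [enorm_eq_self, hlimit] using iSup_le hpartial

lemma lintegral_mul_sq_le {f g : α → ℝ≥0∞} (hf : AEMeasurable f μ) (hg : AEMeasurable g μ) :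
    (∫⁻ x, f x * g x ∂μ) ^ 2 ≤ (∫⁻ x, f x ^ 2 ∂μ) * ∫⁻ x, g x ^ 2 ∂μ := by
  have h := pow_le_pow_left'
    (ENNReal.lintegral_mul_le_Lp_mul_Lq μ Real.HolderConjugate.two_two hf hg) 2
  simpa only [Pi.mul_apply, ENNReal.rpow_ofNat, mul_pow, rpow_half_sq] using h

lemma lintegral_sq_le_of_sq_le_mul {k f g : α → ℝ≥0∞} (hf : AEMeasurable f μ)
    (hg : AEMeasurable g μ) (h : ∀ x, k x ^ 2 ≤ f x * g x) :
    (∫⁻ x, k x ∂μ) ^ 2 ≤ (∫⁻ x, f x ∂μ) * ∫⁻ x, g x ∂μ := by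
  have hmean : ∫⁻ x, k x ∂μ ≤ ∫⁻ x, f x ^ (1 / 2 : ℝ) * g x ^ (1 / 2 : ℝ) ∂μ := by
    refine lintegral_mono fun x => ?_
    rw [← ENNReal.mul_rpow_of_nonneg _ _ (by norm_num)]
    exact le_rpow_half_of_sq_le (h x)
  refine (pow_le_pow_left' hmean 2).trans ?_
  simpa only [rpow_half_sq] using lintegral_mul_sq_le (hf.pow_const (1 / 2 : ℝ))
    (hg.pow_const (1 / 2 : ℝ))

lemma tsum_sqrt_mul_sqrt_le {ι : Type*} [Countable ι] (f g : ι → ℝ≥0∞) :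
    ∑' i, f i ^ (1 / 2 : ℝ) * g i ^ (1 / 2 : ℝ) ≤
      (∑' i, f i) ^ (1 / 2 : ℝ) * (∑' i, g i) ^ (1 / 2 : ℝ) := by
  let _ : MeasurableSpace ι := ⊤
  have h := lintegral_sq_le_of_sq_le_mul (μ := Measure.count) (f := f) (g := g)
    (k := fun i => f i ^ (1 / 2 : ℝ) * g i ^ (1 / 2 : ℝ)) measurable_from_top.aemeasurable
    measurable_from_top.aemeasurable (fun i => by rw [mul_pow, rpow_half_sq, rpow_half_sq])
  simp only [lintegral_count] at h
  rw [← ENNReal.mul_rpow_of_nonneg _ _ (by norm_num)]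
  exact le_rpow_half_of_sq_le h

end Quadratic

lemma lintegral_sq_convolution_le_of_schur {G : Type*} [AddGroup G] [MeasurableSpace G]
    [MeasurableAdd₂ G] [MeasurableSub₂ G] {μ : Measure G} [SFinite μ] [μ.IsAddRightInvariant]
    {k k₁ k₂ : G → G → ℝ≥0∞}
    (hk₁ : Measurable (Function.uncurry k₁)) (hk₂ : Measurable (Function.uncurry k₂))
    (hk : ∀ p q, k p q ^ 2 ≤ k₁ p q * k₂ p q) {A₁ A₂ : ℝ≥0∞}
    (h₁ : ∀ z, ∫⁻ p, k₁ p (z - p) ∂μ ≤ A₁) (h₂ : ∀ p, ∫⁻ q, k₂ p q ∂μ ≤ A₂)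
    {f : G → ℝ≥0∞} (hf : Measurable f) :
    ∫⁻ z, (∫⁻ p, k p (z - p) * f p ∂μ) ^ 2 ∂μ ≤ A₁ * A₂ * ∫⁻ p, f p ^ 2 ∂μ := by
  have hk₁' : Measurable fun x : G × G => k₁ x.2 (x.1 - x.2) :=
    hk₁.comp (measurable_snd.prodMk (measurable_fst.sub measurable_snd))
  have hk₂' : Measurable fun x : G × G => k₂ x.2 (x.1 - x.2) :=
    hk₂.comp (measurable_snd.prodMk (measurable_fst.sub measurable_snd))
  have hk₂f : Measurable fun x : G × G => k₂ x.2 (x.1 - x.2) * f x.2 ^ 2 :=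
    hk₂'.mul ((hf.comp measurable_snd).pow_const 2)
  calc ∫⁻ z, (∫⁻ p, k p (z - p) * f p ∂μ) ^ 2 ∂μ
      ≤ ∫⁻ z, A₁ * ∫⁻ p, k₂ p (z - p) * f p ^ 2 ∂μ ∂μ := by
        refine lintegral_mono fun z => ?_
        refine (lintegral_sq_le_of_sq_le_mul (f := fun p => k₁ p (z - p))
          (g := fun p => k₂ p (z - p) * f p ^ 2) (hk₁'.comp measurable_prodMk_left).aemeasurable
          (hk₂f.comp measurable_prodMk_left).aemeasurable fun p => ?_).trans ?_
        · rw [mul_pow, ← mul_assoc]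
          gcongr
          exact hk _ _
        · gcongr
          exact h₁ z
    _ = A₁ * ∫⁻ z, ∫⁻ p, k₂ p (z - p) * f p ^ 2 ∂μ ∂μ := by
        rw [lintegral_const_mul _ hk₂f.lintegral_prod_right']
    _ = A₁ * ∫⁻ p, (∫⁻ z, k₂ p (z - p) ∂μ) * f p ^ 2 ∂μ := by
        rw [lintegral_lintegral_swap hk₂f.aemeasurable]
        congr 2 with p
        exact lintegral_mul_const _ (hk₂'.comp measurable_prodMk_right)
    _ ≤ A₁ * ∫⁻ p, A₂ * f p ^ 2 ∂μ := by
        gcongr with p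
        rw [lintegral_sub_right_eq_self (fun q => k₂ p q) p]
        exact h₂ p
    _ = A₁ * A₂ * ∫⁻ p, f p ^ 2 ∂μ := by rw [lintegral_const_mul _ (hf.pow_const 2), mul_assoc]

/-! ### Volumes of modulation sets -/

section Volume

lemma volume_le_of_expanding {s : Set ℝ} {φ : ℝ → ℝ} {c J m : ℝ} (hm : 0 < m)
    (hφ : ∀ x ∈ s, ∀ y ∈ s, m * |x - y| ≤ |φ x - φ y|) (hs : ∀ x ∈ s, |φ x - c| ≤ J) :
    volume s ≤ ENNReal.ofReal (2 * J / m) := by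
  refine (Real.volume_le_diam s).trans (Metric.ediam_le fun x hx y hy => ?_)
  rw [edist_dist, Real.dist_eq]
  refine ENNReal.ofReal_le_ofReal ((le_div_iff₀ hm).mpr ?_)
  calc |x - y| * m ≤ |φ x - φ y| := by rw [mul_comm]; exact hφ x hx y hy
    _ ≤ |φ x - c| + |φ y - c| := by rw [abs_sub_comm (φ y)]; exact abs_sub_le _ _ _
    _ ≤ 2 * J := by linarith [hs x hx, hs y hy]

lemma volume_abs_sub_le_eq (c J : ℝ) : volume {y : ℝ | |y - c| ≤ J} = ENNReal.ofReal (2 * J) := by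
  have : {y : ℝ | |y - c| ≤ J} = Metric.closedBall c J := by
    ext y; simp [Real.dist_eq]
  rw [this, Real.volume_closedBall]

lemma prod_le_of_vertical_sections {α β : Type*} [MeasurableSpace α] [MeasurableSpace β]
    {μ : Measure α} {ν : Measure β} [SFinite ν] {S : Set (α × β)} (hS : MeasurableSet S)
    {T : Set α} {m M : ℝ≥0∞} (hm : ∀ x, ν {y | (x, y) ∈ S} ≤ m) (hST : ∀ z ∈ S, z.1 ∈ T)
    (hT : μ T ≤ M) : μ.prod ν S ≤ m * M := by
  rw [Measure.prod_apply hS]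
  calc ∫⁻ x, ν (Prod.mk x ⁻¹' S) ∂μ
      ≤ ∫⁻ x, (toMeasurable μ T).indicator (fun _ => m) x ∂μ := by
        refine lintegral_mono fun x => ?_
        by_cases hx : x ∈ toMeasurable μ T
        · rw [Set.indicator_of_mem hx]
          exact hm x
        · have hempty : Prod.mk x ⁻¹' S = ∅ :=
            Set.eq_empty_of_forall_notMem fun y hy => hx (subset_toMeasurable _ _ (hST _ hy))
          simp [hempty]
    _ = m * μ T := by
        rw [lintegral_indicator_const (measurableSet_toMeasurable _ _), measure_toMeasurable]
    _ ≤ m * M := by gcongr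

lemma lintegral_indicator_snd_le {α β : Type*} [MeasurableSpace α] [MeasurableSpace β]
    {μ : Measure α} {ν : Measure β} [SFinite μ] [SFinite ν] {S : Set (α × β)}
    (hS : MeasurableSet S) {m : ℝ≥0∞} (hm : ∀ y, μ {x | (x, y) ∈ S} ≤ m) {g : β → ℝ≥0∞}
    (hg : Measurable g) :
    ∫⁻ z, S.indicator (fun z => g z.2) z ∂μ.prod ν ≤ m * ∫⁻ y, g y ∂ν := by
  have hSg : Measurable (S.indicator fun z : α × β => g z.2) :=
    (hg.comp measurable_snd).indicator hS
  rw [lintegral_prod_symm' _ hSg, ← lintegral_const_mul _ hg]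
  refine lintegral_mono fun y => ?_
  have hsection : ∀ x, S.indicator (fun z : α × β => g z.2) (x, y) =
      {x | (x, y) ∈ S}.indicator (fun _ => g y) x := fun x => by
    simp [Set.indicator]
  simp_rw [hsection]
  have hSy : MeasurableSet {x | (x, y) ∈ S} := measurable_prodMk_right hS
  rw [lintegral_indicator_const hSy, mul_comm]
  gcongr
  exact hm y

lemma volume_le_of_transversal {S : Set (ℝ × ℝ)} (hS : MeasurableSet S) {φ₁ φ₂ : ℝ → ℝ}
    {m J₁ J₂ : ℝ} (hm : 0 < m) (hJ₁ : 0 ≤ J₁) (hJ₂ : 0 ≤ J₂)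
    (h₁ : ∀ z ∈ S, |z.2 - φ₁ z.1| ≤ J₁) (h₂ : ∀ z ∈ S, |z.2 - φ₂ z.1| ≤ J₂)
    (hexp : ∀ z ∈ S, ∀ w ∈ S, m * |z.1 - w.1| ≤ |(φ₁ z.1 - φ₂ z.1) - (φ₁ w.1 - φ₂ w.1)|) :
    volume S ≤ ENNReal.ofReal (8 * J₁ * J₂ / m) := by
  have hprojection : volume (Prod.fst '' S) ≤ ENNReal.ofReal (2 * (J₁ + J₂) / m) := by
    refine volume_le_of_expanding (φ := fun x => φ₁ x - φ₂ x) (c := 0) hm ?_ ?_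
    · rintro _ ⟨z, hz, rfl⟩ _ ⟨w, hw, rfl⟩
      exact hexp z hz w hw
    · rintro _ ⟨z, hz, rfl⟩
      have e₁ := abs_le.mp (h₁ z hz)
      have e₂ := abs_le.mp (h₂ z hz)
      exact abs_le.mpr ⟨by linarith, by linarith⟩
  have hsection : ∀ x, volume {y | (x, y) ∈ S} ≤ ENNReal.ofReal (2 * min J₁ J₂) := fun x => by
    rw [mul_min_of_nonneg _ _ zero_le_two, ENNReal.ofReal_min, ← volume_abs_sub_le_eq (φ₁ x),
      ← volume_abs_sub_le_eq (φ₂ x)]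
    exact le_min (measure_mono fun y hy => h₁ _ hy) (measure_mono fun y hy => h₂ _ hy)
  refine (prod_le_of_vertical_sections hS hsection (fun z hz => Set.mem_image_of_mem _ hz)
    hprojection).trans ?_
  rw [← ENNReal.ofReal_mul (by positivity)]
  refine ENNReal.ofReal_le_ofReal ?_
  rw [← mul_div_assoc]
  refine (div_le_div_iff_of_pos_right hm).mpr ?_
  rcases le_total J₁ J₂ with h | h
  · rw [min_eq_left h]; nlinarith
  · rw [min_eq_right h]; nlinarith

lemma lintegral_indicator_ofReal_le {α : Type*} [MeasurableSpace α] {μ : Measure α} {T : Set α}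
    (hT : MeasurableSet T) {w : α → ℝ} {W m B : ℝ} (hW : 0 ≤ W) (hw : ∀ p ∈ T, w p ≤ W)
    (hv : μ T ≤ ENNReal.ofReal m) (hB : W * m ≤ B) :
    ∫⁻ p, T.indicator (fun p => ENNReal.ofReal (w p)) p ∂μ ≤ ENNReal.ofReal B := by
  calc ∫⁻ p, T.indicator (fun p => ENNReal.ofReal (w p)) p ∂μ
      ≤ ∫⁻ p, T.indicator (fun _ => ENNReal.ofReal W) p ∂μ := by
        refine lintegral_mono fun p => ?_
        exact Set.indicator_le_indicator' fun hp => ENNReal.ofReal_le_ofReal (hw p hp)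
    _ = ENNReal.ofReal W * μ T := lintegral_indicator_const hT _
    _ ≤ ENNReal.ofReal W * ENNReal.ofReal m := by gcongr
    _ = ENNReal.ofReal (W * m) := (ENNReal.ofReal_mul hW).symm
    _ ≤ ENNReal.ofReal B := ENNReal.ofReal_le_ofReal hB

lemma lintegral_indicator_ofReal_mul_snd_le {T : Set (ℝ × ℝ)} (hT : MeasurableSet T)
    {w : ℝ × ℝ → ℝ} {W m B : ℝ} (hW : 0 ≤ W) (hw : ∀ p ∈ T, w p ≤ W)
    (hv : ∀ y, volume {x | (x, y) ∈ T} ≤ ENNReal.ofReal m)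
    (hB : W * m ≤ B) {g : ℝ → ℝ≥0∞} (hg : Measurable g) :
    ∫⁻ p, T.indicator (fun p => ENNReal.ofReal (w p) * g p.2) p ≤
      ENNReal.ofReal B * ∫⁻ y, g y := by
  calc ∫⁻ p, T.indicator (fun p => ENNReal.ofReal (w p) * g p.2) p
      ≤ ∫⁻ p, ENNReal.ofReal W * T.indicator (fun p => g p.2) p := by
        refine lintegral_mono fun p => ?_
        by_cases hp : p ∈ T
        · simp only [Set.indicator_of_mem hp]
          gcongr
          exact hw p hp
        · simp [Set.indicator_of_notMem hp]
    _ = ENNReal.ofReal W * ∫⁻ p, T.indicator (fun p => g p.2) p :=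
        lintegral_const_mul _ ((hg.comp measurable_snd).indicator hT)
    _ ≤ ENNReal.ofReal W * (ENNReal.ofReal m * ∫⁻ y, g y) := by
        gcongr
        exact lintegral_indicator_snd_le hT hv hg
    _ = ENNReal.ofReal (W * m) * ∫⁻ y, g y := by rw [← mul_assoc, ENNReal.ofReal_mul hW]
    _ ≤ ENNReal.ofReal B * ∫⁻ y, g y := by gcongr

end Volume

/-- The modulation `λ - ω(ξ)` of a space-time frequency `(ξ, λ)`. -/
def modulation (a : ℝ) (z : ℝ × ℝ) : ℝ := z.2 - disp a z.1

@[fun_prop]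
lemma measurable_modulation {a : ℝ} (ha : 0 < a) : Measurable (modulation a) :=
  (continuous_snd.sub ((continuous_disp ha).comp continuous_fst)).measurable

lemma resonance_eq_modulation (a : ℝ) (p q : ℝ × ℝ) :
    resonance a p.1 q.1 = modulation a p + modulation a q - modulation a (p + q) := by
  simp only [resonance, modulation, Prod.fst_add, Prod.snd_add]
  ring

lemma abs_resonance_le_max_modulation {a J₁ J₂ J₃ : ℝ} {p q : ℝ × ℝ}
    (h₁ : |modulation a p| ≤ J₁) (h₂ : |modulation a q| ≤ J₂) (h₃ : |modulation a (p + q)| ≤ J₃) :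
    |resonance a p.1 q.1| ≤ 3 * max J₁ (max J₂ J₃) := by
  rw [resonance_eq_modulation]
  have l₁ := abs_le.mp (h₁.trans (le_max_left J₁ (max J₂ J₃)))
  have l₂ := abs_le.mp (h₂.trans ((le_max_left J₂ J₃).trans (le_max_right J₁ _)))
  have l₃ := abs_le.mp (h₃.trans ((le_max_right J₂ J₃).trans (le_max_right J₁ _)))
  exact abs_le.mpr ⟨by linarith, by linarith⟩

lemma volume_le_of_disp_strip {A : Set ℝ} {a r c J k t : ℝ} (ha : 0 < a) (hr : 0 < r)
    (hsize : ∀ x ∈ A, r ≤ |x + t|) (hsign : ∀ x ∈ A, 0 ≤ k * (x + t)) (hk : k ≠ 0)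
    (hstrip : ∀ x ∈ A, |c - disp a (x + t)| ≤ J) :
    volume A ≤ ENNReal.ofReal (2 * J / r ^ (1 + a)) := by
  refine volume_le_of_expanding (φ := fun x => disp a (x + t)) (c := c)
    (Real.rpow_pos_of_pos hr _) (fun x hx y hy => ?_) fun x hx => ?_
  · have hsame : 0 ≤ (x + t) * (y + t) := by
      refine nonneg_of_mul_nonneg_right (?_ : 0 ≤ k ^ 2 * _) (by positivity)
      nlinarith [mul_nonneg (hsign x hx) (hsign y hy)]
    simpa using mul_abs_sub_le_abs_disp_sub_disp ha hr.le (hsize x hx) (hsize y hy) hsame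
  · rw [abs_sub_comm]
    exact hstrip x hx

/-! ### The high-low interaction -/

section HighLow
variable {a J₁ J₂ J₃ E : ℝ}

/-- The pairs `(p, q)` of space-time frequencies in high-low interaction: `q` has much lower
frequency than `p`, the frequency of `p` is away from zero, and `p`, `q`, `p + q` have modulations
at most `J₁`, `J₂`, `J₃`. -/
def highLowSet (a J₁ J₂ J₃ : ℝ) : Set ((ℝ × ℝ) × (ℝ × ℝ)) :=
  {w | |w.2.1| ≤ |w.1.1| / 8 ∧ 1 ≤ |w.1.1| ∧ |modulation a w.1| ≤ J₁ ∧ |modulation a w.2| ≤ J₂ ∧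
    |modulation a (w.1 + w.2)| ≤ J₃}

/-- The high inputs of the high-low interactions with output `z`. -/
def highLowOutputSlice (a J₁ J₂ J₃ : ℝ) (z : ℝ × ℝ) : Set (ℝ × ℝ) :=
  {p | (p, z - p) ∈ highLowSet a J₁ J₂ J₃}

/-- The low inputs of the high-low interactions with high input `p`. -/
def highLowInputSlice (a J₁ J₂ J₃ : ℝ) (p : ℝ × ℝ) : Set (ℝ × ℝ) :=
  {q | (p, q) ∈ highLowSet a J₁ J₂ J₃}

/-- The kernel `|ξ₁| ^ e * G λ₂` on high-low interactions. Here `G` stands for a majorant of the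
low-frequency factor which is uniform in the frequency variable. -/
def highLowKernel (a J₁ J₂ J₃ e : ℝ) (G : ℝ → ℝ≥0∞) (p q : ℝ × ℝ) : ℝ≥0∞ :=
  (highLowSet a J₁ J₂ J₃).indicator (fun w => ENNReal.ofReal (|w.1.1| ^ e) * G w.2.2) (p, q)

lemma highLowKernel_output_eq (e : ℝ) (G : ℝ → ℝ≥0∞) (z p : ℝ × ℝ) :
    highLowKernel a J₁ J₂ J₃ e G p (z - p) = (highLowOutputSlice a J₁ J₂ J₃ z).indicator
      (fun p => ENNReal.ofReal (|p.1| ^ e) * G (z.2 - p.2)) p := rfl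

lemma highLowKernel_input_eq (e : ℝ) (G : ℝ → ℝ≥0∞) (p q : ℝ × ℝ) :
    highLowKernel a J₁ J₂ J₃ e G p q = (highLowInputSlice a J₁ J₂ J₃ p).indicator
      (fun q => ENNReal.ofReal (|p.1| ^ e) * G q.2) q := rfl

lemma measurableSet_highLowSet (ha : 0 < a) : MeasurableSet (highLowSet a J₁ J₂ J₃) := by
  have := measurable_modulation ha
  have hlow : Measurable fun w : (ℝ × ℝ) × (ℝ × ℝ) => |w.2.1| := by fun_prop
  have hhigh : Measurable fun w : (ℝ × ℝ) × (ℝ × ℝ) => |w.1.1| := by fun_prop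
  have hmod₁ : Measurable fun w : (ℝ × ℝ) × (ℝ × ℝ) => |modulation a w.1| := by fun_prop
  have hmod₂ : Measurable fun w : (ℝ × ℝ) × (ℝ × ℝ) => |modulation a w.2| := by fun_prop
  have hmod₃ : Measurable fun w : (ℝ × ℝ) × (ℝ × ℝ) => |modulation a (w.1 + w.2)| := by fun_prop
  exact (measurableSet_le hlow (hhigh.div_const 8)).inter <|
    (measurableSet_le measurable_const hhigh).inter <|
    (measurableSet_le hmod₁ measurable_const).inter <|
    (measurableSet_le hmod₂ measurable_const).inter (measurableSet_le hmod₃ measurable_const)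

lemma measurableSet_highLowOutputSlice (ha : 0 < a) (z : ℝ × ℝ) :
    MeasurableSet (highLowOutputSlice a J₁ J₂ J₃ z) :=
  (measurable_id.prodMk (measurable_const.sub measurable_id)) (measurableSet_highLowSet ha)

lemma measurableSet_highLowInputSlice (ha : 0 < a) (p : ℝ × ℝ) :
    MeasurableSet (highLowInputSlice a J₁ J₂ J₃ p) :=
  measurable_prodMk_left (measurableSet_highLowSet ha)

lemma measurable_highLowKernel (ha : 0 < a) (e : ℝ) {G : ℝ → ℝ≥0∞} (hG : Measurable G) :
    Measurable (Function.uncurry (highLowKernel a J₁ J₂ J₃ e G)) := by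
  have hweight : Measurable fun w : (ℝ × ℝ) × (ℝ × ℝ) =>
      ENNReal.ofReal (|w.1.1| ^ e) * G w.2.2 := by fun_prop
  exact hweight.indicator (measurableSet_highLowSet ha)

lemma highLowKernel_one_sq (a J₁ J₂ J₃ : ℝ) {e₁ e₂ : ℝ} (he : e₁ + e₂ = 2) (G : ℝ → ℝ≥0∞)
    (p q : ℝ × ℝ) : highLowKernel a J₁ J₂ J₃ 1 G p q ^ 2 =
      highLowKernel a J₁ J₂ J₃ e₁ 1 p q * highLowKernel a J₁ J₂ J₃ e₂ (fun y => G y ^ 2) p q := by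
  by_cases hw : (p, q) ∈ highLowSet a J₁ J₂ J₃
  · have hp : 0 < |p.1| := zero_lt_one.trans_le hw.2.1
    simp only [highLowKernel, Set.indicator_of_mem hw, Pi.one_apply, mul_one, mul_pow,
      Real.rpow_one]
    rw [← mul_assoc, ← ENNReal.ofReal_mul (by positivity), ← Real.rpow_add hp, he,
      ← ENNReal.ofReal_pow hp.le, Real.rpow_two]
  · simp [highLowKernel, Set.indicator_of_notMem hw]

lemma rpow_le_two_mul_rpow {x y e : ℝ} (hy : 0 ≤ y) (h : y ≤ 8 / 7 * x) (he : 0 ≤ e)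
    (he2 : e ≤ 2) : y ^ e ≤ 2 * x ^ e := by
  have hx : 0 ≤ x := by linarith
  calc y ^ e ≤ (8 / 7 * x) ^ e := Real.rpow_le_rpow hy h he
    _ = (8 / 7 : ℝ) ^ e * x ^ e := Real.mul_rpow (by norm_num) hx
    _ ≤ (8 / 7 : ℝ) ^ (2 : ℝ) * x ^ e := by
        gcongr
        norm_num
    _ ≤ 2 * x ^ e := by
        gcongr
        norm_num

lemma highLow_frequency_bounds {w : (ℝ × ℝ) × (ℝ × ℝ)} (hw : w ∈ highLowSet a J₁ J₂ J₃) :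
    |w.1.1| ≤ 8 / 7 * |w.1.1 + w.2.1| ∧ |w.1.1 + w.2.1| ≤ 8 / 7 * |w.1.1| ∧
      |w.2.1| ≤ |w.1.1 + w.2.1| / 7 ∧ 0 < |w.1.1 + w.2.1| ∧ 0 ≤ w.1.1 * (w.1.1 + w.2.1) := by
  obtain ⟨hlow, hhigh, -⟩ := hw
  generalize w.1.1 = x at *
  generalize w.2.1 = y at *
  have hinput : |x| ≤ |x + y| + |y| := by
    have := abs_sub (x + y) y
    simpa using this
  have houtput := abs_add_le x y
  refine ⟨by linarith, by linarith, by linarith, by linarith, ?_⟩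
  have hcross : |x * y| ≤ x * x := by
    rw [abs_mul, ← abs_mul_abs_self x]
    nlinarith [abs_nonneg x]
  have := neg_abs_le (x * y)
  nlinarith

lemma lintegral_highLowKernel_output_le_of_transversal (ha : 0 < a) (ha1 : a ≤ 1) (hJ₁ : 0 ≤ J₁)
    (hJ₂ : 0 ≤ J₂) (z : ℝ × ℝ) :
    ∫⁻ p, highLowKernel a J₁ J₂ J₃ (1 + a) 1 p (z - p) ≤
      ENNReal.ofReal (1000 * (J₁ * J₂)) := by
  simp only [highLowKernel_output_eq, Pi.one_apply, mul_one]
  rcases (highLowOutputSlice a J₁ J₂ J₃ z).eq_empty_or_nonempty with h | ⟨p₀, hp₀⟩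
  · simp [h]
  have hk : 0 < |z.1| := by simpa using (highLow_frequency_bounds hp₀).2.2.2.1
  have : 0 < |z.1| ^ (1 + a) := Real.rpow_pos_of_pos hk _
  refine lintegral_indicator_ofReal_le (measurableSet_highLowOutputSlice ha z)
      (W := 2 * |z.1| ^ (1 + a))
    (m := 8 * J₁ * J₂ / (|z.1| ^ (1 + a) / 20)) (by positivity) ?_ ?_ ?_
  · intro p hp
    refine rpow_le_two_mul_rpow (abs_nonneg _) ?_ (by linarith) (by linarith)
    simpa using (highLow_frequency_bounds hp).1
  · refine volume_le_of_transversal (measurableSet_highLowOutputSlice ha z) (φ₁ := disp a)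
      (φ₂ := fun x => z.2 - disp a (z.1 - x)) (by positivity) hJ₁ hJ₂
      (fun p hp => hp.2.2.1) (fun p hp => ?_) (fun p hp p' hp' => ?_)
    · have := hp.2.2.2.1
      rw [← abs_neg] at this
      simp only [modulation, Prod.fst_sub, Prod.snd_sub] at this
      convert this using 2; ring
    · have hlow : |z.1 - p.1| ≤ |z.1| / 7 := by simpa using (highLow_frequency_bounds hp).2.2.1
      have hlow' : |z.1 - p'.1| ≤ |z.1| / 7 := by simpa using (highLow_frequency_bounds hp').2.2.1
      have htransversal := mul_abs_sub_le_of_fixed_sum ha ha1 hlow hlow'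
      rw [sub_sub_sub_cancel_left, abs_sub_comm p'.1] at htransversal
      refine htransversal.trans_eq ?_
      congr 1
      simp only [sub_sub_cancel]
      ring
  · have : 2 * |z.1| ^ (1 + a) * (8 * J₁ * J₂ / (|z.1| ^ (1 + a) / 20)) = 320 * (J₁ * J₂) := by
      field_simp
      ring
    rw [this]
    have := mul_nonneg hJ₁ hJ₂
    linarith

lemma abs_sub_le_of_mem_highLowOutputSlice
    (hE : ∀ w ∈ highLowSet a J₁ J₂ J₃, |w.1.1| ^ (1 - a) * |w.2.1| ≤ E) (ha : 0 < a)
    (ha1 : a ≤ 1) {z p : ℝ × ℝ} (hp : p ∈ highLowOutputSlice a J₁ J₂ J₃ z) :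
    |p.1 - z.1| ≤ 2 * E / |z.1| ^ (1 - a) := by
  have hk : 0 < |z.1| := by simpa using (highLow_frequency_bounds hp).2.2.2.1
  have hk' : 0 < |z.1| ^ (1 - a) := Real.rpow_pos_of_pos hk _
  have hweight : |z.1| ^ (1 - a) ≤ 2 * |p.1| ^ (1 - a) := by
    refine rpow_le_two_mul_rpow (abs_nonneg _) ?_ (by linarith) (by linarith)
    simpa using (highLow_frequency_bounds hp).2.1
  have hbound : |p.1| ^ (1 - a) * |z.1 - p.1| ≤ E := hE _ hp
  rw [le_div_iff₀ hk', abs_sub_comm]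
  have := mul_le_mul_of_nonneg_left hweight (abs_nonneg (z.1 - p.1))
  nlinarith

lemma lintegral_highLowKernel_output_le_of_resonance
    (hE : ∀ w ∈ highLowSet a J₁ J₂ J₃, |w.1.1| ^ (1 - a) * |w.2.1| ≤ E) (ha : 0 < a)
    (ha1 : a ≤ 1) (hE0 : 0 ≤ E) {g : ℝ → ℝ≥0∞} (hg : Measurable g) (z : ℝ × ℝ) :
    ∫⁻ p, highLowKernel a J₁ J₂ J₃ (1 - a) g p (z - p) ≤
      ENNReal.ofReal (1000 * E) * ∫⁻ y, g y := by
  simp only [highLowKernel_output_eq]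
  rcases (highLowOutputSlice a J₁ J₂ J₃ z).eq_empty_or_nonempty with h | ⟨p₀, hp₀⟩
  · simp [h]
  have hk : 0 < |z.1| := by simpa using (highLow_frequency_bounds hp₀).2.2.2.1
  have : 0 < |z.1| ^ (1 - a) := Real.rpow_pos_of_pos hk _
  have hg' : Measurable fun y => g (z.2 - y) := hg.comp (measurable_const.sub measurable_id)
  have := lintegral_indicator_ofReal_mul_snd_le
      (measurableSet_highLowOutputSlice (J₁ := J₁) (J₂ := J₂) (J₃ := J₃) ha z)
    (w := fun p => |p.1| ^ (1 - a)) (W := 2 * |z.1| ^ (1 - a))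
    (m := 2 * (2 * E / |z.1| ^ (1 - a))) (B := 1000 * E) (by positivity) ?_ ?_ ?_ hg'
  · rwa [lintegral_sub_left_eq_self (fun y => g y) z.2] at this
  · intro p hp
    refine rpow_le_two_mul_rpow (abs_nonneg _) ?_ (by linarith) (by linarith)
    simpa using (highLow_frequency_bounds hp).1
  · intro y
    have hs : {x | (x, y) ∈ highLowOutputSlice a J₁ J₂ J₃ z} ⊆ {x | |x - z.1| ≤ 2 * E / |z.1| ^
        (1 - a)} :=
      fun x hx => abs_sub_le_of_mem_highLowOutputSlice hE ha ha1 hx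
    exact (measure_mono hs).trans (volume_abs_sub_le_eq _ _).le
  · have : 2 * |z.1| ^ (1 - a) * (2 * (2 * E / |z.1| ^ (1 - a))) = 8 * E := by
      field_simp
      ring
    rw [this]
    linarith

lemma lintegral_highLowKernel_output_le_of_resonance_strip
    (hE : ∀ w ∈ highLowSet a J₁ J₂ J₃, |w.1.1| ^ (1 - a) * |w.2.1| ≤ E) (ha : 0 < a)
    (ha1 : a ≤ 1) (hE0 : 0 ≤ E) (hJ₁ : 0 ≤ J₁) (z : ℝ × ℝ) :
    ∫⁻ p, highLowKernel a J₁ J₂ J₃ (1 - a) 1 p (z - p) ≤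
      ENNReal.ofReal (1000 * (J₁ * E)) := by
  simp only [highLowKernel_output_eq, Pi.one_apply, mul_one]
  rcases (highLowOutputSlice a J₁ J₂ J₃ z).eq_empty_or_nonempty with h | ⟨p₀, hp₀⟩
  · simp [h]
  have hk : 0 < |z.1| := by simpa using (highLow_frequency_bounds hp₀).2.2.2.1
  have : 0 < |z.1| ^ (1 - a) := Real.rpow_pos_of_pos hk _
  refine lintegral_indicator_ofReal_le (measurableSet_highLowOutputSlice ha z)
      (W := 2 * |z.1| ^ (1 - a))
    (m := 2 * J₁ * (2 * (2 * E / |z.1| ^ (1 - a)))) (by positivity) ?_ ?_ ?_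
  · intro p hp
    refine rpow_le_two_mul_rpow (abs_nonneg _) ?_ (by linarith) (by linarith)
    simpa using (highLow_frequency_bounds hp).1
  · rw [ENNReal.ofReal_mul (by positivity)]
    refine prod_le_of_vertical_sections (measurableSet_highLowOutputSlice ha z) (fun x => ?_)
      (T := {x | |x - z.1| ≤ 2 * E / |z.1| ^ (1 - a)})
      (fun p hp => abs_sub_le_of_mem_highLowOutputSlice hE ha ha1 hp) (volume_abs_sub_le_eq _ _).le
    have hs : {y | (x, y) ∈ highLowOutputSlice a J₁ J₂ J₃ z} ⊆ {y | |y - disp a x| ≤ J₁} :=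
      fun y hy => hy.2.2.1
    exact (measure_mono hs).trans (volume_abs_sub_le_eq _ _).le
  · have : 2 * |z.1| ^ (1 - a) * (2 * J₁ * (2 * (2 * E / |z.1| ^ (1 - a)))) = 16 * (J₁ * E) := by
      field_simp
      ring
    rw [this]
    have := mul_nonneg hJ₁ hE0
    linarith

lemma lintegral_highLowKernel_output_le_of_strip (ha : 0 < a) (ha1 : a ≤ 1) (hJ₁ : 0 ≤ J₁)
    {g : ℝ → ℝ≥0∞} (hg : Measurable g)
    (z : ℝ × ℝ) :
    ∫⁻ p, highLowKernel a J₁ J₂ J₃ (1 + a) g p (z - p) ≤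
      ENNReal.ofReal (1000 * J₁) * ∫⁻ y, g y := by
  simp only [highLowKernel_output_eq]
  rcases (highLowOutputSlice a J₁ J₂ J₃ z).eq_empty_or_nonempty with h | ⟨p₀, hp₀⟩
  · simp [h]
  have hk : 0 < |z.1| := by simpa using (highLow_frequency_bounds hp₀).2.2.2.1
  have : 0 < |z.1| ^ (1 + a) := Real.rpow_pos_of_pos hk _
  have hg' : Measurable fun y => g (z.2 - y) := hg.comp (measurable_const.sub measurable_id)
  have hr : |z.1| ^ (1 + a) ≤ 2 * (7 / 8 * |z.1|) ^ (1 + a) :=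
    rpow_le_two_mul_rpow (abs_nonneg _) (by linarith) (by linarith) (by linarith)
  have hr' : 0 < (7 / 8 * |z.1|) ^ (1 + a) := by positivity
  have := lintegral_indicator_ofReal_mul_snd_le
      (measurableSet_highLowOutputSlice (J₁ := J₁) (J₂ := J₂) (J₃ := J₃) ha z)
    (w := fun p => |p.1| ^ (1 + a)) (W := 2 * |z.1| ^ (1 + a))
    (m := 2 * J₁ / (7 / 8 * |z.1|) ^ (1 + a)) (B := 1000 * J₁) (by positivity) ?_ ?_ ?_ hg'
  · rwa [lintegral_sub_left_eq_self (fun y => g y) z.2] at this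
  · intro p hp
    refine rpow_le_two_mul_rpow (abs_nonneg _) ?_ (by linarith) (by linarith)
    simpa using (highLow_frequency_bounds hp).1
  · intro y
    refine volume_le_of_disp_strip ha (t := 0) (c := y) (k := z.1) (by positivity) ?_ ?_
      (abs_pos.mp hk) ?_
    · intro x hx
      have : |z.1| ≤ 8 / 7 * |x| := by simpa using (highLow_frequency_bounds hx).2.1
      rw [add_zero]
      linarith
    · intro x hx
      have : 0 ≤ x * z.1 := by simpa using (highLow_frequency_bounds hx).2.2.2.2
      rw [add_zero]
      linarith
    · intro x hx
      rw [add_zero]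
      exact hx.2.2.1
  · rw [mul_div_assoc', div_le_iff₀ hr']
    nlinarith [mul_le_mul_of_nonneg_left hr hJ₁, mul_nonneg hJ₁ hr'.le]

lemma lintegral_highLowKernel_input_le_of_resonance
    (hE : ∀ w ∈ highLowSet a J₁ J₂ J₃, |w.1.1| ^ (1 - a) * |w.2.1| ≤ E) (ha : 0 < a)
    (hE0 : 0 ≤ E) {g : ℝ → ℝ≥0∞} (hg : Measurable g) (p : ℝ × ℝ) :
    ∫⁻ q, highLowKernel a J₁ J₂ J₃ (1 - a) g p q ≤
      ENNReal.ofReal (1000 * E) * ∫⁻ y, g y := by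
  simp only [highLowKernel_input_eq]
  rcases (highLowInputSlice a J₁ J₂ J₃ p).eq_empty_or_nonempty with h | ⟨q₀, hq₀⟩
  · simp [h]
  have hk : 0 < |p.1| := lt_of_lt_of_le one_pos hq₀.2.1
  have hk' : 0 < |p.1| ^ (1 - a) := Real.rpow_pos_of_pos hk _
  refine lintegral_indicator_ofReal_mul_snd_le
      (measurableSet_highLowInputSlice (J₁ := J₁) (J₂ := J₂) (J₃ := J₃) ha p)
    (w := fun _ => |p.1| ^ (1 - a)) (W := |p.1| ^ (1 - a))
    (m := 2 * (E / |p.1| ^ (1 - a))) (B := 1000 * E) (by positivity) (fun _ _ => le_rfl) ?_ ?_ hg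
  · intro y
    have hs : {x | (x, y) ∈ highLowInputSlice a J₁ J₂ J₃ p} ⊆ {x | |x - 0| ≤ E / |p.1| ^
        (1 - a)} := by
      intro x hx
      have := hE _ hx
      simp only [sub_zero, Set.mem_ofPred_eq]
      rw [le_div_iff₀ hk', mul_comm]
      exact this
    exact (measure_mono hs).trans (volume_abs_sub_le_eq _ _).le
  · have : |p.1| ^ (1 - a) * (2 * (E / |p.1| ^ (1 - a))) = 2 * E := by
      field_simp
    rw [this]
    linarith

lemma lintegral_highLowKernel_input_le_of_transversal (ha : 0 < a) (ha1 : a ≤ 1) (hJ₂ : 0 ≤ J₂)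
    (hJ₃ : 0 ≤ J₃) (p : ℝ × ℝ) :
    ∫⁻ q, highLowKernel a J₁ J₂ J₃ (1 + a) 1 p q ≤
      ENNReal.ofReal (1000 * (J₂ * J₃)) := by
  simp only [highLowKernel_input_eq, Pi.one_apply, mul_one]
  rcases (highLowInputSlice a J₁ J₂ J₃ p).eq_empty_or_nonempty with h | ⟨q₀, hq₀⟩
  · simp [h]
  have hk : 0 < |p.1| := lt_of_lt_of_le one_pos hq₀.2.1
  have : 0 < |p.1| ^ (1 + a) := Real.rpow_pos_of_pos hk _
  refine lintegral_indicator_ofReal_le (measurableSet_highLowInputSlice ha p) (W := |p.1| ^ (1 + a))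
    (m := 8 * J₂ * J₃ / (|p.1| ^ (1 + a) / 20)) (by positivity) (fun _ _ => le_rfl) ?_ ?_
  · refine volume_le_of_transversal (measurableSet_highLowInputSlice ha p) (φ₁ := disp a)
      (φ₂ := fun x => disp a (p.1 + x) - p.2) (by positivity) hJ₂ hJ₃
      (fun q hq => hq.2.2.2.1) (fun q hq => ?_) (fun q hq q' hq' => ?_)
    · have := hq.2.2.2.2
      simp only [modulation, Prod.fst_add, Prod.snd_add] at this
      convert this using 2; ring
    · have hlow : ∀ x ∈ highLowInputSlice a J₁ J₂ J₃ p, |x.1| ≤ |p.1| / 7 := fun x hx =>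
        hx.1.trans (by linarith)
      have := mul_abs_sub_le_of_fixed_diff ha ha1 (hlow q hq) (hlow q' hq')
      refine this.trans (le_of_eq ?_)
      rw [← abs_neg]
      congr 1
      ring
  · have : |p.1| ^ (1 + a) * (8 * J₂ * J₃ / (|p.1| ^ (1 + a) / 20)) = 160 * (J₂ * J₃) := by
      field_simp
      ring
    rw [this]
    have := mul_nonneg hJ₂ hJ₃
    linarith

lemma lintegral_highLowKernel_input_le_of_resonance_strip
    (hE : ∀ w ∈ highLowSet a J₁ J₂ J₃, |w.1.1| ^ (1 - a) * |w.2.1| ≤ E) (ha : 0 < a)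
    (hE0 : 0 ≤ E) (hJ₃ : 0 ≤ J₃) (p : ℝ × ℝ) :
    ∫⁻ q, highLowKernel a J₁ J₂ J₃ (1 - a) 1 p q ≤
      ENNReal.ofReal (1000 * (J₃ * E)) := by
  simp only [highLowKernel_input_eq, Pi.one_apply, mul_one]
  rcases (highLowInputSlice a J₁ J₂ J₃ p).eq_empty_or_nonempty with h | ⟨q₀, hq₀⟩
  · simp [h]
  have hk : 0 < |p.1| := lt_of_lt_of_le one_pos hq₀.2.1
  have hk' : 0 < |p.1| ^ (1 - a) := Real.rpow_pos_of_pos hk _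
  refine lintegral_indicator_ofReal_le (measurableSet_highLowInputSlice ha p) (W := |p.1| ^ (1 - a))
    (m := 2 * J₃ * (2 * (E / |p.1| ^ (1 - a)))) (by positivity) (fun _ _ => le_rfl) ?_ ?_
  · rw [ENNReal.ofReal_mul (by positivity)]
    refine prod_le_of_vertical_sections (measurableSet_highLowInputSlice ha p) (fun x => ?_)
      (T := {x | |x - 0| ≤ E / |p.1| ^ (1 - a)}) (fun q hq => ?_) (volume_abs_sub_le_eq _ _).le
    · have hs : {y | (x, y) ∈ highLowInputSlice a J₁ J₂ J₃ p} ⊆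
          {y | |y - (disp a (p.1 + x) - p.2)| ≤ J₃} := by
        intro y hy
        have := hy.2.2.2.2
        simp only [modulation, Prod.fst_add, Prod.snd_add] at this
        simp only [Set.mem_ofPred_eq]
        convert this using 2; ring
      exact (measure_mono hs).trans (volume_abs_sub_le_eq _ _).le
    · have := hE _ hq
      simp only [sub_zero, Set.mem_ofPred_eq]
      rw [le_div_iff₀ hk', mul_comm]
      exact this
  · have : |p.1| ^ (1 - a) * (2 * J₃ * (2 * (E / |p.1| ^ (1 - a)))) = 4 * (J₃ * E) := by
      field_simp
      ring
    rw [this]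
    have := mul_nonneg hJ₃ hE0
    linarith

lemma lintegral_highLowKernel_input_le_of_strip (ha : 0 < a) (ha1 : a ≤ 1) (hJ₃ : 0 ≤ J₃)
    {g : ℝ → ℝ≥0∞} (hg : Measurable g)
    (p : ℝ × ℝ) :
    ∫⁻ q, highLowKernel a J₁ J₂ J₃ (1 + a) g p q ≤
      ENNReal.ofReal (1000 * J₃) * ∫⁻ y, g y := by
  simp only [highLowKernel_input_eq]
  rcases (highLowInputSlice a J₁ J₂ J₃ p).eq_empty_or_nonempty with h | ⟨q₀, hq₀⟩
  · simp [h]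
  have hk : 0 < |p.1| := lt_of_lt_of_le one_pos hq₀.2.1
  have : 0 < |p.1| ^ (1 + a) := Real.rpow_pos_of_pos hk _
  have hr : |p.1| ^ (1 + a) ≤ 2 * (7 / 8 * |p.1|) ^ (1 + a) :=
    rpow_le_two_mul_rpow (abs_nonneg _) (by linarith) (by linarith) (by linarith)
  have hr' : 0 < (7 / 8 * |p.1|) ^ (1 + a) := by positivity
  refine lintegral_indicator_ofReal_mul_snd_le
      (measurableSet_highLowInputSlice (J₁ := J₁) (J₂ := J₂) (J₃ := J₃) ha p)
    (w := fun _ => |p.1| ^ (1 + a)) (W := |p.1| ^ (1 + a))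
    (m := 2 * J₃ / (7 / 8 * |p.1|) ^ (1 + a)) (B := 1000 * J₃) (by positivity)
    (fun _ _ => le_rfl) ?_ ?_ hg
  · intro y
    refine volume_le_of_disp_strip ha (t := p.1) (c := y + p.2) (k := p.1) (by positivity) ?_ ?_
      (abs_pos.mp hk) ?_
    · intro x hx
      have : |p.1| ≤ 8 / 7 * |p.1 + x| := (highLow_frequency_bounds hx).1
      rw [add_comm x]
      linarith
    · intro x hx
      have : 0 ≤ p.1 * (p.1 + x) := (highLow_frequency_bounds hx).2.2.2.2
      rwa [add_comm x]
    · intro x hx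
      have := hx.2.2.2.2
      simp only [modulation, Prod.fst_add, Prod.snd_add] at this
      rw [add_comm x, add_comm y]
      exact this
  · rw [mul_div_assoc', div_le_iff₀ hr']
    nlinarith [mul_le_mul_of_nonneg_left hr hJ₃, mul_nonneg hJ₃ hr'.le]

lemma rpow_one_sub_mul_le_of_rpow_one_add_mul_le {N y M : ℝ} (ha : 0 < a) (ha1 : a ≤ 1)
    (hN : 1 ≤ N) (hy : 0 < y) (hyN : y ≤ N) (hM : 0 ≤ M) (h : N ^ (1 + a) * y ≤ 12 * M) :
    N ^ (1 - a) * y ≤ 12 * M ^ (1 - a / 4) := by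
  have hN0 : 0 < N := zero_lt_one.trans_le hN
  have hexp : N ^ (1 - a) * N ^ (a / 4) ≤ N ^ ((1 + a) * (1 - a / 4)) := by
    rw [← Real.rpow_add hN0]
    exact Real.rpow_le_rpow_of_exponent_le hN (by nlinarith)
  have hconst : (12 : ℝ) ^ (1 - a / 4) ≤ 12 :=
    Real.rpow_le_self_of_one_le (by norm_num) (by linarith)
  calc N ^ (1 - a) * y = N ^ (1 - a) * (y ^ (a / 4) * y ^ (1 - a / 4)) := by
        rw [← Real.rpow_add hy, add_sub_cancel, Real.rpow_one]
    _ ≤ N ^ (1 - a) * (N ^ (a / 4) * y ^ (1 - a / 4)) := by gcongr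
    _ ≤ N ^ ((1 + a) * (1 - a / 4)) * y ^ (1 - a / 4) := by rw [← mul_assoc]; gcongr
    _ = (N ^ (1 + a) * y) ^ (1 - a / 4) := by
        rw [Real.mul_rpow (by positivity) hy.le, ← Real.rpow_mul hN0.le]
    _ ≤ (12 * M) ^ (1 - a / 4) :=
        Real.rpow_le_rpow (by positivity) h (by linarith)
    _ = 12 ^ (1 - a / 4) * M ^ (1 - a / 4) := Real.mul_rpow (by norm_num) hM
    _ ≤ 12 * M ^ (1 - a / 4) := by gcongr

lemma rpow_mul_abs_le_of_mem_highLowSet (ha : 0 < a) (ha1 : a ≤ 1) (hJ₁ : 1 ≤ J₁)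
    {w : (ℝ × ℝ) × (ℝ × ℝ)} (hw : w ∈ highLowSet a J₁ J₂ J₃) :
    |w.1.1| ^ (1 - a) * |w.2.1| ≤ 12 * max J₁ (max J₂ J₃) ^ (1 - a / 4) := by
  obtain ⟨hlow, hhigh, hmod₁, hmod₂, hmod₃⟩ := hw
  have hM : 0 ≤ max J₁ (max J₂ J₃) := zero_le_one.trans (hJ₁.trans (le_max_left _ _))
  rcases (abs_nonneg w.2.1).eq_or_lt with h0 | hpos
  · rw [← h0, mul_zero]
    positivity
  have hres := rpow_mul_abs_le_abs_resonance_of_high_low ha ha1 hlow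
  have hmod := abs_resonance_le_max_modulation hmod₁ hmod₂ hmod₃
  exact rpow_one_sub_mul_le_of_rpow_one_add_mul_le ha ha1 hhigh hpos (by linarith) hM
    (by linarith)

variable {f : ℝ × ℝ → ℝ≥0∞} {G : ℝ → ℝ≥0∞}

/-- The derivative `|ξ₁|` is the geometric mean of `|ξ₁| ^ (1 + a)`, which the transversality of two
modulation strips absorbs, and of `|ξ₁| ^ (1 - a)`, which the resonance bound absorbs. The two
strips are those of the smaller modulations. -/
lemma lintegral_sq_highLow_le_of_high_input (ha : 0 < a) (ha1 : a ≤ 1) (hE0 : 0 ≤ E)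
    (hE : ∀ w ∈ highLowSet a J₁ J₂ J₃, |w.1.1| ^ (1 - a) * |w.2.1| ≤ E)
    (hJ₂ : 0 ≤ J₂) (hJ₃ : 0 ≤ J₃) (hf : Measurable f) (hG : Measurable G) :
    ∫⁻ z, (∫⁻ p, highLowKernel a J₁ J₂ J₃ 1 G p (z - p) * f p) ^ 2 ≤
      ENNReal.ofReal (1000000 * (J₂ * J₃ * E)) * (∫⁻ y, G y ^ 2) * ∫⁻ p, f p ^ 2 := by
  have hG2 : Measurable fun y => G y ^ 2 := hG.pow_const 2
  refine (lintegral_sq_convolution_le_of_schur (measurable_highLowKernel ha (1 - a) hG2)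
    (measurable_highLowKernel ha (1 + a) measurable_one)
    (fun p q => ?_) (lintegral_highLowKernel_output_le_of_resonance hE ha ha1 hE0 hG2)
    (lintegral_highLowKernel_input_le_of_transversal (J₁ := J₁) ha ha1 hJ₂ hJ₃) hf).trans_eq ?_
  · rw [highLowKernel_one_sq a J₁ J₂ J₃ (e₁ := 1 + a) (e₂ := 1 - a) (by ring), mul_comm]
  · rw [mul_right_comm (ENNReal.ofReal (1000 * E)), ← ENNReal.ofReal_mul (by positivity)]
    congr 3
    ring

lemma lintegral_sq_highLow_le_of_output (ha : 0 < a) (ha1 : a ≤ 1) (hE0 : 0 ≤ E)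
    (hE : ∀ w ∈ highLowSet a J₁ J₂ J₃, |w.1.1| ^ (1 - a) * |w.2.1| ≤ E)
    (hJ₁ : 0 ≤ J₁) (hJ₂ : 0 ≤ J₂) (hf : Measurable f) (hG : Measurable G) :
    ∫⁻ z, (∫⁻ p, highLowKernel a J₁ J₂ J₃ 1 G p (z - p) * f p) ^ 2 ≤
      ENNReal.ofReal (1000000 * (J₁ * J₂ * E)) * (∫⁻ y, G y ^ 2) * ∫⁻ p, f p ^ 2 := by
  have hG2 : Measurable fun y => G y ^ 2 := hG.pow_const 2
  refine (lintegral_sq_convolution_le_of_schur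
    (measurable_highLowKernel ha (1 + a) measurable_one)
    (measurable_highLowKernel ha (1 - a) hG2)
    (fun p q => (highLowKernel_one_sq a J₁ J₂ J₃ (by ring) G p q).le)
    (lintegral_highLowKernel_output_le_of_transversal (J₃ := J₃) ha ha1 hJ₁ hJ₂)
    (lintegral_highLowKernel_input_le_of_resonance hE ha hE0 hG2) hf).trans_eq ?_
  rw [← mul_assoc, ← ENNReal.ofReal_mul (by positivity)]
  congr 3
  ring

/-- Transversality always involves the strip of the low input, which is too wide when that input has
the largest modulation. Cauchy-Schwarz in each Schur integral makes do with one strip, that of the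
high input or of the output. -/
lemma lintegral_sq_highLow_le_of_low_input (ha : 0 < a) (ha1 : a ≤ 1) (hE0 : 0 ≤ E)
    (hE : ∀ w ∈ highLowSet a J₁ J₂ J₃, |w.1.1| ^ (1 - a) * |w.2.1| ≤ E)
    (hJ₁ : 0 ≤ J₁) (hJ₃ : 0 ≤ J₃) (hf : Measurable f) (hG : Measurable G) :
    ∫⁻ z, (∫⁻ p, highLowKernel a J₁ J₂ J₃ 1 G p (z - p) * f p) ^ 2 ≤
      ENNReal.ofReal (1000000 * (J₁ * J₃ * E)) * (∫⁻ y, G y ^ 2) * ∫⁻ p, f p ^ 2 := by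
  have hG2 : Measurable fun y => G y ^ 2 := hG.pow_const 2
  have hkernel := measurable_highLowKernel (J₁ := J₁) (J₂ := J₂) (J₃ := J₃) ha 1 hG
  have hresonance :=
    measurable_highLowKernel (J₁ := J₁) (J₂ := J₂) (J₃ := J₃) ha (1 - a) measurable_one
  have hstrip := measurable_highLowKernel (J₁ := J₁) (J₂ := J₂) (J₃ := J₃) ha (1 + a) hG2
  have hsplit := fun p q => (highLowKernel_one_sq a J₁ J₂ J₃ (e₁ := 1 - a) (e₂ := 1 + a)
    (by ring) G p q).le
  have houtput : ∀ z, (∫⁻ p, highLowKernel a J₁ J₂ J₃ 1 G p (z - p)) ^ 2 ≤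
      ENNReal.ofReal (1000 * J₁) ^ 2 * (ENNReal.ofReal E * ∫⁻ y, G y ^ 2) := fun z => by
    have hslice : Measurable fun p : ℝ × ℝ => (p, z - p) := by fun_prop
    refine (lintegral_sq_le_of_sq_le_mul (hresonance.comp hslice).aemeasurable
      (hstrip.comp hslice).aemeasurable fun p => hsplit p (z - p)).trans ?_
    refine (mul_le_mul' (lintegral_highLowKernel_output_le_of_resonance_strip hE ha ha1 hE0 hJ₁ z)
      (lintegral_highLowKernel_output_le_of_strip ha ha1 hJ₁ hG2 z)).trans_eq ?_
    rw [← mul_assoc 1000 J₁, ENNReal.ofReal_mul (by positivity)]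
    ring
  have hinput : ∀ p, (∫⁻ q, highLowKernel a J₁ J₂ J₃ 1 G p q) ^ 2 ≤
      ENNReal.ofReal (1000 * J₃) ^ 2 * (ENNReal.ofReal E * ∫⁻ y, G y ^ 2) := fun p => by
    refine (lintegral_sq_le_of_sq_le_mul (hresonance.comp measurable_prodMk_left).aemeasurable
      (hstrip.comp measurable_prodMk_left).aemeasurable fun q => hsplit p q).trans ?_
    refine (mul_le_mul' (lintegral_highLowKernel_input_le_of_resonance_strip hE ha hE0 hJ₃ p)
      (lintegral_highLowKernel_input_le_of_strip ha ha1 hJ₃ hG2 p)).trans_eq ?_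
    rw [← mul_assoc 1000 J₃, ENNReal.ofReal_mul (by positivity)]
    ring
  refine (lintegral_sq_convolution_le_of_schur hkernel hkernel (fun p q => (sq _).le)
    (fun z => le_rpow_half_of_sq_le (houtput z)) (fun p => le_rpow_half_of_sq_le (hinput p))
    hf).trans_eq ?_
  rw [← ENNReal.mul_rpow_of_nonneg _ _ (by norm_num), mul_mul_mul_comm, ← mul_pow, ← sq, ← mul_pow,
    sq_rpow_half, ← ENNReal.ofReal_mul (by positivity), ← mul_assoc (ENNReal.ofReal _),
    ← ENNReal.ofReal_mul (by positivity)]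
  congr 3
  ring

/-- The gain `M ^ (-a/4)` over the trivial bound, `M` the largest modulation, is what makes the
dyadic sums converge for `b < 1/2`. -/
lemma lintegral_sq_highLow_le (ha : 0 < a) (ha1 : a ≤ 1) (hJ₁ : 1 ≤ J₁) (hJ₂ : 1 ≤ J₂)
    (hJ₃ : 1 ≤ J₃) (hf : Measurable f) (hG : Measurable G) :
    ∫⁻ z, (∫⁻ p, highLowKernel a J₁ J₂ J₃ 1 G p (z - p) * f p) ^ 2 ≤
      ENNReal.ofReal (12000000 * (J₁ * J₂ * J₃ * max J₁ (max J₂ J₃) ^ (-(a / 4)))) *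
        (∫⁻ y, G y ^ 2) * ∫⁻ p, f p ^ 2 := by
  have hE := fun w (hw : w ∈ highLowSet a J₁ J₂ J₃) =>
    rpow_mul_abs_le_of_mem_highLowSet ha ha1 hJ₁ hw
  have hJ₁' := zero_le_one.trans hJ₁
  have hJ₂' := zero_le_one.trans hJ₂
  have hJ₃' := zero_le_one.trans hJ₃
  have hmax : max J₁ (max J₂ J₃) = J₁ ∨ max J₁ (max J₂ J₃) = J₂ ∨ max J₁ (max J₂ J₃) = J₃ := by
    grind
  set M := max J₁ (max J₂ J₃)
  have hM : 1 ≤ M := hJ₁.trans (le_max_left _ _)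
  have hE0 : 0 ≤ 12 * M ^ (1 - a / 4) := by positivity
  have hgain : M ^ (1 - a / 4) = M * M ^ (-(a / 4)) := by
    rw [sub_eq_add_neg, Real.rpow_add (by linarith), Real.rpow_one]
  rcases hmax with h | h | h
  · refine (lintegral_sq_highLow_le_of_high_input ha ha1 hE0 hE hJ₂' hJ₃' hf hG).trans_eq ?_
    rw [hgain, h]
    ring_nf
  · refine (lintegral_sq_highLow_le_of_low_input ha ha1 hE0 hE hJ₁' hJ₃' hf hG).trans_eq ?_
    rw [hgain, h]
    ring_nf
  · refine (lintegral_sq_highLow_le_of_output ha ha1 hE0 hE hJ₁' hJ₂' hf hG).trans_eq ?_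
    rw [hgain, h]
    ring_nf

end HighLow

/-! ### The interaction of comparable frequencies -/

section Comparable
variable {a J₁ J₂ J₃ : ℝ}

/-- The pairs `(p, q)` of space-time frequencies which have comparable or bounded frequencies and
for which `p`, `q`, `p + q` have modulations at most `J₁`, `J₂`, `J₃`. -/
def comparableSet (a J₁ J₂ J₃ : ℝ) : Set ((ℝ × ℝ) × (ℝ × ℝ)) :=
  {w | ((|w.1.1| ≤ 8 * |w.2.1| ∧ |w.2.1| ≤ 8 * |w.1.1|) ∨ (|w.1.1| ≤ 8 ∧ |w.2.1| ≤ 8)) ∧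
    |modulation a w.1| ≤ J₁ ∧ |modulation a w.2| ≤ J₂ ∧ |modulation a (w.1 + w.2)| ≤ J₃}

lemma measurableSet_comparableSet (ha : 0 < a) : MeasurableSet (comparableSet a J₁ J₂ J₃) := by
  have := measurable_modulation ha
  have hfreq₁ : Measurable fun w : (ℝ × ℝ) × (ℝ × ℝ) => |w.1.1| := by fun_prop
  have hfreq₂ : Measurable fun w : (ℝ × ℝ) × (ℝ × ℝ) => |w.2.1| := by fun_prop
  have hmod₁ : Measurable fun w : (ℝ × ℝ) × (ℝ × ℝ) => |modulation a w.1| := by fun_prop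
  have hmod₂ : Measurable fun w : (ℝ × ℝ) × (ℝ × ℝ) => |modulation a w.2| := by fun_prop
  have hmod₃ : Measurable fun w : (ℝ × ℝ) × (ℝ × ℝ) => |modulation a (w.1 + w.2)| := by fun_prop
  have hcomparable := (measurableSet_le hfreq₁ (hfreq₂.const_mul 8)).inter
    (measurableSet_le hfreq₂ (hfreq₁.const_mul 8))
  have hbounded := (measurableSet_le hfreq₁ (measurable_const (a := (8 : ℝ)))).inter
    (measurableSet_le hfreq₂ (measurable_const (a := (8 : ℝ))))
  exact (hcomparable.union hbounded).inter ((measurableSet_le hmod₁ measurable_const).inter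
    ((measurableSet_le hmod₂ measurable_const).inter (measurableSet_le hmod₃ measurable_const)))

/-- The multiplier `|ξ| ⟨ξ⟩ ^ (-s*)`, which `∂ₓ` and the norm of the output place on the output
frequency. -/
def outputWeight (a x : ℝ) : ℝ := |x| * (1 + |x|) ^ (-(1 / 2 + a / 2))

lemma outputWeight_nonneg (a x : ℝ) : 0 ≤ outputWeight a x := by
  unfold outputWeight
  positivity

@[fun_prop]
lemma measurable_outputWeight (a : ℝ) : Measurable (outputWeight a) := by
  unfold outputWeight
  fun_prop

lemma outputWeight_sq (a x : ℝ) :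
    outputWeight a x ^ 2 = |x| ^ 2 * (1 + |x|) ^ (-(1 + a)) := by
  rw [outputWeight, mul_pow, ← Real.rpow_natCast ((1 + |x|) ^ _), ← Real.rpow_mul (by positivity)]
  congr 2
  push_cast
  ring

lemma outputWeight_sq_le_sq (ha : -1 ≤ a) (x : ℝ) : outputWeight a x ^ 2 ≤ |x| ^ 2 := by
  rw [outputWeight_sq]
  exact mul_le_of_le_one_right (by positivity)
    (Real.rpow_le_one_of_one_le_of_nonpos (by linarith [abs_nonneg x]) (by linarith))

lemma outputWeight_sq_le_rpow (ha : 0 ≤ a) (ha1 : a ≤ 1) (x : ℝ) :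
    outputWeight a x ^ 2 ≤ |x| ^ (1 - a / 4) := by
  rcases (abs_nonneg x).eq_or_lt with h0 | h0
  · rw [outputWeight, ← h0, Real.zero_rpow (by linarith)]
    simp
  rcases le_total |x| 1 with h | h
  · refine (outputWeight_sq_le_sq (by linarith) x).trans ?_
    rw [← Real.rpow_natCast]
    exact Real.rpow_le_rpow_of_exponent_ge h0 h (by push_cast; linarith)
  · calc outputWeight a x ^ 2 = |x| ^ (2 : ℝ) * (1 + |x|) ^ (-(1 + a)) := by
          rw [outputWeight_sq, Real.rpow_two]
      _ ≤ |x| ^ (2 : ℝ) * |x| ^ (-(1 + a)) := by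
          gcongr ?_ * ?_
          exact Real.rpow_le_rpow_of_nonpos h0 (by linarith) (by linarith)
      _ = |x| ^ (1 - a) := by rw [← Real.rpow_add h0]; ring_nf
      _ ≤ |x| ^ (1 - a / 4) := Real.rpow_le_rpow_of_exponent_le h (by linarith)

lemma rpow_neg_le_sq_mul_rpow_neg {s c x y : ℝ} (hs : 0 ≤ s) (hs2 : s ≤ 2) (hc : 1 ≤ c)
    (hy : 0 < y) (h : y ≤ c * x) : x ^ (-s) ≤ c ^ 2 * y ^ (-s) := by
  have hc0 : 0 < c := by linarith
  calc x ^ (-s) ≤ (y / c) ^ (-s) :=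
        Real.rpow_le_rpow_of_nonpos (by positivity) ((div_le_iff₀' hc0).2 h) (by linarith)
    _ = c ^ s * y ^ (-s) := by
        rw [Real.div_rpow hy.le hc0.le, Real.rpow_neg hc0.le, div_inv_eq_mul, mul_comm]
    _ ≤ c ^ (2 : ℝ) * y ^ (-s) := by gcongr
    _ = c ^ 2 * y ^ (-s) := by rw [Real.rpow_two]

lemma outputWeight_sq_le_of_abs_le_eight {x y : ℝ} (ha : 0 ≤ a) (ha1 : a ≤ 1) (hx : |x| ≤ 8)
    (hy : |y| ≤ 8) : outputWeight a (x + y) ^ 2 ≤ 20736 * (1 + |x|) ^ (-(1 + a / 2)) := by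
  have hweight : 1 ≤ 81 * (1 + |x|) ^ (-(1 + a / 2)) := by
    have := rpow_neg_le_sq_mul_rpow_neg (s := 1 + a / 2) (c := 9) (x := 1) (y := 1 + |x|)
      (by linarith) (by linarith) (by norm_num) (by positivity) (by linarith)
    rw [Real.one_rpow] at this
    linarith
  have hsum : |x + y| ≤ 16 := (abs_add_le x y).trans (by linarith)
  calc outputWeight a (x + y) ^ 2 ≤ |x + y| ^ 2 := outputWeight_sq_le_sq (by linarith) _
    _ ≤ 16 ^ 2 := by gcongr
    _ ≤ 20736 * (1 + |x|) ^ (-(1 + a / 2)) := by linarith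

lemma outputWeight_sq_le_of_one_le {M x y : ℝ} (ha : 0 < a) (ha1 : a ≤ 1) (hM : 0 ≤ M)
    (hx : 1 ≤ |x|) (hxy : |x| ≤ 8 * |y|) (hres : |resonance a x y| ≤ 3 * M) :
    outputWeight a (x + y) ^ 2 ≤ 768 * M ^ (1 - a / 4) * (1 + |x|) ^ (-(1 + a / 2)) := by
  have hlower := rpow_mul_abs_add_le_abs_resonance ha ha1 hxy
  set N := |x|
  have hN : 0 < N := by linarith
  have hsum : |x + y| ≤ 192 * M * N ^ (-(1 + a)) := by
    rw [Real.rpow_neg hN.le, ← div_eq_mul_inv, le_div_iff₀ (by positivity)]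
    linarith
  have hdecay : N ^ (-(1 + a) * (1 - a / 4)) ≤ 4 * (1 + N) ^ (-(1 + a / 2)) := by
    refine (Real.rpow_le_rpow_of_exponent_le hx (z := -(1 + a / 2)) (by nlinarith)).trans ?_
    have := rpow_neg_le_sq_mul_rpow_neg (s := 1 + a / 2) (c := 2) (x := N) (y := 1 + N)
      (by linarith) (by linarith) (by norm_num) (by positivity) (by linarith)
    linarith
  have hconst : (192 : ℝ) ^ (1 - a / 4) ≤ 192 := by
    simpa using Real.rpow_le_rpow_of_exponent_le (x := (192 : ℝ)) (z := 1) (by norm_num)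
      (show 1 - a / 4 ≤ 1 by linarith)
  calc outputWeight a (x + y) ^ 2 ≤ |x + y| ^ (1 - a / 4) := outputWeight_sq_le_rpow ha.le ha1 _
    _ ≤ (192 * M * N ^ (-(1 + a))) ^ (1 - a / 4) :=
        Real.rpow_le_rpow (abs_nonneg _) hsum (by linarith)
    _ = 192 ^ (1 - a / 4) * M ^ (1 - a / 4) * N ^ (-(1 + a) * (1 - a / 4)) := by
        rw [Real.mul_rpow (by positivity) (by positivity),
          Real.mul_rpow (by positivity) (by positivity), ← Real.rpow_mul hN.le]
    _ ≤ 192 * M ^ (1 - a / 4) * (4 * (1 + N) ^ (-(1 + a / 2))) := by gcongr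
    _ = 768 * M ^ (1 - a / 4) * (1 + N) ^ (-(1 + a / 2)) := by ring

/-- Beyond the modulation gain, an integrable weight in the input frequency is left to spare. -/
lemma outputWeight_sq_le_of_mem_comparableSet {p q : ℝ × ℝ} (ha : 0 < a) (ha1 : a ≤ 1)
    (hJ₁ : 1 ≤ J₁) (hpq : (p, q) ∈ comparableSet a J₁ J₂ J₃) :
    outputWeight a (p.1 + q.1) ^ 2 ≤
      20736 * (max J₁ (max J₂ J₃)) ^ (1 - a / 4) * (1 + |p.1|) ^ (-(1 + a / 2)) := by
  obtain ⟨hfreq, h₁, h₂, h₃⟩ := hpq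
  have hres := abs_resonance_le_max_modulation h₁ h₂ h₃
  set M := max J₁ (max J₂ J₃)
  have hM : 1 ≤ M := hJ₁.trans (le_max_left _ _)
  have hMpow : 1 ≤ M ^ (1 - a / 4) := Real.one_le_rpow hM (by linarith)
  have of_bounded (hp : |p.1| ≤ 8) (hq : |q.1| ≤ 8) : outputWeight a (p.1 + q.1) ^ 2 ≤
      20736 * M ^ (1 - a / 4) * (1 + |p.1|) ^ (-(1 + a / 2)) :=
    (outputWeight_sq_le_of_abs_le_eight ha.le ha1 hp hq).trans <| by
      gcongr
      exact le_mul_of_one_le_right (by norm_num) hMpow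
  rcases hfreq with ⟨hp, hq⟩ | ⟨hp, hq⟩
  · rcases le_total |p.1| 1 with hp1 | hp1
    · simp only at hq
      exact of_bounded (by linarith) (by linarith)
    · refine (outputWeight_sq_le_of_one_le ha ha1 (by linarith) hp1 hp hres).trans ?_
      gcongr
      norm_num
  · exact of_bounded hp hq

lemma rpow_neg_le_of_mem_comparableSet {p q : ℝ × ℝ} {s : ℝ} (hs : 0 ≤ s) (hs2 : s ≤ 2)
    (hpq : (p, q) ∈ comparableSet a J₁ J₂ J₃) :
    (1 + |p.1|) ^ (-s) ≤ 81 * (1 + |q.1|) ^ (-s) := by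
  have hq : |q.1| ≤ 8 * |p.1| + 8 := by
    have := abs_nonneg p.1
    rcases hpq.1 with ⟨-, h⟩ | ⟨-, h⟩ <;> simp only at h <;> linarith
  have := rpow_neg_le_sq_mul_rpow_neg (c := 9) (x := 1 + |p.1|) (y := 1 + |q.1|) hs hs2
    (by norm_num) (by positivity) (by linarith [abs_nonneg p.1])
  linarith

lemma lintegral_indicator_modulation_le {J : ℝ} (ha : 0 < a) {h : ℝ → ℝ≥0∞} (hh : Measurable h) :
    ∫⁻ p, {p | |modulation a p| ≤ J}.indicator (fun p => h p.1) p ≤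
      ENNReal.ofReal (2 * J) * ∫⁻ x, h x := by
  have := measurable_modulation ha
  have hS : MeasurableSet {p | |modulation a p| ≤ J} :=
    measurableSet_le (by fun_prop) measurable_const
  have hm : Measurable ({p | |modulation a p| ≤ J}.indicator (fun z : ℝ × ℝ => h z.1)) :=
    (hh.comp measurable_fst).indicator hS
  rw [Measure.volume_eq_prod, lintegral_prod _ hm.aemeasurable, ← lintegral_const_mul _ hh]
  refine lintegral_mono fun x => ?_
  have hsection : ∀ y, {p | |modulation a p| ≤ J}.indicator (fun z : ℝ × ℝ => h z.1) (x, y) =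
      {y | |y - disp a x| ≤ J}.indicator (fun _ => h x) y := fun _ => rfl
  have hSx : MeasurableSet {y | |y - disp a x| ≤ J} :=
    measurableSet_le (by fun_prop) measurable_const
  simp only [hsection]
  rw [lintegral_indicator_const hSx, mul_comm, volume_abs_sub_le_eq]

/-- The integral of the weight `⟨ξ⟩ ^ (-(1 + a / 2))`, finite for `0 < a`. -/
def decayIntegral (a : ℝ) : ℝ≥0∞ := ∫⁻ x : ℝ, ENNReal.ofReal ((1 + |x|) ^ (-(1 + a / 2)))

lemma decayIntegral_lt_top (ha : 0 < a) : decayIntegral a < ∞ := by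
  simpa [decayIntegral] using finite_integral_one_add_norm (E := ℝ) (μ := volume) (r := 1 + a / 2)
    (by simpa using ha)

/-- The kernel `m(ξ₁ + ξ₂) * g(ξ₂, λ₂)` on interactions of comparable frequencies, where `m` is the
output weight. -/
def comparableKernel (a J₁ J₂ J₃ : ℝ) (g : ℝ × ℝ → ℝ≥0∞) (p q : ℝ × ℝ) : ℝ≥0∞ :=
  (comparableSet a J₁ J₂ J₃).indicator
    (fun w => ENNReal.ofReal (outputWeight a (w.1.1 + w.2.1)) * g w.2) (p, q)

lemma measurable_comparableKernel (ha : 0 < a) {g : ℝ × ℝ → ℝ≥0∞} (hg : Measurable g) :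
    Measurable (Function.uncurry (comparableKernel a J₁ J₂ J₃ g)) := by
  have : Measurable fun w : (ℝ × ℝ) × (ℝ × ℝ) =>
      ENNReal.ofReal (outputWeight a (w.1.1 + w.2.1)) * g w.2 := by fun_prop
  exact this.indicator (measurableSet_comparableSet ha)

lemma comparableKernel_sq (g : ℝ × ℝ → ℝ≥0∞) (p q : ℝ × ℝ) :
    comparableKernel a J₁ J₂ J₃ g p q ^ 2 = comparableKernel a J₁ J₂ J₃ 1 p q ^ 2 * g q ^ 2 := by
  by_cases hpq : (p, q) ∈ comparableSet a J₁ J₂ J₃ <;>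
    simp [comparableKernel, hpq, mul_pow]

lemma comparableKernel_one_sq_le {p q : ℝ × ℝ} (ha : 0 < a) (ha1 : a ≤ 1) (hJ₁ : 1 ≤ J₁) :
    comparableKernel a J₁ J₂ J₃ 1 p q ^ 2 ≤
      ENNReal.ofReal (20736 * (max J₁ (max J₂ J₃)) ^ (1 - a / 4)) *
        {p | |modulation a p| ≤ J₁}.indicator
          (fun p => ENNReal.ofReal ((1 + |p.1|) ^ (-(1 + a / 2)))) p := by
  by_cases hpq : (p, q) ∈ comparableSet a J₁ J₂ J₃
  · have hp : p ∈ {p | |modulation a p| ≤ J₁} := hpq.2.1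
    have : 0 ≤ max J₁ (max J₂ J₃) := le_max_of_le_left (by linarith)
    rw [comparableKernel, Set.indicator_of_mem hpq, Set.indicator_of_mem hp,
      ← ENNReal.ofReal_mul (by positivity), Pi.one_apply, mul_one,
      ← ENNReal.ofReal_pow (outputWeight_nonneg _ _)]
    exact ENNReal.ofReal_le_ofReal (outputWeight_sq_le_of_mem_comparableSet ha ha1 hJ₁ hpq)
  · simp [comparableKernel, hpq]

lemma comparableKernel_one_sq_le_right {p q : ℝ × ℝ} (ha : 0 < a) (ha1 : a ≤ 1) (hJ₁ : 1 ≤ J₁) :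
    comparableKernel a J₁ J₂ J₃ 1 p q ^ 2 ≤
      ENNReal.ofReal (20736 * (max J₁ (max J₂ J₃)) ^ (1 - a / 4) * 81) *
        {q | |modulation a q| ≤ J₂}.indicator
          (fun q => ENNReal.ofReal ((1 + |q.1|) ^ (-(1 + a / 2)))) q := by
  by_cases hpq : (p, q) ∈ comparableSet a J₁ J₂ J₃
  · have hq : q ∈ {q | |modulation a q| ≤ J₂} := hpq.2.2.1
    have : 0 ≤ max J₁ (max J₂ J₃) := le_max_of_le_left (by linarith)
    rw [comparableKernel, Set.indicator_of_mem hpq, Set.indicator_of_mem hq,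
      ← ENNReal.ofReal_mul (by positivity), Pi.one_apply, mul_one,
      ← ENNReal.ofReal_pow (outputWeight_nonneg _ _), mul_assoc _ (81 : ℝ)]
    refine ENNReal.ofReal_le_ofReal
      ((outputWeight_sq_le_of_mem_comparableSet ha ha1 hJ₁ hpq).trans ?_)
    gcongr
    exact rpow_neg_le_of_mem_comparableSet (by linarith) (by linarith) hpq
  · simp [comparableKernel, hpq]

lemma lintegral_comparableKernel_one_sq_le_left (ha : 0 < a) (ha1 : a ≤ 1) (hJ₁ : 1 ≤ J₁)
    (z : ℝ × ℝ) :
    ∫⁻ p, comparableKernel a J₁ J₂ J₃ 1 p (z - p) ^ 2 ≤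
      ENNReal.ofReal (41472 * ((max J₁ (max J₂ J₃)) ^ (1 - a / 4) * J₁)) * decayIntegral a := by
  have : 0 ≤ max J₁ (max J₂ J₃) := le_max_of_le_left (by linarith)
  refine (lintegral_mono fun p => comparableKernel_one_sq_le ha ha1 hJ₁).trans ?_
  rw [lintegral_const_mul' _ _ ENNReal.ofReal_ne_top]
  refine (mul_le_mul_right (lintegral_indicator_modulation_le (J := J₁) ha
    (h := fun x => ENNReal.ofReal ((1 + |x|) ^ (-(1 + a / 2)))) (by fun_prop)) _).trans ?_
  rw [← mul_assoc, ← ENNReal.ofReal_mul (by positivity), decayIntegral]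
  exact mul_le_mul_left (ENNReal.ofReal_le_ofReal (by linarith)) _

lemma lintegral_comparableKernel_one_sq_le_right (ha : 0 < a) (ha1 : a ≤ 1) (hJ₁ : 1 ≤ J₁)
    (z : ℝ × ℝ) :
    ∫⁻ p, comparableKernel a J₁ J₂ J₃ 1 p (z - p) ^ 2 ≤
      ENNReal.ofReal (3359232 * ((max J₁ (max J₂ J₃)) ^ (1 - a / 4) * J₂)) * decayIntegral a := by
  have : 0 ≤ max J₁ (max J₂ J₃) := le_max_of_le_left (by linarith)
  refine (lintegral_mono fun p => comparableKernel_one_sq_le_right ha ha1 hJ₁).trans ?_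
  rw [lintegral_const_mul' _ _ ENNReal.ofReal_ne_top, lintegral_sub_left_eq_self
    ({q | |modulation a q| ≤ J₂}.indicator
      fun q => ENNReal.ofReal ((1 + |q.1|) ^ (-(1 + a / 2)))) z]
  refine (mul_le_mul_right (lintegral_indicator_modulation_le (J := J₂) ha
    (h := fun x => ENNReal.ofReal ((1 + |x|) ^ (-(1 + a / 2)))) (by fun_prop)) _).trans ?_
  rw [← mul_assoc, ← ENNReal.ofReal_mul (by positivity), decayIntegral]
  exact mul_le_mul_left (ENNReal.ofReal_le_ofReal (by linarith)) _

/-- One integrates over the modulation strip of an input which does not carry the largest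
modulation, or, if the output carries it, of any input. -/
lemma lintegral_comparableKernel_one_sq_le (ha : 0 < a) (ha1 : a ≤ 1) (hJ₁ : 1 ≤ J₁)
    (hJ₂ : 1 ≤ J₂) (hJ₃ : 1 ≤ J₃) (z : ℝ × ℝ) :
    ∫⁻ p, comparableKernel a J₁ J₂ J₃ 1 p (z - p) ^ 2 ≤
      ENNReal.ofReal (3400000 * (J₁ * J₂ * J₃ * (max J₁ (max J₂ J₃)) ^ (-(a / 4)))) *
        decayIntegral a := by
  have left := lintegral_comparableKernel_one_sq_le_left (J₂ := J₂) (J₃ := J₃) ha ha1 hJ₁ z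
  have right := lintegral_comparableKernel_one_sq_le_right (J₂ := J₂) (J₃ := J₃) ha ha1 hJ₁ z
  have hmax : max J₁ (max J₂ J₃) = J₁ ∨ max J₁ (max J₂ J₃) ≤ J₂ * J₃ :=
    (le_total (max J₂ J₃) J₁).imp max_eq_left fun h => by
      rw [max_eq_right h]
      exact max_le (by nlinarith) (by nlinarith)
  set M := max J₁ (max J₂ J₃)
  have hM : 1 ≤ M := hJ₁.trans (le_max_left _ _)
  have hMpow : M ^ (1 - a / 4) = M * M ^ (-(a / 4)) := by
    rw [sub_eq_add_neg, Real.rpow_add (by linarith), Real.rpow_one]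
  set m := M ^ (-(a / 4))
  have : 0 ≤ m := by positivity
  rcases hmax with h | h
  · refine right.trans (mul_le_mul_left (ENNReal.ofReal_le_ofReal ?_) _)
    calc 3359232 * (M ^ (1 - a / 4) * J₂) = 3359232 * (J₁ * J₂ * 1 * m) := by rw [hMpow, h]; ring
      _ ≤ 3400000 * (J₁ * J₂ * J₃ * m) := by gcongr; norm_num
  · refine left.trans (mul_le_mul_left (ENNReal.ofReal_le_ofReal ?_) _)
    calc 41472 * (M ^ (1 - a / 4) * J₁) = 41472 * (J₁ * M * m) := by rw [hMpow]; ring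
      _ ≤ 3400000 * (J₁ * (J₂ * J₃) * m) := by gcongr; norm_num
      _ = 3400000 * (J₁ * J₂ * J₃ * m) := by ring

lemma lintegral_sq_comparable_le (ha : 0 < a) (ha1 : a ≤ 1) (hJ₁ : 1 ≤ J₁) (hJ₂ : 1 ≤ J₂)
    (hJ₃ : 1 ≤ J₃) {f g : ℝ × ℝ → ℝ≥0∞} (hf : Measurable f) (hg : Measurable g) :
    ∫⁻ z, (∫⁻ p, comparableKernel a J₁ J₂ J₃ g p (z - p) * f p) ^ 2 ≤
      ENNReal.ofReal (3400000 * (J₁ * J₂ * J₃ * (max J₁ (max J₂ J₃)) ^ (-(a / 4)))) *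
        decayIntegral a * (∫⁻ q, g q ^ 2) * ∫⁻ p, f p ^ 2 :=
  lintegral_sq_convolution_le_of_schur
    (k₁ := fun p q => comparableKernel a J₁ J₂ J₃ 1 p q ^ 2) (k₂ := fun _ q => g q ^ 2)
    ((measurable_comparableKernel ha measurable_one).pow_const 2)
    ((hg.comp measurable_snd).pow_const 2) (fun p q => (comparableKernel_sq g p q).le)
    (lintegral_comparableKernel_one_sq_le ha ha1 hJ₁ hJ₂ hJ₃) (fun _ => le_rfl) hf

end Comparable

/-! ### Dyadic scales and pieces -/

/-- The weight `2^{jb}` of the `j`-th dyadic block, as an extended nonnegative real. -/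
def dyadicScale (b : ℝ) (j : ℕ) : ℝ≥0∞ := ENNReal.ofReal ((2 : ℝ) ^ ((j : ℝ) * b))

/-- The radius `2 * 2^j` of an interval containing the support of the cutoff `χ_j`. -/
def dyadicRadius (j : ℕ) : ℝ := 2 * 2 ^ j

lemma one_le_dyadicRadius (j : ℕ) : 1 ≤ dyadicRadius j := by
  have : (1 : ℝ) ≤ 2 ^ j := one_le_pow₀ (by norm_num)
  unfold dyadicRadius
  linarith

lemma dyadicRadius_pos (j : ℕ) : 0 < dyadicRadius j :=
  one_pos.trans_le (one_le_dyadicRadius j)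

lemma dyadicRadius_eq_rpow (j : ℕ) : dyadicRadius j = 2 * (2 : ℝ) ^ ((j : ℝ) * 1) := by
  rw [dyadicRadius, mul_one, Real.rpow_natCast]

lemma dyadicScale_add (b c : ℝ) (j : ℕ) :
    dyadicScale (b + c) j = dyadicScale b j * dyadicScale c j := by
  rw [dyadicScale, mul_add, Real.rpow_add two_pos, ENNReal.ofReal_mul (by positivity)]
  rfl

lemma dyadicScale_rpow (b : ℝ) (j : ℕ) {r : ℝ} (hr : 0 ≤ r) :
    dyadicScale b j ^ r = dyadicScale (b * r) j := by
  rw [dyadicScale, ENNReal.ofReal_rpow_of_nonneg (by positivity) hr, ← Real.rpow_mul two_pos.le,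
    mul_assoc]
  rfl

lemma dyadicScale_eq_pow (b : ℝ) (j : ℕ) :
    dyadicScale b j = ENNReal.ofReal ((2 : ℝ) ^ b) ^ j := by
  rw [dyadicScale, ← ENNReal.ofReal_pow (by positivity), mul_comm, Real.rpow_mul two_pos.le,
    Real.rpow_natCast]

lemma tsum_dyadicScale_lt_top {b : ℝ} (hb : b < 0) : ∑' j, dyadicScale b j < ∞ := by
  simp_rw [dyadicScale_eq_pow]
  rw [ENNReal.tsum_geometric, ENNReal.inv_lt_top, tsub_pos_iff_lt, ← ENNReal.ofReal_one]
  exact (ENNReal.ofReal_lt_ofReal_iff one_pos).mpr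
    (Real.rpow_lt_one_of_one_lt_of_neg one_lt_two hb)

section Cutoffs
variable {χ₀ χ : ℝ → ℝ}

lemma chiJ_mem_Icc (hχ : DyadicCutoffs χ₀ χ) (j : ℕ) (z : ℝ) :
    chiJ χ₀ χ j z ∈ Set.Icc (0 : ℝ) 1 := by
  unfold chiJ
  split_ifs
  · exact hχ.mem0 z
  · exact hχ.mem1 _

lemma contDiff_chiJ (hχ : DyadicCutoffs χ₀ χ) (j : ℕ) :
    ContDiff ℝ (⊤ : ℕ∞) (chiJ χ₀ χ j) := by
  unfold chiJ
  split_ifs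
  · exact hχ.smooth0
  · exact hχ.smooth1.comp (contDiff_const.mul contDiff_id)

lemma abs_le_dyadicRadius_of_chiJ_ne_zero (hχ : DyadicCutoffs χ₀ χ) {j : ℕ} {z : ℝ}
    (h : chiJ χ₀ χ j z ≠ 0) : |z| ≤ dyadicRadius j := by
  unfold dyadicRadius
  unfold chiJ at h
  split_ifs at h with hj
  · subst hj
    by_contra! hz
    exact h (hχ.supp0 z (by simpa using hz))
  · have hz := (hχ.supp1 _ h).2
    rw [abs_mul, abs_of_pos (by positivity), Real.rpow_neg two_pos.le, Real.rpow_natCast,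
      inv_mul_lt_iff₀ (by positivity)] at hz
    linarith

lemma two_pow_le_of_chiJ_ne_zero (hχ : DyadicCutoffs χ₀ χ) {j : ℕ} (hj : j ≠ 0) {z : ℝ}
    (h : chiJ χ₀ χ j z ≠ 0) : 2 ^ j ≤ 2 * |z| := by
  rw [chiJ, if_neg hj] at h
  have hz := (hχ.supp1 _ h).1
  rw [abs_mul, abs_of_pos (by positivity), Real.rpow_neg two_pos.le, Real.rpow_natCast,
    lt_inv_mul_iff₀ (by positivity)] at hz
  linarith

lemma tsum_ofReal_chiJ (hχ : DyadicCutoffs χ₀ χ) (z : ℝ) :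
    ∑' j, ENNReal.ofReal (chiJ χ₀ χ j z) = 1 := by
  have hsum := hχ.partition z
  have hsummable : Summable fun j => chiJ χ₀ χ j z := by
    by_contra hs
    rw [tsum_eq_zero_of_not_summable hs] at hsum
    exact zero_ne_one hsum
  rw [← ENNReal.ofReal_tsum_of_nonneg (fun j => (chiJ_mem_Icc hχ j z).1) hsummable, hsum,
    ENNReal.ofReal_one]

/-- The square root of the `j`-th cutoff in the modulation. It is the natural localization for the
`L²`-based norms, whose definition has the cutoff inside the integral of the square. -/
def sqrtCutoff (a : ℝ) (χ₀ χ : ℝ → ℝ) (j : ℕ) (z : ℝ × ℝ) : ℝ≥0∞ :=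
  ENNReal.ofReal (chiJ χ₀ χ j (modulation a z)) ^ (1 / 2 : ℝ)

/-- The Sobolev weight `(1 + |ξ|)^s` at the frequency `z = (ξ, λ)`. -/
def sobolevWeight (s : ℝ) (z : ℝ × ℝ) : ℝ≥0∞ := ENNReal.ofReal ((1 + |z.1|) ^ s)

/-- The `j`-th dyadic piece of `F`, carrying the Sobolev weight of order `s`. -/
def dyadicPiece (a : ℝ) (χ₀ χ : ℝ → ℝ) (s : ℝ) (j : ℕ) (F : ℝ × ℝ → ℝ≥0∞) (z : ℝ × ℝ) : ℝ≥0∞ :=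
  sqrtCutoff a χ₀ χ j z * (sobolevWeight s z * F z)

/-- The `X^b_s` norm on the Fourier side, for nonnegative functions, with values in `[0, ∞]`. -/
def eXnorm (a : ℝ) (χ₀ χ : ℝ → ℝ) (b s : ℝ) (F : ℝ × ℝ → ℝ≥0∞) : ℝ≥0∞ :=
  ∑' j : ℕ, dyadicScale b j * eLpNorm (dyadicPiece a χ₀ χ s j F) 2 volume

variable {a : ℝ}

lemma measurable_sqrtCutoff (ha : 0 < a) (hχ : DyadicCutoffs χ₀ χ) (j : ℕ) :
    Measurable (sqrtCutoff a χ₀ χ j) := by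
  have := (contDiff_chiJ hχ j).continuous.measurable
  have := measurable_modulation ha
  unfold sqrtCutoff
  fun_prop

@[fun_prop]
lemma measurable_sobolevWeight (s : ℝ) : Measurable (sobolevWeight s) := by
  unfold sobolevWeight
  fun_prop

lemma measurable_dyadicPiece (ha : 0 < a) (hχ : DyadicCutoffs χ₀ χ) (s : ℝ) (j : ℕ)
    {F : ℝ × ℝ → ℝ≥0∞} (hF : Measurable F) : Measurable (dyadicPiece a χ₀ χ s j F) :=
  (measurable_sqrtCutoff ha hχ j).mul ((measurable_sobolevWeight s).mul hF)

lemma ofReal_chiJ_le_one (hχ : DyadicCutoffs χ₀ χ) (j : ℕ) (z : ℝ) :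
    ENNReal.ofReal (chiJ χ₀ χ j z) ≤ 1 :=
  ENNReal.ofReal_le_one.mpr (chiJ_mem_Icc hχ j z).2

lemma sqrtCutoff_le_one (hχ : DyadicCutoffs χ₀ χ) (j : ℕ) (z : ℝ × ℝ) :
    sqrtCutoff a χ₀ χ j z ≤ 1 :=
  ENNReal.rpow_le_one (ofReal_chiJ_le_one hχ j _) (by norm_num)

lemma one_le_tsum_sqrtCutoff (hχ : DyadicCutoffs χ₀ χ) (z : ℝ × ℝ) :
    1 ≤ ∑' j, sqrtCutoff a χ₀ χ j z := by
  rw [← tsum_ofReal_chiJ hχ (modulation a z)]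
  refine ENNReal.tsum_le_tsum fun j => ?_
  simpa only [sqrtCutoff, ENNReal.rpow_one] using
    ENNReal.rpow_le_rpow_of_exponent_ge (ofReal_chiJ_le_one hχ j (modulation a z))
      (by norm_num : (1 / 2 : ℝ) ≤ 1)

lemma le_tsum_sqrtCutoff_mul (hχ : DyadicCutoffs χ₀ χ) (z : ℝ × ℝ) (c : ℝ≥0∞) :
    c ≤ ∑' j, sqrtCutoff a χ₀ χ j z * c := by
  rw [ENNReal.tsum_mul_right]
  exact le_mul_of_one_le_left' (one_le_tsum_sqrtCutoff hχ z)

lemma abs_modulation_le_of_sqrtCutoff_ne_zero (hχ : DyadicCutoffs χ₀ χ) {j : ℕ} {z : ℝ × ℝ}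
    (h : sqrtCutoff a χ₀ χ j z ≠ 0) : |modulation a z| ≤ dyadicRadius j :=
  abs_le_dyadicRadius_of_chiJ_ne_zero hχ fun h0 => h (by simp [sqrtCutoff, h0])

lemma eXnorm_le_of_dyadicBlocks {b s : ℝ} {C : ℝ≥0∞} {A B γ : ℕ → ℝ≥0∞}
    {T : ℝ × ℝ → ℝ≥0∞} {K : ℕ → ℕ → ℕ → ℝ × ℝ → ℝ≥0∞} (hK : ∀ i j k, Measurable (K i j k))
    (hT : ∀ k z, dyadicPiece a χ₀ χ s k T z ≤ ∑' i, ∑' j, K i j k z)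
    (hb : ∀ i j k, dyadicScale b k * eLpNorm (K i j k) 2 volume ≤ C * γ k * A i * B j) :
    eXnorm a χ₀ χ b s T ≤ C * (∑' k, γ k) * (∑' i, A i) * ∑' j, B j := by
  have hpiece (k : ℕ) : eLpNorm (dyadicPiece a χ₀ χ s k T) 2 volume ≤
      ∑' i, ∑' j, eLpNorm (K i j k) 2 volume := by
    refine (eLpNorm_mono_enorm (g := fun z => ∑' i, ∑' j, K i j k z)
      fun z => by simpa only [enorm_eq_self] using hT k z).trans ?_
    refine (eLpNorm_tsum_le (by norm_num) (by norm_num) fun i => .tsum fun j => hK i j k).trans ?_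
    exact ENNReal.tsum_le_tsum fun i =>
      eLpNorm_tsum_le (by norm_num) (by norm_num) fun j => hK i j k
  calc eXnorm a χ₀ χ b s T
      ≤ ∑' k, dyadicScale b k * ∑' i, ∑' j, eLpNorm (K i j k) 2 volume :=
        ENNReal.tsum_le_tsum fun k => mul_le_mul_right (hpiece k) _
    _ = ∑' k, ∑' i, ∑' j, dyadicScale b k * eLpNorm (K i j k) 2 volume := by
        simp_rw [ENNReal.tsum_mul_left]
    _ ≤ ∑' k, ∑' i, ∑' j, C * γ k * A i * B j :=
        ENNReal.tsum_le_tsum fun k => ENNReal.tsum_le_tsum fun i => ENNReal.tsum_le_tsum (hb i · k)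
    _ = C * (∑' k, γ k) * (∑' i, A i) * ∑' j, B j := by
        simp_rw [ENNReal.tsum_mul_left, ENNReal.tsum_mul_right, ENNReal.tsum_mul_left]
        rw [ENNReal.tsum_mul_right, ENNReal.tsum_mul_left]

end Cutoffs

/-! ### Sobolev weights on interacting frequencies -/

lemma rpow_le_mul_rpow_of_le_mul {c s x y : ℝ} (hx : 0 ≤ x) (hy : 0 ≤ y) (hc : 1 ≤ c)
    (hs : 0 ≤ s) (hs1 : s ≤ 1) (h : x ≤ c * y) : x ^ s ≤ c * y ^ s := by
  have hc0 : 0 ≤ c := zero_le_one.trans hc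
  calc x ^ s ≤ (c * y) ^ s := Real.rpow_le_rpow hx h hs
    _ = c ^ s * y ^ s := Real.mul_rpow hc0 hy
    _ ≤ c * y ^ s := by gcongr; exact Real.rpow_le_self_of_one_le hc hs1

lemma rpow_le_mul_rpow_of_le_mul_of_le_mul {c s x y : ℝ} (hx : 0 < x) (hy : 0 < y) (hc : 1 ≤ c)
    (hs : |s| ≤ 1) (hxy : x ≤ c * y) (hyx : y ≤ c * x) : x ^ s ≤ c * y ^ s := by
  obtain ⟨hs', hs1⟩ := abs_le.mp hs
  rcases le_total 0 s with h | h
  · exact rpow_le_mul_rpow_of_le_mul hx.le hy.le hc h hs1 hxy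
  · have hinv := rpow_le_mul_rpow_of_le_mul hy.le hx.le hc (neg_nonneg.2 h) (by linarith) hyx
    rw [Real.rpow_neg hx.le, Real.rpow_neg hy.le] at hinv
    rwa [← div_eq_mul_inv, le_div_iff₀ (by positivity), inv_mul_le_iff₀ (by positivity),
      mul_comm] at hinv

lemma one_add_abs_add_rpow_le {s σ x y : ℝ} (hσ : 0 ≤ σ) (hσ1 : σ ≤ 1) (hs : s = σ ∨ s = -σ)
    (hxy : |x + y| ≤ 4 * |x|) (hx : |x| ≤ 8 * |y| + 8) :
    (1 + |x + y|) ^ (s + σ) ≤ 36 * ((1 + |y|) ^ σ * (1 + |x|) ^ s) := by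
  have := abs_nonneg x
  have hy0 := abs_nonneg y
  rcases hs with rfl | rfl
  · have houtput_snd : (1 + |x + y|) ^ s ≤ 9 * (1 + |y|) ^ s :=
      rpow_le_mul_rpow_of_le_mul (by positivity) (by positivity) (by norm_num) hσ hσ1
        (by linarith [abs_add_le x y])
    have houtput_fst : (1 + |x + y|) ^ s ≤ 4 * (1 + |x|) ^ s :=
      rpow_le_mul_rpow_of_le_mul (by positivity) (by positivity) (by norm_num) hσ hσ1 (by linarith)
    calc (1 + |x + y|) ^ (s + s) = (1 + |x + y|) ^ s * (1 + |x + y|) ^ s :=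
          Real.rpow_add (by positivity) _ _
      _ ≤ 9 * (1 + |y|) ^ s * (4 * (1 + |x|) ^ s) := by gcongr
      _ = 36 * ((1 + |y|) ^ s * (1 + |x|) ^ s) := by ring
  · have hfst_snd : (1 + |x|) ^ σ ≤ 9 * (1 + |y|) ^ σ :=
      rpow_le_mul_rpow_of_le_mul (by positivity) (by positivity) (by norm_num) hσ hσ1 (by linarith)
    have : 0 ≤ (1 + |y|) ^ σ := by positivity
    rw [neg_add_cancel, Real.rpow_zero, Real.rpow_neg (by positivity), ← div_eq_mul_inv,
      ← mul_div_assoc, le_div_iff₀ (by positivity)]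
    linarith

lemma sobolevWeight_mul_abs_le_of_mem_highLowSet {a s J₁ J₂ J₃ : ℝ} (hs : |s| ≤ 1)
    {p q : ℝ × ℝ} (hpq : (p, q) ∈ highLowSet a J₁ J₂ J₃) :
    sobolevWeight s (p + q) * ENNReal.ofReal |p.1 + q.1| ≤
      36 * (ENNReal.ofReal |p.1| * sobolevWeight s p) := by
  obtain ⟨hhigh, houtput, -⟩ := highLow_frequency_bounds hpq
  simp only at hhigh houtput
  have hweight : (1 + |p.1 + q.1|) ^ s ≤ 8 / 7 * (1 + |p.1|) ^ s :=
    rpow_le_mul_rpow_of_le_mul_of_le_mul (by positivity) (by positivity) (by norm_num) hs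
      (by linarith) (by linarith)
  have hreal : (1 + |p.1 + q.1|) ^ s * |p.1 + q.1| ≤ 36 * (|p.1| * (1 + |p.1|) ^ s) :=
    calc (1 + |p.1 + q.1|) ^ s * |p.1 + q.1| ≤ 8 / 7 * (1 + |p.1|) ^ s * (8 / 7 * |p.1|) := by
          gcongr
      _ = 64 / 49 * (|p.1| * (1 + |p.1|) ^ s) := by ring
      _ ≤ 36 * (|p.1| * (1 + |p.1|) ^ s) := by gcongr; norm_num
  have h := ENNReal.ofReal_le_ofReal hreal
  rwa [ENNReal.ofReal_mul (by positivity), ENNReal.ofReal_mul (by positivity),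
    ENNReal.ofReal_mul (by positivity), ENNReal.ofReal_ofNat] at h

lemma sobolevWeight_mul_abs_le_of_mem_comparableSet {a s J₁ J₂ J₃ : ℝ} (ha : -1 ≤ a) (ha1 : a ≤ 1)
    (hs : s = 1 / 2 + a / 2 ∨ s = -(1 / 2 + a / 2)) {p q : ℝ × ℝ}
    (hpq : (p, q) ∈ comparableSet a J₁ J₂ J₃) (houtput : |p.1 + q.1| ≤ 4 * |p.1|) :
    sobolevWeight s (p + q) * ENNReal.ofReal |p.1 + q.1| ≤
      36 * (ENNReal.ofReal (outputWeight a (p.1 + q.1)) *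
        (sobolevWeight (1 / 2 + a / 2) q * sobolevWeight s p)) := by
  have hfreq : |p.1| ≤ 8 * |q.1| + 8 := by
    rcases hpq.1 with h | h <;> linarith [h.1, abs_nonneg q.1]
  set σ := 1 / 2 + a / 2 with hσ
  have hsplit : (1 + |p.1 + q.1|) ^ s * |p.1 + q.1| =
      outputWeight a (p.1 + q.1) * (1 + |p.1 + q.1|) ^ (s + σ) := by
    rw [outputWeight, mul_assoc, ← Real.rpow_add (by positivity), mul_comm]
    congr 2
    ring
  have hreal : (1 + |p.1 + q.1|) ^ s * |p.1 + q.1| ≤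
      36 * (outputWeight a (p.1 + q.1) * ((1 + |q.1|) ^ σ * (1 + |p.1|) ^ s)) := by
    rw [hsplit, mul_left_comm]
    exact mul_le_mul_of_nonneg_left
      (one_add_abs_add_rpow_le (by linarith) (by linarith) hs houtput hfreq)
      (outputWeight_nonneg _ _)
  have h := ENNReal.ofReal_le_ofReal hreal
  rwa [ENNReal.ofReal_mul (by positivity), ENNReal.ofReal_mul (by positivity),
    ENNReal.ofReal_mul (outputWeight_nonneg _ _), ENNReal.ofReal_mul (by positivity),
    ENNReal.ofReal_ofNat] at h

/-! ### Dyadic blocks of the derivative of a product -/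

/-- The twisted convolution `z ↦ ∫ k(p, z - p) f(p) dp` with the kernel `k`. -/
def kernelConv (k : ℝ × ℝ → ℝ × ℝ → ℝ≥0∞) (f : ℝ × ℝ → ℝ≥0∞) (z : ℝ × ℝ) : ℝ≥0∞ :=
  ∫⁻ p, k p (z - p) * f p

lemma measurable_kernelConv_integrand {k : ℝ × ℝ → ℝ × ℝ → ℝ≥0∞} {f : ℝ × ℝ → ℝ≥0∞}
    (hk : Measurable (Function.uncurry k)) (hf : Measurable f) :
    Measurable fun w : (ℝ × ℝ) × (ℝ × ℝ) => k w.2 (w.1 - w.2) * f w.2 :=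
  (hk.comp (by fun_prop : Measurable fun w : (ℝ × ℝ) × (ℝ × ℝ) => (w.2, w.1 - w.2))).mul
    (hf.comp measurable_snd)

lemma measurable_kernelConv {k : ℝ × ℝ → ℝ × ℝ → ℝ≥0∞} {f : ℝ × ℝ → ℝ≥0∞}
    (hk : Measurable (Function.uncurry k)) (hf : Measurable f) : Measurable (kernelConv k f) :=
  (measurable_kernelConv_integrand hk hf).lintegral_prod_right'

lemma kernelConv_add {k k' : ℝ × ℝ → ℝ × ℝ → ℝ≥0∞} {f : ℝ × ℝ → ℝ≥0∞}
    (hk : Measurable (Function.uncurry k)) (hf : Measurable f) (z : ℝ × ℝ) :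
    kernelConv (k + k') f z = kernelConv k f z + kernelConv k' f z := by
  simp only [kernelConv, Pi.add_apply, add_mul]
  exact lintegral_add_left ((measurable_kernelConv_integrand hk hf).comp measurable_prodMk_left) _

lemma lintegral_kernelConv_tsum {c : ℝ≥0∞} {k : ℕ → ℕ → ℝ × ℝ → ℝ × ℝ → ℝ≥0∞}
    {f : ℕ → ℝ × ℝ → ℝ≥0∞} (hk : ∀ i j, Measurable (Function.uncurry (k i j)))
    (hf : ∀ i, Measurable (f i)) (z : ℝ × ℝ) :
    ∫⁻ p, ∑' i, ∑' j, c * (k i j p (z - p) * f i p) =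
      ∑' i, ∑' j, c * kernelConv (k i j) (f i) z := by
  have hmeas (i j : ℕ) : Measurable fun p => k i j p (z - p) * f i p :=
    (measurable_kernelConv_integrand (hk i j) (hf i)).comp measurable_prodMk_left
  rw [lintegral_tsum fun i => by fun_prop]
  refine tsum_congr fun i => ?_
  rw [lintegral_tsum fun j => by fun_prop]
  exact tsum_congr fun j => lintegral_const_mul c (hmeas i j)

/-- Half of the gain `M ^ (-a/4)` in the largest modulation pays for `b < 1/2`. -/
lemma dyadicScale_mul_rpow_half_le {a c : ℝ} (ha : 0 < a) (hc : 0 ≤ c) (i j k : ℕ) :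
    dyadicScale (-(1 / 2 - a / 16)) k * ENNReal.ofReal (c * (dyadicRadius i * dyadicRadius j *
      dyadicRadius k * max (dyadicRadius i) (max (dyadicRadius j) (dyadicRadius k)) ^ (-(a / 4)))) ^
        (1 / 2 : ℝ) ≤
      ENNReal.ofReal (c * 8) ^ (1 / 2 : ℝ) * dyadicScale (-(a / 16)) k * dyadicScale (1 / 2) i *
        dyadicScale (1 / 2) j := by
  have hmax : max (dyadicRadius i) (max (dyadicRadius j) (dyadicRadius k)) ^ (-(a / 4)) ≤
      (2 : ℝ) ^ ((k : ℝ) * -(a / 4)) := by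
    rw [Real.rpow_mul two_pos.le, Real.rpow_natCast]
    refine Real.rpow_le_rpow_of_nonpos (by positivity) ?_ (by linarith)
    refine le_trans ?_ ((le_max_right _ _).trans (le_max_right _ _))
    exact le_mul_of_one_le_left (by positivity) one_le_two
  have hprod : ENNReal.ofReal (c * (dyadicRadius i * dyadicRadius j * dyadicRadius k *
      max (dyadicRadius i) (max (dyadicRadius j) (dyadicRadius k)) ^ (-(a / 4)))) ≤
      ENNReal.ofReal (c * 8) * (dyadicScale 1 i * dyadicScale 1 j * dyadicScale 1 k *
        dyadicScale (-(a / 4)) k) := by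
    simp only [dyadicScale]
    rw [← ENNReal.ofReal_mul (by positivity), ← ENNReal.ofReal_mul (by positivity),
      ← ENNReal.ofReal_mul (by positivity), ← ENNReal.ofReal_mul (by positivity)]
    refine ENNReal.ofReal_le_ofReal (le_of_le_of_eq (mul_le_mul_of_nonneg_left
      (mul_le_mul_of_nonneg_left hmax ?_) hc) ?_)
    · have := dyadicRadius_pos i
      have := dyadicRadius_pos j
      have := dyadicRadius_pos k
      positivity
    · rw [dyadicRadius_eq_rpow, dyadicRadius_eq_rpow, dyadicRadius_eq_rpow]
      ring
  have hsqrt := ENNReal.rpow_le_rpow hprod (by norm_num : (0 : ℝ) ≤ 1 / 2)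
  simp only [ENNReal.mul_rpow_of_nonneg _ _ (by norm_num : (0 : ℝ) ≤ 1 / 2),
    dyadicScale_rpow _ _ (by norm_num : (0 : ℝ) ≤ 1 / 2)] at hsqrt
  have hgain : dyadicScale (-(a / 16)) k = dyadicScale (-(1 / 2 - a / 16)) k *
      dyadicScale (1 * (1 / 2)) k * dyadicScale (-(a / 4) * (1 / 2)) k := by
    rw [← dyadicScale_add, ← dyadicScale_add]
    congr 1
    ring
  refine (mul_le_mul_right hsqrt _).trans_eq ?_
  rw [hgain, one_mul]
  ring

lemma dyadicScale_mul_eLpNorm_kernelConv_le {a c : ℝ} (ha : 0 < a) (hc : 0 ≤ c) {i j k : ℕ}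
    {κ : ℝ × ℝ → ℝ × ℝ → ℝ≥0∞} {f : ℝ × ℝ → ℝ≥0∞} {S : ℝ≥0∞}
    (h : ∫⁻ z, kernelConv κ f z ^ 2 ≤ ENNReal.ofReal (c * (dyadicRadius i * dyadicRadius j *
      dyadicRadius k * max (dyadicRadius i) (max (dyadicRadius j) (dyadicRadius k)) ^ (-(a / 4)))) *
        S ^ 2 * ∫⁻ p, f p ^ 2) :
    dyadicScale (-(1 / 2 - a / 16)) k * eLpNorm (kernelConv κ f) 2 volume ≤
      ENNReal.ofReal (c * 8) ^ (1 / 2 : ℝ) * dyadicScale (-(a / 16)) k *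
        (dyadicScale (1 / 2) i * eLpNorm f 2 volume) * (dyadicScale (1 / 2) j * S) := by
  have hsqrt := ENNReal.rpow_le_rpow h (by norm_num : (0 : ℝ) ≤ 1 / 2)
  rw [ENNReal.mul_rpow_of_nonneg _ _ (by norm_num), ENNReal.mul_rpow_of_nonneg _ _ (by norm_num),
    ← eLpNorm_two_eq_lintegral, ← eLpNorm_two_eq_lintegral, sq_rpow_half] at hsqrt
  refine (mul_le_mul_right hsqrt _).trans ?_
  rw [mul_assoc (_ ^ _), ← mul_assoc]
  refine (mul_le_mul_left (dyadicScale_mul_rpow_half_le ha hc i j k) _).trans_eq ?_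
  ring

/-- The pairs of frequencies at which the derivative of a product is attributed to the first
factor: the output and the second input are controlled by the first input. -/
def firstDominantSet : Set ((ℝ × ℝ) × (ℝ × ℝ)) :=
  {w | |w.1.1 + w.2.1| ≤ 4 * |w.1.1| ∧ |w.2.1| ≤ 3 * |w.1.1|}

lemma measurableSet_firstDominantSet : MeasurableSet firstDominantSet := by
  have hout : Measurable fun w : (ℝ × ℝ) × (ℝ × ℝ) => |w.1.1 + w.2.1| := by fun_prop
  have hfst : Measurable fun w : (ℝ × ℝ) × (ℝ × ℝ) => |w.1.1| := by fun_prop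
  have hsnd : Measurable fun w : (ℝ × ℝ) × (ℝ × ℝ) => |w.2.1| := by fun_prop
  exact (measurableSet_le hout (hfst.const_mul 4)).inter (measurableSet_le hsnd (hfst.const_mul 3))

lemma mem_highLowSet_or_mem_comparableSet {a J₁ J₂ J₃ : ℝ} {p q : ℝ × ℝ}
    (hpq : (p, q) ∈ firstDominantSet) (h₁ : |modulation a p| ≤ J₁) (h₂ : |modulation a q| ≤ J₂)
    (h₃ : |modulation a (p + q)| ≤ J₃) :
    (p, q) ∈ highLowSet a J₁ J₂ J₃ ∨ (p, q) ∈ comparableSet a J₁ J₂ J₃ := by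
  have hq : |q.1| ≤ 3 * |p.1| := hpq.2
  by_cases hlow : |q.1| ≤ |p.1| / 8 ∧ 1 ≤ |p.1|
  · exact .inl ⟨hlow.1, hlow.2, h₁, h₂, h₃⟩
  · refine .inr ⟨?_, h₁, h₂, h₃⟩
    have := abs_nonneg p.1
    simp only
    by_cases hp : 1 ≤ |p.1|
    · have : ¬ |q.1| ≤ |p.1| / 8 := fun h => hlow ⟨h, hp⟩
      exact .inl ⟨by linarith, by linarith⟩
    · exact .inr ⟨by linarith, by linarith⟩

section Core
variable {χ₀ χ : ℝ → ℝ} {a s : ℝ} {F V : ℝ × ℝ → ℝ≥0∞} {G : ℕ → ℝ → ℝ≥0∞}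

/-- The part of the derivative of a product, on the Fourier side, in which the first factor carries
the derivative. -/
def paraproduct (F V : ℝ × ℝ → ℝ≥0∞) (z : ℝ × ℝ) : ℝ≥0∞ :=
  ENNReal.ofReal |z.1| * ∫⁻ p, firstDominantSet.indicator (fun w => F w.1 * V w.2) (p, z - p)

/-- The kernel of the block of the paraproduct with modulation indices `i`, `j` of the inputs and
`k` of the output, where the `j`-th piece of the second factor is the function `g` and has the
majorant `G`. -/
def blockKernel (a : ℝ) (G : ℝ → ℝ≥0∞) (g : ℝ × ℝ → ℝ≥0∞) (i j k : ℕ) :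
    ℝ × ℝ → ℝ × ℝ → ℝ≥0∞ :=
  highLowKernel a (dyadicRadius i) (dyadicRadius j) (dyadicRadius k) 1 G +
    comparableKernel a (dyadicRadius i) (dyadicRadius j) (dyadicRadius k) g

lemma measurable_blockKernel (ha : 0 < a) {G : ℝ → ℝ≥0∞} {g : ℝ × ℝ → ℝ≥0∞} (hG : Measurable G)
    (hg : Measurable g) (i j k : ℕ) : Measurable (Function.uncurry (blockKernel a G g i j k)) :=
  (measurable_highLowKernel ha 1 hG).add (measurable_comparableKernel ha hg)

/-- The constant of the bound for a single block of the paraproduct. -/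
def blockConst (a : ℝ) : ℝ≥0∞ :=
  ENNReal.ofReal (12000000 * 8) ^ (1 / 2 : ℝ) +
    ENNReal.ofReal (3400000 * 8) ^ (1 / 2 : ℝ) * decayIntegral a ^ (1 / 2 : ℝ)

lemma dyadicScale_mul_eLpNorm_block_le (ha : 0 < a) (ha1 : a ≤ 1) {G : ℝ → ℝ≥0∞}
    {f g : ℝ × ℝ → ℝ≥0∞} (hG : Measurable G) (hf : Measurable f) (hg : Measurable g)
    (i j k : ℕ) :
    dyadicScale (-(1 / 2 - a / 16)) k *
        eLpNorm (kernelConv (blockKernel a G g i j k) f) 2 volume ≤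
      blockConst a * dyadicScale (-(a / 16)) k * (dyadicScale (1 / 2) i * eLpNorm f 2 volume) *
        (dyadicScale (1 / 2) j * (eLpNorm G 2 volume + eLpNorm g 2 volume)) := by
  have hi := one_le_dyadicRadius i
  have hj := one_le_dyadicRadius j
  have hk := one_le_dyadicRadius k
  have hhighLow := dyadicScale_mul_eLpNorm_kernelConv_le (c := 12000000) ha (by norm_num)
    (S := eLpNorm G 2 volume)
    ((lintegral_sq_highLow_le ha ha1 hi hj hk hf hG).trans_eq (by rw [eLpNorm_two_sq]))
  have hcomparable := dyadicScale_mul_eLpNorm_kernelConv_le (c := 3400000) ha (by norm_num)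
    (S := decayIntegral a ^ (1 / 2 : ℝ) * eLpNorm g 2 volume)
    ((lintegral_sq_comparable_le ha ha1 hi hj hk hf hg).trans_eq (by
      rw [mul_pow, eLpNorm_two_sq, rpow_half_sq, ← mul_assoc (ENNReal.ofReal _)]))
  have hmeas := measurable_highLowKernel (J₁ := dyadicRadius i) (J₂ := dyadicRadius j)
    (J₃ := dyadicRadius k) ha 1 hG
  have hmeas' := measurable_comparableKernel (J₁ := dyadicRadius i) (J₂ := dyadicRadius j)
    (J₃ := dyadicRadius k) ha hg
  rw [blockKernel, funext (kernelConv_add hmeas hf)]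
  refine (mul_le_mul_right (eLpNorm_add_le (measurable_kernelConv hmeas hf).aestronglyMeasurable
    (measurable_kernelConv hmeas' hf).aestronglyMeasurable (by norm_num)) _).trans ?_
  rw [mul_add]
  refine (add_le_add hhighLow hcomparable).trans ?_
  rw [blockConst]
  generalize ENNReal.ofReal (12000000 * 8) ^ (1 / 2 : ℝ) = c₁
  generalize ENNReal.ofReal (3400000 * 8) ^ (1 / 2 : ℝ) = c₂
  set A := dyadicScale (-(a / 16)) k * (dyadicScale (1 / 2) i * eLpNorm f 2 volume) *
    dyadicScale (1 / 2) j
  calc _ = A * (c₁ * eLpNorm G 2 volume +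
        c₂ * decayIntegral a ^ (1 / 2 : ℝ) * eLpNorm g 2 volume) := by ring
    _ ≤ A * ((c₁ + c₂ * decayIntegral a ^ (1 / 2 : ℝ)) * eLpNorm G 2 volume +
        (c₁ + c₂ * decayIntegral a ^ (1 / 2 : ℝ)) * eLpNorm g 2 volume) := by
        gcongr
        · exact le_self_add
        · exact le_add_self
    _ = _ := by ring

lemma sobolevWeight_mul_le_highLowKernel {J₁ J₂ J₃ : ℝ} (hs : |s| ≤ 1) {p q : ℝ × ℝ}
    (hpq : (p, q) ∈ highLowSet a J₁ J₂ J₃) {H : ℝ → ℝ≥0∞} {u v : ℝ≥0∞} (hv : v ≤ H q.2) :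
    sobolevWeight s (p + q) * ENNReal.ofReal |p.1 + q.1| * (u * v) ≤
      36 * (highLowKernel a J₁ J₂ J₃ 1 H p q * (sobolevWeight s p * u)) := by
  calc _ ≤ 36 * (ENNReal.ofReal |p.1| * sobolevWeight s p) * (u * H q.2) :=
        mul_le_mul' (sobolevWeight_mul_abs_le_of_mem_highLowSet hs hpq) (mul_le_mul_right hv u)
    _ = _ := by
        simp only [highLowKernel, Set.indicator_of_mem hpq, Real.rpow_one]
        ring

lemma sobolevWeight_mul_le_comparableKernel {J₁ J₂ J₃ : ℝ} (ha : -1 ≤ a) (ha1 : a ≤ 1)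
    (hs : s = 1 / 2 + a / 2 ∨ s = -(1 / 2 + a / 2)) {p q : ℝ × ℝ}
    (hpq : (p, q) ∈ comparableSet a J₁ J₂ J₃) (houtput : |p.1 + q.1| ≤ 4 * |p.1|) {u v : ℝ≥0∞}
    {g : ℝ × ℝ → ℝ≥0∞} (hg : g q = sobolevWeight (1 / 2 + a / 2) q * v) :
    sobolevWeight s (p + q) * ENNReal.ofReal |p.1 + q.1| * (u * v) ≤
      36 * (comparableKernel a J₁ J₂ J₃ g p q * (sobolevWeight s p * u)) := by
  calc _ ≤ 36 * (ENNReal.ofReal (outputWeight a (p.1 + q.1)) *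
          (sobolevWeight (1 / 2 + a / 2) q * sobolevWeight s p)) * (u * v) :=
        mul_le_mul_left (sobolevWeight_mul_abs_le_of_mem_comparableSet ha ha1 hs hpq houtput) _
    _ = _ := by
        simp only [comparableKernel, Set.indicator_of_mem hpq, hg]
        ring

lemma paraproduct_block_le (ha : 0 < a) (ha1 : a ≤ 1) (hχ : DyadicCutoffs χ₀ χ)
    (hs : s = 1 / 2 + a / 2 ∨ s = -(1 / 2 + a / 2))
    (hVG : ∀ j q, sqrtCutoff a χ₀ χ j q * V q ≤ G j q.2) (i j k : ℕ) {p q : ℝ × ℝ}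
    (hpq : (p, q) ∈ firstDominantSet) :
    sqrtCutoff a χ₀ χ k (p + q) * (sobolevWeight s (p + q) * (ENNReal.ofReal |p.1 + q.1| *
      ((sqrtCutoff a χ₀ χ i p * F p) * (sqrtCutoff a χ₀ χ j q * V q)))) ≤
    36 * (blockKernel a (G j) (dyadicPiece a χ₀ χ (1 / 2 + a / 2) j V) i j k p q *
      dyadicPiece a χ₀ χ s i F p) := by
  by_cases hzero : sqrtCutoff a χ₀ χ k (p + q) = 0 ∨ sqrtCutoff a χ₀ χ i p = 0 ∨
      sqrtCutoff a χ₀ χ j q = 0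
  · rcases hzero with h | h | h <;> simp [h]
  push Not at hzero
  have hk := abs_modulation_le_of_sqrtCutoff_ne_zero hχ hzero.1
  have hi := abs_modulation_le_of_sqrtCutoff_ne_zero hχ hzero.2.1
  have hj := abs_modulation_le_of_sqrtCutoff_ne_zero hχ hzero.2.2
  refine ((mul_le_of_le_one_left' (sqrtCutoff_le_one hχ k _)).trans_eq
    (mul_assoc _ _ _).symm).trans ?_
  have hpiece : dyadicPiece a χ₀ χ s i F p = sobolevWeight s p * (sqrtCutoff a χ₀ χ i p * F p) :=
    mul_left_comm _ _ _
  rw [hpiece, blockKernel, Pi.add_apply, Pi.add_apply, add_mul, mul_add]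
  rcases mem_highLowSet_or_mem_comparableSet hpq hi hj hk with hmem | hmem
  · have hs1 : |s| ≤ 1 := by
      rcases hs with rfl | rfl <;> rw [abs_le] <;> constructor <;> linarith
    exact (sobolevWeight_mul_le_highLowKernel hs1 hmem (hVG j q)).trans le_self_add
  · exact (sobolevWeight_mul_le_comparableKernel (by linarith) ha1 hs hmem hpq.1
      (mul_left_comm _ _ _)).trans le_add_self

lemma dyadicPiece_paraproduct_le (ha : 0 < a) (ha1 : a ≤ 1) (hχ : DyadicCutoffs χ₀ χ)
    (hs : s = 1 / 2 + a / 2 ∨ s = -(1 / 2 + a / 2)) (hF : Measurable F) (hV : Measurable V)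
    (hG : ∀ j, Measurable (G j)) (hVG : ∀ j q, sqrtCutoff a χ₀ χ j q * V q ≤ G j q.2) (k : ℕ)
    (z : ℝ × ℝ) :
    dyadicPiece a χ₀ χ s k (paraproduct F V) z ≤ ∑' i, ∑' j, 36 * kernelConv
      (blockKernel a (G j) (dyadicPiece a χ₀ χ (1 / 2 + a / 2) j V) i j k)
      (dyadicPiece a χ₀ χ s i F) z := by
  have hintegrand : Measurable fun p =>
      firstDominantSet.indicator (fun w => F w.1 * V w.2) (p, z - p) :=
    (Measurable.indicator (f := fun w : (ℝ × ℝ) × (ℝ × ℝ) => F w.1 * V w.2) (by fun_prop)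
      measurableSet_firstDominantSet).comp (by fun_prop : Measurable fun p => (p, z - p))
  have hblocks (p : ℝ × ℝ) : sqrtCutoff a χ₀ χ k z * (sobolevWeight s z *
      (ENNReal.ofReal |z.1| * firstDominantSet.indicator (fun w => F w.1 * V w.2) (p, z - p))) ≤
      ∑' i, ∑' j, 36 * (blockKernel a (G j) (dyadicPiece a χ₀ χ (1 / 2 + a / 2) j V) i j k p
        (z - p) * dyadicPiece a χ₀ χ s i F p) := by
    by_cases hp : (p, z - p) ∈ firstDominantSet
    · have hblock := fun i j => paraproduct_block_le ha ha1 hχ hs (F := F) hVG i j k hp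
      rw [add_sub_cancel, Prod.fst_sub, add_sub_cancel] at hblock
      refine le_trans ?_ (ENNReal.tsum_le_tsum fun i => ENNReal.tsum_le_tsum fun j => hblock i j)
      rw [Set.indicator_of_mem hp]
      simp_rw [ENNReal.tsum_mul_left, ENNReal.tsum_mul_right]
      gcongr
      · exact le_mul_of_one_le_left' (one_le_tsum_sqrtCutoff hχ p)
      · exact le_mul_of_one_le_left' (one_le_tsum_sqrtCutoff hχ _)
    · simp [Set.indicator_of_notMem hp]
  calc dyadicPiece a χ₀ χ s k (paraproduct F V) z
      = ∫⁻ p, sqrtCutoff a χ₀ χ k z * (sobolevWeight s z * (ENNReal.ofReal |z.1| *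
          firstDominantSet.indicator (fun w => F w.1 * V w.2) (p, z - p))) := by
        rw [lintegral_const_mul _ (by fun_prop), lintegral_const_mul _ (by fun_prop),
          lintegral_const_mul _ hintegrand]
        rfl
    _ ≤ _ := lintegral_mono hblocks
    _ = _ := lintegral_kernelConv_tsum (fun i j => measurable_blockKernel ha (hG j)
        (measurable_dyadicPiece ha hχ _ j hV) i j k)
        (fun i => measurable_dyadicPiece ha hχ s i hF) z

/-- The constant of the paraproduct estimate. -/
def paraproductConst (a : ℝ) : ℝ≥0∞ := 36 * blockConst a * ∑' k, dyadicScale (-(a / 16)) k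

lemma paraproductConst_lt_top (ha : 0 < a) : paraproductConst a < ∞ := by
  have hroot {x : ℝ≥0∞} (hx : x < ∞) : x ^ (1 / 2 : ℝ) < ∞ :=
    ENNReal.rpow_lt_top_of_nonneg (by norm_num) hx.ne
  refine ENNReal.mul_lt_top (ENNReal.mul_lt_top (by norm_num) ?_)
    (tsum_dyadicScale_lt_top (by linarith))
  exact ENNReal.add_lt_top.mpr ⟨hroot ENNReal.ofReal_lt_top,
    ENNReal.mul_lt_top (hroot ENNReal.ofReal_lt_top) (hroot (decayIntegral_lt_top ha))⟩

theorem eXnorm_paraproduct_le (ha : 0 < a) (ha1 : a ≤ 1) (hχ : DyadicCutoffs χ₀ χ)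
    (hs : s = 1 / 2 + a / 2 ∨ s = -(1 / 2 + a / 2)) (hF : Measurable F) (hV : Measurable V)
    (hG : ∀ j, Measurable (G j)) (hVG : ∀ j q, sqrtCutoff a χ₀ χ j q * V q ≤ G j q.2) :
    eXnorm a χ₀ χ (-(1 / 2 - a / 16)) s (paraproduct F V) ≤
      paraproductConst a * eXnorm a χ₀ χ (1 / 2) s F *
        (∑' j, dyadicScale (1 / 2) j * eLpNorm (G j) 2 volume +
          eXnorm a χ₀ χ (1 / 2) (1 / 2 + a / 2) V) := by
  have hpieceF := fun i => measurable_dyadicPiece ha hχ s i hF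
  have hpieceV := fun j => measurable_dyadicPiece ha hχ (1 / 2 + a / 2) j hV
  have hconv := fun i j k => measurable_kernelConv
    (measurable_blockKernel ha (hG j) (hpieceV j) i j k) (hpieceF i)
  refine (eXnorm_le_of_dyadicBlocks (C := 36 * blockConst a) (γ := dyadicScale (-(a / 16)))
    (A := fun i => dyadicScale (1 / 2) i * eLpNorm (dyadicPiece a χ₀ χ s i F) 2 volume)
    (B := fun j => dyadicScale (1 / 2) j * (eLpNorm (G j) 2 volume +
      eLpNorm (dyadicPiece a χ₀ χ (1 / 2 + a / 2) j V) 2 volume))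
    (fun i j k => (hconv i j k).const_mul 36)
    (dyadicPiece_paraproduct_le ha ha1 hχ hs hF hV hG hVG) fun i j k => ?_).trans_eq ?_
  · rw [eLpNorm_const_mul_ennreal (by norm_num) _ (hconv i j k), mul_left_comm]
    refine (mul_le_mul_right (dyadicScale_mul_eLpNorm_block_le ha ha1 (hG j) (hpieceF i)
      (hpieceV j) i j k) 36).trans_eq ?_
    ring
  · simp only [mul_add, ENNReal.tsum_add, paraproductConst, eXnorm]

end Core

/-! ### The plain product -/

section Product
variable {χ₀ χ : ℝ → ℝ} {a : ℝ}

lemma sobolevWeight_neg_mul (s : ℝ) (z : ℝ × ℝ) : sobolevWeight (-s) z * sobolevWeight s z = 1 := by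
  unfold sobolevWeight
  rw [← ENNReal.ofReal_mul (by positivity), ← Real.rpow_add (by positivity)]
  simp

lemma one_le_sobolevWeight {s : ℝ} (hs : 0 ≤ s) (z : ℝ × ℝ) : 1 ≤ sobolevWeight s z := by
  unfold sobolevWeight
  rw [← ENNReal.ofReal_one]
  exact ENNReal.ofReal_le_ofReal (Real.one_le_rpow (by linarith [abs_nonneg z.1]) hs)

lemma sobolevWeight_neg_le_one {s : ℝ} (hs : 0 ≤ s) (z : ℝ × ℝ) : sobolevWeight (-s) z ≤ 1 := by
  rw [← sobolevWeight_neg_mul s z]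
  exact le_mul_of_one_le_right' (one_le_sobolevWeight hs z)

/-- The kernel of a dyadic block of a plain product: the second factor is `g` with its weight of
order `1 / 2 + a / 2` removed, on the strip of modulation at most `J`. -/
def stripKernel (a J : ℝ) (g : ℝ × ℝ → ℝ≥0∞) (_p q : ℝ × ℝ) : ℝ≥0∞ :=
  {q | |modulation a q| ≤ J}.indicator (sobolevWeight (-(1 / 2 + a / 2))) q * g q

lemma measurable_indicator_sobolevWeight (ha : 0 < a) (J s : ℝ) :
    Measurable ({q | |modulation a q| ≤ J}.indicator (sobolevWeight s)) := by
  have := measurable_modulation ha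
  exact (measurable_sobolevWeight s).indicator (measurableSet_le (by fun_prop) measurable_const)

lemma measurable_stripKernel (ha : 0 < a) (J : ℝ) {g : ℝ × ℝ → ℝ≥0∞} (hg : Measurable g) :
    Measurable (Function.uncurry (stripKernel a J g)) :=
  ((measurable_indicator_sobolevWeight ha J _).mul hg).comp measurable_snd

lemma lintegral_sq_indicator_sobolevWeight_le (ha : 0 < a) (J : ℝ) :
    ∫⁻ q, {q | |modulation a q| ≤ J}.indicator (sobolevWeight (-(1 / 2 + a / 2))) q ^ 2 ≤
      ENNReal.ofReal (2 * J) * decayIntegral a := by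
  refine le_trans (lintegral_mono fun q => ?_) (lintegral_indicator_modulation_le (a := a) (J := J)
    ha (h := fun x => ENNReal.ofReal ((1 + |x|) ^ (-(1 + a / 2)))) (by fun_prop))
  by_cases hq : q ∈ {q | |modulation a q| ≤ J}
  · simp only [Set.indicator_of_mem hq, sobolevWeight]
    rw [← ENNReal.ofReal_pow (by positivity), ← Real.rpow_natCast, ← Real.rpow_mul (by positivity)]
    refine ENNReal.ofReal_le_ofReal (Real.rpow_le_rpow_of_exponent_le ?_ ?_)
    · linarith [abs_nonneg q.1]
    · push_cast
      linarith
  · simp [Set.indicator_of_notMem hq]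

lemma lintegral_sq_kernelConv_stripKernel_le (ha : 0 < a) (J : ℝ) {f g : ℝ × ℝ → ℝ≥0∞}
    (hf : Measurable f) (hg : Measurable g) :
    ∫⁻ z, kernelConv (stripKernel a J g) f z ^ 2 ≤
      (ENNReal.ofReal (2 * J) * decayIntegral a) * (∫⁻ q, g q ^ 2) * ∫⁻ p, f p ^ 2 := by
  have hind := measurable_indicator_sobolevWeight ha J (-(1 / 2 + a / 2))
  refine lintegral_sq_convolution_le_of_schur
    (k₁ := fun _ q => {q | |modulation a q| ≤ J}.indicator (sobolevWeight (-(1 / 2 + a / 2))) q ^ 2)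
    (k₂ := fun _ q => g q ^ 2) (by fun_prop) (by fun_prop) (fun _ _ => (mul_pow _ _ _).le)
    (fun z => ?_) (fun _ => le_rfl) hf
  rw [lintegral_sub_left_eq_self (fun q =>
    {q | |modulation a q| ≤ J}.indicator (sobolevWeight (-(1 / 2 + a / 2))) q ^ 2) z]
  exact lintegral_sq_indicator_sobolevWeight_le ha J

lemma ofReal_two_mul_dyadicRadius_rpow_half (j : ℕ) :
    ENNReal.ofReal (2 * dyadicRadius j) ^ (1 / 2 : ℝ) = 2 * dyadicScale (1 / 2) j := by
  have h : ENNReal.ofReal (2 * dyadicRadius j) = 2 ^ 2 * dyadicScale 1 j := by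
    rw [dyadicRadius_eq_rpow, ← mul_assoc, ENNReal.ofReal_mul (by norm_num), dyadicScale]
    norm_num
  rw [h, ENNReal.mul_rpow_of_nonneg _ _ (by norm_num), sq_rpow_half,
    dyadicScale_rpow _ _ (by norm_num), one_mul]

lemma eLpNorm_kernelConv_stripKernel_le (ha : 0 < a) (j : ℕ) {f g : ℝ × ℝ → ℝ≥0∞}
    (hf : Measurable f) (hg : Measurable g) :
    eLpNorm (kernelConv (stripKernel a (dyadicRadius j) g) f) 2 volume ≤
      2 * decayIntegral a ^ (1 / 2 : ℝ) * eLpNorm f 2 volume *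
        (dyadicScale (1 / 2) j * eLpNorm g 2 volume) := by
  have hsqrt := ENNReal.rpow_le_rpow
    (lintegral_sq_kernelConv_stripKernel_le ha (dyadicRadius j) hf hg)
    (by norm_num : (0 : ℝ) ≤ 1 / 2)
  simp only [ENNReal.mul_rpow_of_nonneg _ _ (by norm_num : (0 : ℝ) ≤ 1 / 2),
    ← eLpNorm_two_eq_lintegral, ofReal_two_mul_dyadicRadius_rpow_half] at hsqrt
  exact hsqrt.trans_eq (by ring)

lemma le_tsum_dyadicPiece (hχ : DyadicCutoffs χ₀ χ) {s : ℝ} (hs : 0 ≤ s) (F : ℝ × ℝ → ℝ≥0∞)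
    (z : ℝ × ℝ) : F z ≤ ∑' i, dyadicPiece a χ₀ χ s i F z :=
  (le_tsum_sqrtCutoff_mul (a := a) hχ z (F z)).trans <| ENNReal.tsum_le_tsum fun _ =>
    mul_le_mul_right (le_mul_of_one_le_left' (one_le_sobolevWeight hs z)) _

lemma le_tsum_stripKernel (hχ : DyadicCutoffs χ₀ χ) (V : ℝ × ℝ → ℝ≥0∞) (p q : ℝ × ℝ) :
    V q ≤ ∑' j, stripKernel a (dyadicRadius j) (dyadicPiece a χ₀ χ (1 / 2 + a / 2) j V) p q := by
  refine (le_tsum_sqrtCutoff_mul (a := a) hχ q (V q)).trans (ENNReal.tsum_le_tsum fun j => ?_)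
  by_cases h : sqrtCutoff a χ₀ χ j q = 0
  · simp [h]
  · have hmem : q ∈ {q | |modulation a q| ≤ dyadicRadius j} :=
      abs_modulation_le_of_sqrtCutoff_ne_zero hχ h
    rw [stripKernel, Set.indicator_of_mem hmem, dyadicPiece, mul_left_comm, ← mul_assoc _ _ (V q),
      sobolevWeight_neg_mul, one_mul]

lemma dyadicPiece_lconvolution_le (ha : 0 < a) (hχ : DyadicCutoffs χ₀ χ) {F V : ℝ × ℝ → ℝ≥0∞}
    (hF : Measurable F) (hV : Measurable V) (k : ℕ) (z : ℝ × ℝ) :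
    dyadicPiece a χ₀ χ (-(1 / 2 + a / 2)) k (F ⋆ₗ V) z ≤ ∑' i, ∑' j, 1 * kernelConv
      (stripKernel a (dyadicRadius j) (dyadicPiece a χ₀ χ (1 / 2 + a / 2) j V))
      (dyadicPiece a χ₀ χ (1 / 2 + a / 2) i F) z := by
  have hσ : 0 ≤ 1 / 2 + a / 2 := by positivity
  rw [← lintegral_kernelConv_tsum
    (fun i j => measurable_stripKernel ha _ (measurable_dyadicPiece ha hχ _ j hV))
    (fun i => measurable_dyadicPiece ha hχ _ i hF)]
  simp only [dyadicPiece, lconvolution_def, neg_add_eq_sub]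
  refine (mul_le_of_le_one_left' (sqrtCutoff_le_one hχ k z)).trans
    ((mul_le_of_le_one_left' (sobolevWeight_neg_le_one hσ z)).trans (lintegral_mono fun p => ?_))
  simp_rw [one_mul, ENNReal.tsum_mul_right, ENNReal.tsum_mul_left]
  rw [mul_comm]
  exact mul_le_mul' (le_tsum_stripKernel hχ V p _) (le_tsum_dyadicPiece hχ hσ F p)

/-- The constant of the estimate of a plain product in `X^b`. -/
def productConst (a b : ℝ) : ℝ≥0∞ := 2 * decayIntegral a ^ (1 / 2 : ℝ) * ∑' k, dyadicScale b k

lemma productConst_lt_top (ha : 0 < a) {b : ℝ} (hb : b < 0) : productConst a b < ∞ :=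
  ENNReal.mul_lt_top (ENNReal.mul_lt_top (by norm_num)
    (ENNReal.rpow_lt_top_of_nonneg (by norm_num) (decayIntegral_lt_top ha).ne))
    (tsum_dyadicScale_lt_top hb)

/-- The weight of order `1 / 2 + a / 2` makes each modulation piece of the transform of the second
factor integrable. -/
theorem eXnorm_lconvolution_le (ha : 0 < a) (hχ : DyadicCutoffs χ₀ χ) (b : ℝ)
    {F V : ℝ × ℝ → ℝ≥0∞} (hF : Measurable F) (hV : Measurable V) :
    eXnorm a χ₀ χ b (-(1 / 2 + a / 2)) (F ⋆ₗ V) ≤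
      productConst a b * eXnorm a χ₀ χ (1 / 2) (1 / 2 + a / 2) F *
        eXnorm a χ₀ χ (1 / 2) (1 / 2 + a / 2) V := by
  have hpieceF := fun i => measurable_dyadicPiece ha hχ (1 / 2 + a / 2) i hF
  have hpieceV := fun j => measurable_dyadicPiece ha hχ (1 / 2 + a / 2) j hV
  have hconv := fun i j => measurable_kernelConv
    (measurable_stripKernel ha (dyadicRadius j) (hpieceV j)) (hpieceF i)
  refine eXnorm_le_of_dyadicBlocks (fun i j _ => (hconv i j).const_mul 1)
    (dyadicPiece_lconvolution_le ha hχ hF hV) fun i j k => ?_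
  have hscale : 1 ≤ dyadicScale (1 / 2) i :=
    ENNReal.one_le_ofReal.mpr (Real.one_le_rpow one_le_two (by positivity))
  simp_rw [one_mul]
  refine (mul_le_mul_right (eLpNorm_kernelConv_stripKernel_le ha j (hpieceF i) (hpieceV j))
    _).trans ((le_mul_of_one_le_left' hscale).trans_eq ?_)
  ring

end Product

/-! ### Majorants depending on the time frequency only -/

section Majorant
variable {χ₀ χ : ℝ → ℝ} {a : ℝ}

/-- A closed set of modulations containing the support of the `j`-th cutoff. -/
def dyadicAnnulus (j : ℕ) : Set ℝ := {y | |y| ≤ dyadicRadius j ∧ (j = 0 ∨ (2 : ℝ) ^ j ≤ 2 * |y|)}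

lemma isClosed_dyadicAnnulus (j : ℕ) : IsClosed (dyadicAnnulus j) := by
  have hradius : IsClosed {y : ℝ | |y| ≤ dyadicRadius j} :=
    isClosed_le continuous_abs continuous_const
  have hlower : IsClosed {y : ℝ | (2 : ℝ) ^ j ≤ 2 * |y|} :=
    isClosed_le continuous_const (continuous_const.mul continuous_abs)
  exact hradius.inter (isClosed_const.union hlower)

lemma mem_dyadicAnnulus_of_chiJ_ne_zero (hχ : DyadicCutoffs χ₀ χ) {j : ℕ} {y : ℝ}
    (h : chiJ χ₀ χ j y ≠ 0) : y ∈ dyadicAnnulus j := by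
  refine ⟨abs_le_dyadicRadius_of_chiJ_ne_zero hχ h, ?_⟩
  by_cases hj : j = 0
  · exact .inl hj
  · exact .inr (two_pow_le_of_chiJ_ne_zero hχ hj h)

lemma deriv_chiJ_eq_zero (hχ : DyadicCutoffs χ₀ χ) {j : ℕ} {y : ℝ} (h : y ∉ dyadicAnnulus j) :
    deriv (chiJ χ₀ χ j) y = 0 := by
  have hzero : chiJ χ₀ χ j =ᶠ[nhds y] fun _ => 0 := by
    filter_upwards [(isClosed_dyadicAnnulus j).isOpen_compl.mem_nhds h] with x hx
    exact not_not.mp fun h0 => hx (mem_dyadicAnnulus_of_chiJ_ne_zero hχ h0)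
  rw [hzero.deriv_eq, deriv_const]

lemma exists_bound_deriv {f : ℝ → ℝ} (hf : ContDiff ℝ (⊤ : ℕ∞) f) {R : ℝ}
    (hsupp : ∀ z, R < |z| → f z = 0) : ∃ M, ∀ z, |deriv f z| ≤ M :=
  have hcompact : HasCompactSupport f :=
    .intro (isCompact_closedBall (0 : ℝ) R) fun z hz => hsupp z (by simpa using hz)
  (hf.continuous_deriv (by simp)).bounded_above_of_compact_support hcompact.deriv

lemma exists_deriv_chiJ_le (hχ : DyadicCutoffs χ₀ χ) :
    ∃ M : ℝ, ∀ (j : ℕ) (y : ℝ), |deriv (chiJ χ₀ χ j) y| ≤ M * (2 ^ j)⁻¹ := by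
  obtain ⟨M₀, hM₀⟩ := exists_bound_deriv hχ.smooth0 hχ.supp0
  obtain ⟨M₁, hM₁⟩ := exists_bound_deriv (R := 2) hχ.smooth1 fun z hz => by
    by_contra h0
    linarith [(hχ.supp1 z h0).2]
  refine ⟨max M₀ M₁, fun j y => ?_⟩
  by_cases hj : j = 0
  · subst hj
    have hχ0 : chiJ χ₀ χ 0 = χ₀ := by ext; simp [chiJ]
    rw [hχ0]
    simpa using Or.inl (hM₀ y)
  · have hχj : chiJ χ₀ χ j = fun z => χ ((2 : ℝ) ^ (-(j : ℝ)) * z) := by ext; simp [chiJ, hj]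
    rw [hχj, deriv_comp_mul_left, smul_eq_mul, abs_mul, abs_of_pos (by positivity),
      Real.rpow_neg two_pos.le, Real.rpow_natCast, mul_comm]
    gcongr
    exact (hM₁ _).trans (le_max_right _ _)

lemma enorm_mul_sq_le_lintegral_of_hasCompactSupport {c c' : ℝ → ℝ} {v v' : ℝ → ℂ}
    (hc : ∀ x, HasDerivAt c (c' x) x) (hv : ∀ x, HasDerivAt v (v' x) x)
    (hc' : Continuous c') (hv' : Continuous v') (hsupp : HasCompactSupport c) (x : ℝ) :
    ‖c x‖ₑ * ‖v x‖ₑ ^ 2 ≤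
      ∫⁻ t, (2 * (‖c t‖ₑ * (‖v t‖ₑ * ‖v' t‖ₑ)) + ‖c' t‖ₑ * ‖v t‖ₑ ^ 2) := by
  have hcont : Continuous c := continuous_iff_continuousAt.mpr fun t => (hc t).continuousAt
  have hvcont : Continuous v := continuous_iff_continuousAt.mpr fun t => (hv t).continuousAt
  set h : ℝ → ℂ := fun t => (c t : ℂ) * v t ^ 2 with hh
  have hderiv (t : ℝ) : HasDerivAt h ((c' t : ℂ) * v t ^ 2 + (c t : ℂ) * (2 * v t * v' t)) t :=
    (((hc t).ofReal_comp).mul ((hv t).pow 2)).congr_deriv (by simp)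
  have hC1 : ContDiff ℝ 1 h := by
    rw [contDiff_one_iff_deriv, funext fun t => (hderiv t).deriv]
    exact ⟨fun t => (hderiv t).differentiableAt, by fun_prop⟩
  have hhsupp : HasCompactSupport h := (hsupp.comp_left ofReal_zero).mul_right
  have hreal (r : ℝ) : ‖(r : ℂ)‖ₑ = ‖r‖ₑ := by rw [← ofReal_norm, norm_real, ofReal_norm]
  have htwo : ‖(2 : ℂ)‖ₑ = 2 := by rw [← ofReal_norm]; simp
  calc ‖c x‖ₑ * ‖v x‖ₑ ^ 2 = ‖h x‖ₑ := by rw [hh, enorm_mul, enorm_pow, hreal]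
    _ ≤ ∫⁻ t in Set.Iic x, ‖deriv h t‖ₑ := hhsupp.enorm_le_lintegral_Ici_deriv hC1 x
    _ ≤ ∫⁻ t, ‖deriv h t‖ₑ := setLIntegral_le_lintegral _ _
    _ ≤ _ := lintegral_mono fun t => by
        rw [(hderiv t).deriv, add_comm]
        refine (enorm_add_le _ _).trans_eq ?_
        simp only [enorm_mul, enorm_pow, hreal, htwo]
        ring

lemma hasDerivAt_chiJ_sub_disp (ha : 0 < a) (hχ : DyadicCutoffs χ₀ χ) (j : ℕ) (x y : ℝ) :
    HasDerivAt (fun x => chiJ χ₀ χ j (y - disp a x))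
      (deriv (chiJ χ₀ χ j) (y - disp a x) * -((2 + a) * |x| ^ (1 + a))) x := by
  have hcutoff := ((contDiff_chiJ hχ j).differentiable (by simp) (y - disp a x)).hasDerivAt
  exact hcutoff.comp x ((hasDerivAt_disp ha x).const_sub y)

lemma hasCompactSupport_chiJ_sub_disp (ha : 0 < a) (hχ : DyadicCutoffs χ₀ χ) (j : ℕ) (y : ℝ) :
    HasCompactSupport fun x => chiJ χ₀ χ j (y - disp a x) := by
  refine .intro (isCompact_closedBall (0 : ℝ) (max 1 (|y| + dyadicRadius j))) fun x hx => ?_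
  contrapose! hx
  rw [mem_closedBall_zero_iff, Real.norm_eq_abs]
  refine abs_le_max_one_of_abs_disp_le ha ?_
  calc |disp a x| = |y - (y - disp a x)| := by rw [sub_sub_cancel]
    _ ≤ |y| + |y - disp a x| := abs_sub _ _
    _ ≤ _ := by linarith [abs_le_dyadicRadius_of_chiJ_ne_zero hχ hx]

/-- The part of `V` of modulation about `2 ^ j`, carrying the Sobolev weight of order
`1 / 2 + a / 2`. -/
def annulusPart (a : ℝ) (j : ℕ) (V : ℝ × ℝ → ℂ) : ℝ × ℝ → ℝ≥0∞ :=
  (modulation a ⁻¹' dyadicAnnulus j).indicator fun z => sobolevWeight (1 / 2 + a / 2) z * ‖V z‖ₑ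

/-- The density in `ξ` whose integral controls `χ_j |V|²`, when `V₁ = ∂V/∂ξ` and `M / 2 ^ j` bounds
the derivative of the cutoff `χ_j`. -/
def majorantDensity (a : ℝ) (χ₀ χ : ℝ → ℝ) (M : ℝ) (j : ℕ) (V V₁ : ℝ × ℝ → ℂ) (z : ℝ × ℝ) :
    ℝ≥0∞ :=
  2 * (sqrtCutoff a χ₀ χ j z ^ 2 * (‖V z‖ₑ * ‖V₁ z‖ₑ)) +
    ENNReal.ofReal (3 * M * (2 ^ j)⁻¹) * annulusPart a j V z ^ 2

/-- A majorant of the `j`-th piece of `V` that is independent of `ξ`. -/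
def timeMajorant (a : ℝ) (χ₀ χ : ℝ → ℝ) (M : ℝ) (j : ℕ) (V V₁ : ℝ × ℝ → ℂ) (y : ℝ) : ℝ≥0∞ :=
  (∫⁻ x, majorantDensity a χ₀ χ M j V V₁ (x, y)) ^ (1 / 2 : ℝ)

lemma measurable_annulusPart (ha : 0 < a) (j : ℕ) {V : ℝ × ℝ → ℂ} (hV : Continuous V) :
    Measurable (annulusPart a j V) :=
  ((measurable_sobolevWeight _).mul hV.measurable.enorm).indicator
    ((isClosed_dyadicAnnulus j).measurableSet.preimage (measurable_modulation ha))

lemma measurable_majorantDensity (ha : 0 < a) (hχ : DyadicCutoffs χ₀ χ) (M : ℝ) (j : ℕ)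
    {V V₁ : ℝ × ℝ → ℂ} (hV : Continuous V) (hV₁ : Continuous V₁) :
    Measurable (majorantDensity a χ₀ χ M j V V₁) := by
  have := measurable_sqrtCutoff ha hχ j
  have := measurable_annulusPart ha j hV
  have := hV.measurable
  have := hV₁.measurable
  unfold majorantDensity
  fun_prop

lemma measurable_timeMajorant (ha : 0 < a) (hχ : DyadicCutoffs χ₀ χ) (M : ℝ) (j : ℕ)
    {V V₁ : ℝ × ℝ → ℂ} (hV : Continuous V) (hV₁ : Continuous V₁) :
    Measurable (timeMajorant a χ₀ χ M j V V₁) :=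
  (measurable_majorantDensity ha hχ M j hV hV₁).lintegral_prod_left'.pow_const _

lemma enorm_deriv_chiJ_mul_le (ha : 0 < a) (ha1 : a ≤ 1) (hχ : DyadicCutoffs χ₀ χ) {M : ℝ}
    (hM : ∀ (j : ℕ) (y : ℝ), |deriv (chiJ χ₀ χ j) y| ≤ M * (2 ^ j)⁻¹) (V : ℝ × ℝ → ℂ) (j : ℕ)
    (z : ℝ × ℝ) :
    ‖deriv (chiJ χ₀ χ j) (z.2 - disp a z.1) * -((2 + a) * |z.1| ^ (1 + a))‖ₑ * ‖V z‖ₑ ^ 2 ≤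
      ENNReal.ofReal (3 * M * (2 ^ j)⁻¹) * annulusPart a j V z ^ 2 := by
  by_cases hz : modulation a z ∈ dyadicAnnulus j
  · have hM0 : 0 ≤ M := by simpa using (abs_nonneg _).trans (hM 0 0)
    have hweight : ((1 + |z.1|) ^ (1 / 2 + a / 2)) ^ 2 = (1 + |z.1|) ^ (1 + a) := by
      rw [← Real.rpow_natCast, ← Real.rpow_mul (by positivity)]
      congr 1
      push_cast
      ring
    rw [annulusPart, Set.indicator_of_mem (Set.mem_preimage.mpr hz), mul_pow, ← mul_assoc,
      sobolevWeight, ← ENNReal.ofReal_pow (by positivity), hweight,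
      ← ENNReal.ofReal_mul (by positivity)]
    refine mul_le_mul_left ?_ _
    rw [← ofReal_norm, norm_mul, norm_neg, Real.norm_eq_abs, Real.norm_of_nonneg (by positivity)]
    refine ENNReal.ofReal_le_ofReal ?_
    calc _ ≤ (M * (2 ^ j)⁻¹) * (3 * (1 + |z.1|) ^ (1 + a)) := by
          gcongr
          · exact hM j _
          · linarith
          · linarith
      _ = _ := by ring
  · have hzero : deriv (chiJ χ₀ χ j) (z.2 - disp a z.1) = 0 := deriv_chiJ_eq_zero hχ hz
    simp [hzero]

/-- The fundamental theorem of calculus in `ξ`, applied to `χ_j(λ - ω(ξ)) V(ξ, λ)²`. -/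
lemma sqrtCutoff_mul_le_timeMajorant (ha : 0 < a) (ha1 : a ≤ 1) (hχ : DyadicCutoffs χ₀ χ) {M : ℝ}
    (hM : ∀ (j : ℕ) (y : ℝ), |deriv (chiJ χ₀ χ j) y| ≤ M * (2 ^ j)⁻¹) {V V₁ : ℝ × ℝ → ℂ}
    (hV₁ : Continuous V₁) (hd : ∀ x y, HasDerivAt (fun x => V (x, y)) (V₁ (x, y)) x) (j : ℕ)
    (q : ℝ × ℝ) :
    sqrtCutoff a χ₀ χ j q * ‖V q‖ₑ ≤ timeMajorant a χ₀ χ M j V V₁ q.2 := by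
  have hcutoff (z : ℝ × ℝ) : sqrtCutoff a χ₀ χ j z ^ 2 = ‖chiJ χ₀ χ j (z.2 - disp a z.1)‖ₑ := by
    rw [sqrtCutoff, rpow_half_sq, Real.enorm_eq_ofReal (chiJ_mem_Icc hχ j _).1]
    rfl
  have hcont : Continuous fun x =>
      deriv (chiJ χ₀ χ j) (q.2 - disp a x) * -((2 + a) * |x| ^ (1 + a)) := by
    have := (contDiff_chiJ hχ j).continuous_deriv (by simp)
    have := continuous_disp ha
    have : Continuous fun x : ℝ => |x| ^ (1 + a) :=
      continuous_abs.rpow_const fun x => .inr (by linarith)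
    fun_prop
  refine le_rpow_half_of_sq_le ?_
  rw [mul_pow, hcutoff]
  refine (enorm_mul_sq_le_lintegral_of_hasCompactSupport
    (fun x => hasDerivAt_chiJ_sub_disp ha hχ j x q.2) (fun x => hd x q.2) hcont (by fun_prop)
    (hasCompactSupport_chiJ_sub_disp ha hχ j q.2) q.1).trans (lintegral_mono fun x => ?_)
  rw [majorantDensity, hcutoff]
  exact add_le_add le_rfl (enorm_deriv_chiJ_mul_le ha ha1 hχ hM V j (x, q.2))

lemma lintegral_sqrtCutoff_sq_mul_le (ha : 0 < a) (hχ : DyadicCutoffs χ₀ χ) (s : ℝ) (j : ℕ)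
    {F H : ℝ × ℝ → ℝ≥0∞} (hF : Measurable F) (hH : Measurable H) :
    ∫⁻ z, sqrtCutoff a χ₀ χ j z ^ 2 * (F z * H z) ≤
      eLpNorm (dyadicPiece a χ₀ χ s j F) 2 volume *
        eLpNorm (dyadicPiece a χ₀ χ (-s) j H) 2 volume := by
  have hsplit (z : ℝ × ℝ) : sqrtCutoff a χ₀ χ j z ^ 2 * (F z * H z) =
      dyadicPiece a χ₀ χ s j F z * dyadicPiece a χ₀ χ (-s) j H z := by
    calc _ = (sobolevWeight (-s) z * sobolevWeight s z) *
          (sqrtCutoff a χ₀ χ j z ^ 2 * (F z * H z)) := by rw [sobolevWeight_neg_mul, one_mul]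
      _ = _ := by simp only [dyadicPiece]; ring
  have hcauchy := le_rpow_half_of_sq_le (lintegral_mul_sq_le (μ := volume)
    (measurable_dyadicPiece ha hχ s j hF).aemeasurable
    (measurable_dyadicPiece ha hχ (-s) j hH).aemeasurable)
  rwa [ENNReal.mul_rpow_of_nonneg _ _ (by norm_num), ← eLpNorm_two_eq_lintegral,
    ← eLpNorm_two_eq_lintegral, ← lintegral_congr hsplit] at hcauchy

lemma eLpNorm_timeMajorant_le (ha : 0 < a) (hχ : DyadicCutoffs χ₀ χ) (M : ℝ) (j : ℕ)
    {V V₁ : ℝ × ℝ → ℂ} (hV : Continuous V) (hV₁ : Continuous V₁) :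
    eLpNorm (timeMajorant a χ₀ χ M j V V₁) 2 volume ≤
      2 * (eLpNorm (dyadicPiece a χ₀ χ (1 / 2 + a / 2) j fun z => ‖V z‖ₑ) 2 volume ^ (1 / 2 : ℝ) *
        eLpNorm (dyadicPiece a χ₀ χ (-(1 / 2 + a / 2)) j fun z => ‖V₁ z‖ₑ) 2 volume ^
          (1 / 2 : ℝ)) +
      ENNReal.ofReal (3 * M * (2 ^ j)⁻¹) ^ (1 / 2 : ℝ) * eLpNorm (annulusPart a j V) 2 volume := by
  have := measurable_sqrtCutoff ha hχ j
  have hVm := hV.measurable.enorm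
  have hV₁m := hV₁.measurable.enorm
  have := measurable_annulusPart ha j hV
  have hfubini : ∫⁻ y, timeMajorant a χ₀ χ M j V V₁ y ^ 2 =
      ∫⁻ z, majorantDensity a χ₀ χ M j V V₁ z := by
    simp_rw [timeMajorant, rpow_half_sq]
    rw [Measure.volume_eq_prod,
      lintegral_prod_symm' _ (measurable_majorantDensity ha hχ M j hV hV₁)]
  have hdensity : ∫⁻ z, majorantDensity a χ₀ χ M j V V₁ z ≤
      2 * (eLpNorm (dyadicPiece a χ₀ χ (1 / 2 + a / 2) j fun z => ‖V z‖ₑ) 2 volume *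
        eLpNorm (dyadicPiece a χ₀ χ (-(1 / 2 + a / 2)) j fun z => ‖V₁ z‖ₑ) 2 volume) +
      ENNReal.ofReal (3 * M * (2 ^ j)⁻¹) * eLpNorm (annulusPart a j V) 2 volume ^ 2 := by
    unfold majorantDensity
    rw [lintegral_add_left (by fun_prop), lintegral_const_mul _ (by fun_prop),
      lintegral_const_mul _ (by fun_prop), eLpNorm_two_sq]
    gcongr
    exact lintegral_sqrtCutoff_sq_mul_le ha hχ _ j hVm hV₁m
  have htwo : (2 : ℝ≥0∞) ^ (1 / 2 : ℝ) ≤ 2 := calc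
    (2 : ℝ≥0∞) ^ (1 / 2 : ℝ) ≤ 2 ^ (1 : ℝ) :=
      ENNReal.rpow_le_rpow_of_exponent_le (by norm_num) (by norm_num)
    _ = 2 := ENNReal.rpow_one _
  rw [eLpNorm_two_eq_lintegral, hfubini]
  refine (ENNReal.rpow_le_rpow hdensity (by norm_num)).trans ?_
  refine (ENNReal.rpow_add_le_add_rpow _ _ (by norm_num) (by norm_num)).trans ?_
  simp only [ENNReal.mul_rpow_of_nonneg _ _ (by norm_num : (0 : ℝ) ≤ 1 / 2), sq_rpow_half]
  gcongr

lemma lt_add_three_of_mem_dyadicAnnulus (hχ : DyadicCutoffs χ₀ χ) {j j' : ℕ} {z : ℝ × ℝ}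
    (h : modulation a z ∈ dyadicAnnulus j) (h' : sqrtCutoff a χ₀ χ j' z ≠ 0) : j < j' + 3 := by
  rcases h.2 with rfl | hlower
  · omega
  · have hupper := abs_modulation_le_of_sqrtCutoff_ne_zero hχ h'
    have hpow : (2 : ℝ) ^ j ≤ 2 ^ (j' + 2) := by
      rw [dyadicRadius] at hupper
      rw [pow_add]
      linarith
    have := (pow_le_pow_iff_right₀ (one_lt_two : (1 : ℝ) < 2)).mp hpow
    omega

lemma eLpNorm_annulusPart_le (ha : 0 < a) (hχ : DyadicCutoffs χ₀ χ) {V : ℝ × ℝ → ℂ}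
    (hV : Continuous V) (j : ℕ) :
    eLpNorm (annulusPart a j V) 2 volume ≤ ∑' j', if j < j' + 3 then
      eLpNorm (dyadicPiece a χ₀ χ (1 / 2 + a / 2) j' fun z => ‖V z‖ₑ) 2 volume else 0 := by
  set P := fun j' => dyadicPiece a χ₀ χ (1 / 2 + a / 2) j' fun z => ‖V z‖ₑ
  have hmeas (j' : ℕ) : Measurable (if j < j' + 3 then P j' else 0) := by
    split_ifs
    · exact measurable_dyadicPiece ha hχ (1 / 2 + a / 2) j' hV.measurable.enorm
    · exact measurable_const
  have hpoint (z : ℝ × ℝ) : annulusPart a j V z ≤ ∑' j', (if j < j' + 3 then P j' else 0) z := by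
    by_cases hz : z ∈ modulation a ⁻¹' dyadicAnnulus j
    · rw [annulusPart, Set.indicator_of_mem hz]
      refine (le_tsum_sqrtCutoff_mul (a := a) hχ z _).trans (ENNReal.tsum_le_tsum fun j' => ?_)
      by_cases h0 : sqrtCutoff a χ₀ χ j' z = 0
      · simp [h0]
      · rw [if_pos (lt_add_three_of_mem_dyadicAnnulus hχ hz h0)]
        exact le_rfl
    · simp [annulusPart, Set.indicator_of_notMem hz]
  refine ((eLpNorm_mono_enorm fun z => by simpa only [enorm_eq_self] using hpoint z).trans
    (eLpNorm_tsum_le (by norm_num) (by norm_num) hmeas)).trans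
    (ENNReal.tsum_le_tsum fun j' => ?_)
  split_ifs
  · exact le_rfl
  · simp

lemma natCast_add_three_le_mul_dyadicScale (n : ℕ) :
    ((n + 3 : ℕ) : ℝ≥0∞) ≤ 4 * dyadicScale (1 / 2) n := by
  have hsqrt : (1 + 1 / 4 : ℝ) ≤ 2 ^ (1 / 2 : ℝ) := by
    rw [← Real.sqrt_eq_rpow]
    exact Real.le_sqrt_of_sq_le (by norm_num)
  have hbernoulli := one_add_mul_le_pow (a := (1 / 4 : ℝ)) (by norm_num) n
  have hpow : (1 + 1 / 4 : ℝ) ^ n ≤ 2 ^ ((n : ℝ) * (1 / 2)) := by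
    rw [mul_comm, Real.rpow_mul two_pos.le, Real.rpow_natCast]
    exact pow_le_pow_left₀ (by norm_num) hsqrt n
  rw [dyadicScale, ← ENNReal.ofReal_ofNat 4, ← ENNReal.ofReal_mul (by norm_num),
    ← ENNReal.ofReal_natCast]
  refine ENNReal.ofReal_le_ofReal ?_
  push_cast
  linarith

lemma tsum_eLpNorm_annulusPart_le (ha : 0 < a) (hχ : DyadicCutoffs χ₀ χ) {V : ℝ × ℝ → ℂ}
    (hV : Continuous V) :
    ∑' j, eLpNorm (annulusPart a j V) 2 volume ≤
      4 * eXnorm a χ₀ χ (1 / 2) (1 / 2 + a / 2) fun z => ‖V z‖ₑ := by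
  set P := fun j' => eLpNorm (dyadicPiece a χ₀ χ (1 / 2 + a / 2) j' fun z => ‖V z‖ₑ) 2 volume
  calc ∑' j, eLpNorm (annulusPart a j V) 2 volume
      ≤ ∑' j, ∑' j', if j < j' + 3 then P j' else 0 :=
        ENNReal.tsum_le_tsum (eLpNorm_annulusPart_le ha hχ hV)
    _ = ∑' j' : ℕ, ∑' j : ℕ, if j < j' + 3 then P j' else 0 := ENNReal.tsum_comm
    _ = ∑' j' : ℕ, ((j' + 3 : ℕ) : ℝ≥0∞) * P j' := by
        refine tsum_congr fun j' => ?_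
        rw [tsum_eq_sum (s := Finset.range (j' + 3)) fun j hj => if_neg (by simpa using hj),
          Finset.sum_congr rfl fun j hj => if_pos (Finset.mem_range.mp hj)]
        simp
    _ ≤ ∑' j' : ℕ, 4 * (dyadicScale (1 / 2) j' * P j') :=
        ENNReal.tsum_le_tsum fun n => (mul_le_mul_left
          (natCast_add_three_le_mul_dyadicScale n) _).trans_eq (mul_assoc _ _ _)
    _ = _ := ENNReal.tsum_mul_left

lemma dyadicScale_half_mul_rpow_half (j : ℕ) (M : ℝ) :
    dyadicScale (1 / 2) j * ENNReal.ofReal (M * (2 ^ j)⁻¹) ^ (1 / 2 : ℝ) =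
      ENNReal.ofReal M ^ (1 / 2 : ℝ) := by
  have hscale : dyadicScale (1 / 2) j = dyadicScale 1 j ^ (1 / 2 : ℝ) := by
    rw [dyadicScale_rpow _ _ (by norm_num), one_mul]
  rw [hscale, ← ENNReal.mul_rpow_of_nonneg _ _ (by norm_num), dyadicScale, mul_one,
    Real.rpow_natCast, ← ENNReal.ofReal_mul (by positivity)]
  congr 2
  field_simp

/-- The majorants bound `V` in `L²_λ L^∞_ξ`, at the cost of half a derivative in `ξ` of `V`. -/
lemma tsum_eLpNorm_timeMajorant_le (ha : 0 < a) (hχ : DyadicCutoffs χ₀ χ) (M : ℝ)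
    {V V₁ : ℝ × ℝ → ℂ} (hV : Continuous V) (hV₁ : Continuous V₁) :
    ∑' j : ℕ, dyadicScale (1 / 2) j * eLpNorm (timeMajorant a χ₀ χ M j V V₁) 2 volume ≤
      2 * ((eXnorm a χ₀ χ (1 / 2) (1 / 2 + a / 2) fun z => ‖V z‖ₑ) ^ (1 / 2 : ℝ) *
        (eXnorm a χ₀ χ (1 / 2) (-(1 / 2 + a / 2)) fun z => ‖V₁ z‖ₑ) ^ (1 / 2 : ℝ)) +
      ENNReal.ofReal (3 * M) ^ (1 / 2 : ℝ) *
        (4 * eXnorm a χ₀ χ (1 / 2) (1 / 2 + a / 2) fun z => ‖V z‖ₑ) := by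
  set w := dyadicScale (1 / 2)
  set P := fun j => eLpNorm (dyadicPiece a χ₀ χ (1 / 2 + a / 2) j fun z => ‖V z‖ₑ) 2 volume
  set Q := fun j => eLpNorm (dyadicPiece a χ₀ χ (-(1 / 2 + a / 2)) j fun z => ‖V₁ z‖ₑ) 2 volume
  set R := fun j => eLpNorm (annulusPart a j V) 2 volume
  have hterm (j : ℕ) : w j * eLpNorm (timeMajorant a χ₀ χ M j V V₁) 2 volume ≤
      2 * ((w j * P j) ^ (1 / 2 : ℝ) * (w j * Q j) ^ (1 / 2 : ℝ)) +
        ENNReal.ofReal (3 * M) ^ (1 / 2 : ℝ) * R j := by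
    have hw : w j ^ (1 / 2 : ℝ) * w j ^ (1 / 2 : ℝ) = w j := by rw [← sq, rpow_half_sq]
    refine (mul_le_mul_right (eLpNorm_timeMajorant_le ha hχ M j hV hV₁) _).trans_eq ?_
    rw [mul_add, ← mul_assoc (dyadicScale _ _) (ENNReal.ofReal _ ^ _),
      dyadicScale_half_mul_rpow_half, ENNReal.mul_rpow_of_nonneg _ _ (by norm_num),
      ENNReal.mul_rpow_of_nonneg _ _ (by norm_num), mul_mul_mul_comm, hw, mul_left_comm]
  calc _ ≤ ∑' j, (2 * ((w j * P j) ^ (1 / 2 : ℝ) * (w j * Q j) ^ (1 / 2 : ℝ)) +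
        ENNReal.ofReal (3 * M) ^ (1 / 2 : ℝ) * R j) := ENNReal.tsum_le_tsum hterm
    _ = 2 * ∑' j, ((w j * P j) ^ (1 / 2 : ℝ) * (w j * Q j) ^ (1 / 2 : ℝ)) +
        ENNReal.ofReal (3 * M) ^ (1 / 2 : ℝ) * ∑' j, R j := by
        rw [ENNReal.tsum_add, ENNReal.tsum_mul_left, ENNReal.tsum_mul_left]
    _ ≤ _ := by
        gcongr
        · exact tsum_sqrt_mul_sqrt_le _ _
        · exact tsum_eLpNorm_annulusPart_le ha hχ hV

end Majorant

/-! ### The Fourier transform on Schwartz space -/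

section FourierSide
open scoped FourierTransform SchwartzMap LineDeriv

/-- The rescaling `(ξ, λ) ↦ (ξ + iλ) / 2π` which turns Mathlib's inverse Fourier transform on the
Euclidean plane `ℂ` into the transform `FT2`. -/
def fourierScaling : (ℝ × ℝ) ≃L[ℝ] ℂ :=
  Complex.equivRealProdCLM.symm.trans
    (ContinuousLinearEquiv.smulLeft (Units.mk0 ((2 * Real.pi)⁻¹) (by positivity)))

lemma fourierScaling_apply (z : ℝ × ℝ) :
    fourierScaling z = (2 * Real.pi)⁻¹ • (z.1 + z.2 * I : ℂ) :=
  congrArg ((2 * Real.pi)⁻¹ • ·) (Complex.equivRealProdCLM_symm_apply z)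

lemma two_pi_mul_inner_fourierScaling (w : ℂ) (m : ℝ × ℝ) :
    2 * Real.pi * inner ℝ w (fourierScaling m) = w.re * m.1 + w.im * m.2 := by
  rw [fourierScaling_apply, inner_smul_right, mul_inv_cancel_left₀ (by positivity)]
  simp [Complex.inner, mul_comm]

/-- A Schwartz function on `ℝ × ℝ` read on the Euclidean plane `ℂ`. -/
def toPlane : 𝓢(ℝ × ℝ, ℂ) →L[ℂ] 𝓢(ℂ, ℂ) :=
  SchwartzMap.compCLMOfContinuousLinearEquiv ℂ Complex.equivRealProdCLM

lemma toPlane_apply (u : 𝓢(ℝ × ℝ, ℂ)) (w : ℂ) : toPlane u w = u (w.re, w.im) := rfl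

/-- The transform `FT2` of a Schwartz function, as a Schwartz function. -/
def schwartzFT (u : 𝓢(ℝ × ℝ, ℂ)) : 𝓢(ℝ × ℝ, ℂ) :=
  SchwartzMap.compCLMOfContinuousLinearEquiv ℂ fourierScaling (𝓕⁻ (toPlane u))

lemma schwartzFT_eq_fourierInv (u : 𝓢(ℝ × ℝ, ℂ)) (z : ℝ × ℝ) :
    schwartzFT u z = (𝓕⁻ (toPlane u)) (fourierScaling z) := rfl

lemma integral_complex_eq_integral_prod {E : Type*} [NormedAddCommGroup E] [NormedSpace ℝ E]
    (f : ℂ → E) : ∫ w : ℂ, f w = ∫ p : ℝ × ℝ, f (p.1 + p.2 * I) := by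
  rw [← Complex.volume_preserving_equiv_real_prod.symm.integral_comp'
    (f := Complex.measurableEquivRealProd.symm)]
  congr!
  apply Complex.ext <;> simp [Complex.measurableEquivRealProd]

lemma schwartzFT_apply (u : 𝓢(ℝ × ℝ, ℂ)) (z : ℝ × ℝ) :
    schwartzFT u z = FT2 (fun p => u p) z.1 z.2 := by
  rw [schwartzFT_eq_fourierInv, SchwartzMap.fourierInv_coe, Real.fourierInv_eq',
    integral_complex_eq_integral_prod, FT2]
  congr! 2 with p
  rw [two_pi_mul_inner_fourierScaling, mul_comm _ I, toPlane_apply, smul_eq_mul]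
  simp

/-- Multiplication by the linear form `p ↦ p.1 * m.1 + p.2 * m.2`. -/
def mulLinear (m : ℝ × ℝ) (u : 𝓢(ℝ × ℝ, ℂ)) : 𝓢(ℝ × ℝ, ℂ) :=
  SchwartzMap.smulLeftCLM ℂ (fun p : ℝ × ℝ => p.1 * m.1 + p.2 * m.2) u

lemma hasTemperateGrowth_linearForm (m : ℝ × ℝ) :
    (fun p : ℝ × ℝ => p.1 * m.1 + p.2 * m.2).HasTemperateGrowth :=
  ((ContinuousLinearMap.fst ℝ ℝ ℝ).smulRight m.1 +
    (ContinuousLinearMap.snd ℝ ℝ ℝ).smulRight m.2).hasTemperateGrowth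

lemma mulLinear_apply (m : ℝ × ℝ) (u : 𝓢(ℝ × ℝ, ℂ)) (p : ℝ × ℝ) :
    mulLinear m u p = ((p.1 * m.1 + p.2 * m.2 : ℝ) : ℂ) * u p := by
  rw [mulLinear, SchwartzMap.smulLeftCLM_apply_apply (hasTemperateGrowth_linearForm m),
    real_smul]

lemma lineDeriv_schwartzFT (m : ℝ × ℝ) (u : 𝓢(ℝ × ℝ, ℂ)) :
    ∂_{m} (schwartzFT u) = I • schwartzFT (mulLinear m u) := by
  have hsymbol : (2 * Real.pi * I : ℂ) •
      SchwartzMap.smulLeftCLM ℂ (inner ℝ · (fourierScaling m)) (toPlane u) =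
        I • toPlane (mulLinear m u) := by
    ext w
    rw [smul_apply, smul_apply, SchwartzMap.smulLeftCLM_apply_apply (by fun_prop), toPlane_apply,
      toPlane_apply, mulLinear_apply, ← two_pi_mul_inner_fourierScaling]
    simp only [smul_eq_mul, real_smul]
    push_cast
    ring
  rw [schwartzFT, SchwartzMap.lineDerivOp_compCLMOfContinuousLinearEquiv,
    SchwartzMap.lineDerivOp_fourierInv_eq, hsymbol, FourierTransform.fourierInv_smul, map_smul]
  rfl

lemma schwartzFT_lineDeriv (m : ℝ × ℝ) (u : 𝓢(ℝ × ℝ, ℂ)) :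
    schwartzFT (∂_{m} u) = -(I • mulLinear m (schwartzFT u)) := by
  have hplane : toPlane (∂_{m} u) = ∂_{(m.1 + m.2 * I : ℂ)} (toPlane u) := by
    rw [toPlane, SchwartzMap.lineDerivOp_compCLMOfContinuousLinearEquiv]
    congr
    ext <;> simp
  ext z
  have hphase := two_pi_mul_inner_fourierScaling (m.1 + m.2 * I) z
  rw [schwartzFT_eq_fourierInv, hplane, SchwartzMap.fourierInv_lineDerivOp_eq, neg_apply,
    smul_apply, smul_apply, SchwartzMap.smulLeftCLM_apply_apply (by fun_prop), mulLinear_apply,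
    ← schwartzFT_eq_fourierInv, real_inner_comm]
  simp only [add_re, ofReal_re, re_ofReal_mul, I_re, add_im, ofReal_im, im_ofReal_mul, I_im,
    mul_zero, mul_one, add_zero, zero_add] at hphase
  rw [mul_comm z.1, mul_comm z.2, ← hphase]
  simp only [smul_eq_mul, real_smul]
  push_cast
  ring

/-- The pointwise product of Schwartz functions. -/
def schwartzMul (u v : 𝓢(ℝ × ℝ, ℂ)) : 𝓢(ℝ × ℝ, ℂ) :=
  SchwartzMap.pairing (ContinuousLinearMap.mul ℂ ℂ) u v

lemma schwartzMul_apply (u v : 𝓢(ℝ × ℝ, ℂ)) (p : ℝ × ℝ) : schwartzMul u v p = u p * v p := by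
  simp [schwartzMul]

lemma mulLinear_schwartzMul (m : ℝ × ℝ) (u v : 𝓢(ℝ × ℝ, ℂ)) :
    mulLinear m (schwartzMul u v) = schwartzMul (mulLinear m u) v := by
  ext p
  rw [mulLinear_apply, schwartzMul_apply, schwartzMul_apply, mulLinear_apply, mul_assoc]

lemma fourierInv_toPlane_schwartzMul (u v : 𝓢(ℝ × ℝ, ℂ)) :
    𝓕⁻ (toPlane (schwartzMul u v)) =
      SchwartzMap.convolution (ContinuousLinearMap.mul ℂ ℂ) (𝓕⁻ (toPlane u)) (𝓕⁻ (toPlane v)) := by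
  have hpairing : toPlane (schwartzMul u v) =
      SchwartzMap.pairing (ContinuousLinearMap.mul ℂ ℂ) (toPlane u) (toPlane v) := by
    ext w
    simp [toPlane_apply, schwartzMul_apply]
  have hconv := congrArg (fun f : 𝓢(ℂ, ℂ) => 𝓕⁻ f) (SchwartzMap.fourier_convolution
    (ContinuousLinearMap.mul ℂ ℂ) (𝓕⁻ (toPlane u)) (𝓕⁻ (toPlane v)))
  simp only [FourierTransform.fourierInv_fourier_eq,
    FourierTransform.fourier_fourierInv_eq] at hconv
  rw [hpairing, hconv]

/-- The factor comes from the normalisation of `FT2`. -/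
lemma schwartzFT_schwartzMul (u v : 𝓢(ℝ × ℝ, ℂ)) (z : ℝ × ℝ) :
    schwartzFT (schwartzMul u v) z =
      ((2 * Real.pi)⁻¹ ^ 2 : ℝ) • ∫ p : ℝ × ℝ, schwartzFT u p * schwartzFT v (z - p) := by
  set H : ℂ → ℂ := fun t => (𝓕⁻ (toPlane u)) t * (𝓕⁻ (toPlane v)) (fourierScaling z - t) with hH
  calc schwartzFT (schwartzMul u v) z = ∫ w : ℂ, H w := by
        rw [schwartzFT_eq_fourierInv, fourierInv_toPlane_schwartzMul,
          SchwartzMap.convolution_apply]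
        rfl
    _ = ((2 * Real.pi)⁻¹ ^ 2 : ℝ) • ∫ w : ℂ, H ((2 * Real.pi)⁻¹ • w) := by
        rw [Measure.integral_comp_smul volume H, Complex.finrank_real_complex, smul_smul,
          abs_of_pos (by positivity), mul_inv_cancel₀ (by positivity), one_smul]
    _ = _ := by
        rw [integral_complex_eq_integral_prod]
        congr! 3 with p
        rw [← fourierScaling_apply, hH, schwartzFT_eq_fourierInv, schwartzFT_eq_fourierInv,
          map_sub]

end FourierSide

/-! ### Distributing the weight over the product -/

section Pointwise
open scoped SchwartzMap LineDeriv

lemma continuous_deriv_smoothTransition : Continuous (deriv Real.smoothTransition) :=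
  (Real.smoothTransition.contDiff (n := 1)).continuous_deriv le_rfl

lemma exists_deriv_smoothTransition_le : ∃ D, ∀ y, |deriv Real.smoothTransition y| ≤ D := by
  refine continuous_deriv_smoothTransition.bounded_above_of_compact_support
    (.intro (isCompact_Icc (a := (0 : ℝ)) (b := 1)) fun y hy => ?_)
  rw [Set.mem_Icc, not_and_or, not_le, not_le] at hy
  rcases hy with hneg | hone
  · have hzero : Real.smoothTransition =ᶠ[nhds y] fun _ => 0 := by
      filter_upwards [Iio_mem_nhds hneg] with x hx
      exact Real.smoothTransition.zero_of_nonpos hx.le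
    rw [hzero.deriv_eq, deriv_const]
  · have hconst : Real.smoothTransition =ᶠ[nhds y] fun _ => 1 := by
      filter_upwards [Ioi_mem_nhds hone] with x hx
      exact Real.smoothTransition.one_of_one_le hx.le
    rw [hconst.deriv_eq, deriv_const]

lemma hasLineDerivAt_const_sub (f : 𝓢(ℝ × ℝ, ℂ)) (z p m : ℝ × ℝ) :
    HasLineDerivAt ℝ (fun p => f (z - p)) (-(∂_{m} f) (z - p)) p m := by
  have hcomp := ((f.hasFDerivAt (z - p)).comp p ((hasFDerivAt_id p).const_sub z)).hasLineDerivAt m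
  rwa [ContinuousLinearMap.comp_neg, ContinuousLinearMap.comp_id, neg_apply,
    ← SchwartzMap.lineDerivOp_apply_eq_fderiv] at hcomp

lemma integrable_mul_comp_sub_mul (f g : 𝓢(ℝ × ℝ, ℂ)) (z : ℝ × ℝ) {ψ : ℝ × ℝ → ℝ}
    (hψ : Continuous ψ) {K : ℝ} (hK : ∀ p, |ψ p| ≤ K) :
    Integrable fun p => ((ψ p : ℂ) * f (z - p)) * g p := by
  refine g.integrable.bdd_mul (c := K * SchwartzMap.seminorm ℂ 0 0 f) ?_ (.of_forall fun p => ?_)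
  · have := f.continuous
    exact Continuous.aestronglyMeasurable (by fun_prop)
  · rw [norm_mul, norm_real]
    exact mul_le_mul (hK p) (f.norm_le_seminorm ℂ _) (norm_nonneg _) ((abs_nonneg _).trans (hK p))

lemma integral_mul_comp_sub_mul_lineDeriv (f g : 𝓢(ℝ × ℝ, ℂ)) (z m : ℝ × ℝ) {ψ ψ' : ℝ × ℝ → ℝ}
    (hψ : Continuous ψ) (hψ' : Continuous ψ') {K K' : ℝ} (hK : ∀ p, |ψ p| ≤ K)
    (hK' : ∀ p, |ψ' p| ≤ K') (hd : ∀ p, HasLineDerivAt ℝ ψ (ψ' p) p m) :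
    ∫ p, ((ψ p : ℂ) * f (z - p)) * (∂_{m} g) p =
      (∫ p, ((ψ p : ℂ) * (∂_{m} f) (z - p)) * g p) - ∫ p, ((ψ' p : ℂ) * f (z - p)) * g p := by
  have hint := integrable_mul_comp_sub_mul f g z hψ hK
  have hint' := integrable_mul_comp_sub_mul f (∂_{m} g) z hψ hK
  have hintψ := integrable_mul_comp_sub_mul f g z hψ' hK'
  have hintf := integrable_mul_comp_sub_mul (∂_{m} f) g z hψ hK
  have hleibniz (p : ℝ × ℝ) : HasLineDerivAt ℝ (fun p => (ψ p : ℂ) * f (z - p))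
      ((ψ' p : ℂ) * f (z - p) - ψ p * (∂_{m} f) (z - p)) p m :=
    ((HasDerivAt.ofReal_comp (hd p)).mul (hasLineDerivAt_const_sub f z p m)).congr_deriv (by
      simp only [zero_smul, add_zero]
      ring)
  have hparts := integral_bilinear_hasLineDerivAt_right_eq_neg_left_of_integrable
    (μ := (volume : Measure (ℝ × ℝ))) (B := ContinuousLinearMap.mul ℝ ℂ)
    (by simpa only [ContinuousLinearMap.mul_apply', sub_mul] using! hintψ.sub hintf) hint' hint
    (fun p _ => hleibniz p) (fun p _ => (g.hasFDerivAt p).hasLineDerivAt m)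
  simp only [ContinuousLinearMap.mul_apply'] at hparts
  refine hparts.trans ?_
  rw [← integral_sub hintf hintψ, ← integral_neg]
  congr! 2
  ring

/-- On the support of `1 - θ`, the derivative is moved from the first factor to the second one. -/
lemma integral_schwartzFT_mulLinear_mul (u v : 𝓢(ℝ × ℝ, ℂ)) (z m : ℝ × ℝ)
    {θ θ' : ℝ × ℝ → ℝ} (hθ : Continuous θ) (hθ' : Continuous θ') {K K' : ℝ} (hK : ∀ p, |θ p| ≤ K)
    (hK' : ∀ p, |θ' p| ≤ K') (hd : ∀ p, HasLineDerivAt ℝ θ (θ' p) p m) :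
    ∫ p, schwartzFT (mulLinear m u) p * schwartzFT v (z - p) =
      (∫ p, ((θ p : ℂ) * schwartzFT v (z - p)) * schwartzFT (mulLinear m u) p) +
      (∫ p, (((1 - θ p : ℝ) : ℂ) * schwartzFT (mulLinear m v) (z - p)) * schwartzFT u p) -
      I * ∫ p, ((θ' p : ℂ) * schwartzFT v (z - p)) * schwartzFT u p := by
  have hK₁ (p : ℝ × ℝ) : |1 - θ p| ≤ 1 + K := by
    linarith [abs_sub (1 : ℝ) (θ p), hK p, abs_one (α := ℝ)]
  have hθ₁ : Continuous fun p => 1 - θ p := continuous_const.sub hθ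
  have hsplit : ∫ p, schwartzFT (mulLinear m u) p * schwartzFT v (z - p) =
      (∫ p, ((θ p : ℂ) * schwartzFT v (z - p)) * schwartzFT (mulLinear m u) p) +
      ∫ p, (((1 - θ p : ℝ) : ℂ) * schwartzFT v (z - p)) * schwartzFT (mulLinear m u) p := by
    rw [← integral_add (integrable_mul_comp_sub_mul _ _ z hθ hK)
      (integrable_mul_comp_sub_mul _ _ z hθ₁ hK₁)]
    congr! 2
    push_cast
    ring
  have hparts := integral_mul_comp_sub_mul_lineDeriv (schwartzFT v) (schwartzFT u) z m hθ₁
    hθ'.neg hK₁ (fun p => by rw [Pi.neg_apply, abs_neg]; exact hK' p)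
    (fun p => HasDerivAt.const_sub 1 (hd p))
  simp only [lineDeriv_schwartzFT, smul_apply, smul_eq_mul, Pi.neg_apply, ofReal_neg, neg_mul,
    integral_neg, mul_left_comm _ I, mul_assoc I, integral_const_mul] at hparts
  rw [hsplit]
  set A := ∫ p, ((1 - θ p : ℝ) : ℂ) * schwartzFT v (z - p) * schwartzFT (mulLinear m u) p
  set B := ∫ p, ((1 - θ p : ℝ) : ℂ) * schwartzFT (mulLinear m v) (z - p) * schwartzFT u p
  linear_combination (-I) * hparts + (A - B) * I_mul_I

/-- A smooth cutoff to first inputs `p` whose spatial frequency has the direction and at least a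
fixed fraction of the size of the output frequency `ξ`. -/
def inputCutoff (ξ : ℝ) (p : ℝ × ℝ) : ℝ := Real.smoothTransition (2 * (p.1 / ξ) - 1 / 2)

/-- The derivative of `inputCutoff ξ` in the direction `m`. -/
def inputCutoffDeriv (ξ : ℝ) (m p : ℝ × ℝ) : ℝ :=
  deriv Real.smoothTransition (2 * (p.1 / ξ) - 1 / 2) * (2 * (m.1 / ξ))

lemma continuous_inputCutoff (ξ : ℝ) : Continuous (inputCutoff ξ) :=
  Real.smoothTransition.continuous.comp (by fun_prop)

lemma continuous_inputCutoffDeriv (ξ : ℝ) (m : ℝ × ℝ) : Continuous (inputCutoffDeriv ξ m) :=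
  (continuous_deriv_smoothTransition.comp (by fun_prop)).mul continuous_const

lemma hasLineDerivAt_inputCutoff (ξ : ℝ) (m p : ℝ × ℝ) :
    HasLineDerivAt ℝ (inputCutoff ξ) (inputCutoffDeriv ξ m p) p m := by
  have hlin : HasDerivAt (fun t : ℝ => 2 * ((p.1 + t * m.1) / ξ) - 1 / 2) (2 * (m.1 / ξ)) 0 := by
    simpa using (((((hasDerivAt_id (0 : ℝ)).mul_const m.1).const_add p.1).div_const ξ).const_mul
      2).sub_const (1 / 2)
  refine HasDerivAt.comp (0 : ℝ) ?_ hlin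
  rw [zero_smul, add_zero]
  exact ((Real.smoothTransition.contDiff (n := 1)).differentiable one_ne_zero _).hasDerivAt

lemma inputCutoff_mem_Icc (ξ : ℝ) (p : ℝ × ℝ) : inputCutoff ξ p ∈ Set.Icc 0 1 :=
  ⟨Real.smoothTransition.nonneg _, Real.smoothTransition.le_one _⟩

lemma mul_abs_inputCutoffDeriv_le {D : ℝ} (hD : ∀ y, |deriv Real.smoothTransition y| ≤ D) {ξ : ℝ}
    (hξ : ξ ≠ 0) (m p : ℝ × ℝ) : |ξ| * |inputCutoffDeriv ξ m p| ≤ 2 * D * |m.1| := by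
  have : 0 < |ξ| := abs_pos.mpr hξ
  calc |ξ| * |inputCutoffDeriv ξ m p|
      = |deriv Real.smoothTransition (2 * (p.1 / ξ) - 1 / 2)| * (2 * |m.1|) := by
        rw [inputCutoffDeriv, abs_mul, abs_mul, abs_div, abs_two]
        field_simp
    _ ≤ D * (2 * |m.1|) := by gcongr; exact hD _
    _ = 2 * D * |m.1| := by ring

lemma mem_firstDominantSet_of_lt_div {z p : ℝ × ℝ} (hz : z.1 ≠ 0) (h : 1 / 4 < p.1 / z.1) :
    (p, z - p) ∈ firstDominantSet := by
  obtain ⟨r, hr⟩ : ∃ r, p.1 = r * z.1 := ⟨p.1 / z.1, (div_mul_cancel₀ _ hz).symm⟩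
  rw [hr, mul_div_cancel_right₀ _ hz] at h
  have hr0 : 0 < r := by linarith
  have hcompl : |1 - r| ≤ 3 * r := abs_le.mpr ⟨by linarith, by linarith⟩
  have hz0 := abs_nonneg z.1
  change |p.1 + (z.1 - p.1)| ≤ 4 * |p.1| ∧ |z.1 - p.1| ≤ 3 * |p.1|
  rw [add_sub_cancel, hr, ← one_sub_mul, abs_mul, abs_mul, abs_of_pos hr0]
  constructor <;> nlinarith

lemma mem_firstDominantSet_of_inputCutoff_ne_zero {z p : ℝ × ℝ} (hz : z.1 ≠ 0)
    (h : inputCutoff z.1 p ≠ 0) : (p, z - p) ∈ firstDominantSet := by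
  refine mem_firstDominantSet_of_lt_div hz ?_
  by_contra! hle
  exact h (Real.smoothTransition.zero_of_nonpos (by linarith))

lemma mem_firstDominantSet_of_inputCutoff_sub_ne_one {z p : ℝ × ℝ} (hz : z.1 ≠ 0)
    (h : inputCutoff z.1 (z - p) ≠ 1) : (p, z - p) ∈ firstDominantSet := by
  refine mem_firstDominantSet_of_lt_div hz ?_
  by_contra! hle
  refine h (Real.smoothTransition.one_of_one_le ?_)
  rw [Prod.fst_sub, sub_div, div_self hz]
  linarith

lemma enorm_ofReal_eq_ofReal_abs (x : ℝ) : ‖(x : ℂ)‖ₑ = ENNReal.ofReal |x| := by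
  rw [← ofReal_norm, norm_real, Real.norm_eq_abs]

lemma mul_enorm_integral_le_paraproduct {ψ : ℝ × ℝ → ℝ} {z : ℝ × ℝ} (hψ : ∀ p, |ψ p| ≤ 1)
    (hsupp : ∀ p, ψ p ≠ 0 → (p, z - p) ∈ firstDominantSet) (f g : ℝ × ℝ → ℂ) :
    ENNReal.ofReal |z.1| * ‖∫ p, ((ψ p : ℂ) * g (z - p)) * f p‖ₑ ≤
      paraproduct (fun p => ‖f p‖ₑ) (fun p => ‖g p‖ₑ) z := by
  refine mul_le_mul_right ((enorm_integral_le_lintegral_enorm _).trans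
    (lintegral_mono fun p => ?_)) _
  by_cases hp : ψ p = 0
  · simp [hp]
  · rw [Set.indicator_of_mem (hsupp p hp), enorm_mul, enorm_mul, enorm_ofReal_eq_ofReal_abs,
      mul_assoc, mul_comm ‖f p‖ₑ]
    exact mul_le_of_le_one_left' (ENNReal.ofReal_le_one.mpr (hψ p))

lemma mul_enorm_integral_le_lconvolution {ψ : ℝ × ℝ → ℝ} {z : ℝ × ℝ} {K : ℝ}
    (hψ : ∀ p, |z.1| * |ψ p| ≤ K) (f g : ℝ × ℝ → ℂ) :
    ENNReal.ofReal |z.1| * ‖∫ p, ((ψ p : ℂ) * g (z - p)) * f p‖ₑ ≤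
      ENNReal.ofReal K * ((fun p => ‖f p‖ₑ) ⋆ₗ fun p => ‖g p‖ₑ) z := by
  refine (mul_le_mul_right (enorm_integral_le_lintegral_enorm _) _).trans ?_
  simp only [lconvolution_def, neg_add_eq_sub]
  rw [← lintegral_const_mul' _ _ ENNReal.ofReal_ne_top,
    ← lintegral_const_mul' _ _ ENNReal.ofReal_ne_top]
  refine lintegral_mono fun p => ?_
  rw [enorm_mul, enorm_mul, enorm_ofReal_eq_ofReal_abs, mul_assoc, ← mul_assoc,
    ← ENNReal.ofReal_mul (abs_nonneg _), mul_comm ‖f p‖ₑ]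
  exact mul_le_mul_left (ENNReal.ofReal_le_ofReal (hψ p)) _

lemma enorm_schwartzFT_schwartzMul_le_enorm_integral (u v : 𝓢(ℝ × ℝ, ℂ)) (z : ℝ × ℝ) :
    ‖schwartzFT (schwartzMul u v) z‖ₑ ≤ ‖∫ p, schwartzFT u p * schwartzFT v (z - p)‖ₑ := by
  have hpi : (2 * Real.pi)⁻¹ ≤ 1 := inv_le_one_of_one_le₀ (by linarith [Real.pi_gt_three])
  have hconst : ‖((2 * Real.pi)⁻¹ ^ 2 : ℝ)‖ₑ ≤ 1 := by
    rw [Real.enorm_of_nonneg (by positivity), ENNReal.ofReal_le_one]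
    exact pow_le_one₀ (by positivity) hpi
  rw [schwartzFT_schwartzMul, enorm_smul]
  exact mul_le_of_le_one_left' hconst

lemma enorm_schwartzFT_schwartzMul_le (u v : 𝓢(ℝ × ℝ, ℂ)) (z : ℝ × ℝ) :
    ‖schwartzFT (schwartzMul u v) z‖ₑ ≤
      ((fun p => ‖schwartzFT u p‖ₑ) ⋆ₗ fun p => ‖schwartzFT v p‖ₑ) z :=
  calc ‖schwartzFT (schwartzMul u v) z‖ₑ ≤ ‖∫ p, schwartzFT u p * schwartzFT v (z - p)‖ₑ :=
        enorm_schwartzFT_schwartzMul_le_enorm_integral u v z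
    _ ≤ ∫⁻ p, ‖schwartzFT u p * schwartzFT v (z - p)‖ₑ := enorm_integral_le_lintegral_enorm _
    _ = _ := by simp only [enorm_mul, lconvolution_def, neg_add_eq_sub]

/-- The weight falls on a factor whose frequency dominates the other two, up to an error without
weight and without derivative. -/
lemma mul_enorm_schwartzFT_mulLinear_schwartzMul_le {D : ℝ}
    (hD : ∀ y, |deriv Real.smoothTransition y| ≤ D) (u v : 𝓢(ℝ × ℝ, ℂ)) (z m : ℝ × ℝ) :
    ENNReal.ofReal |z.1| * ‖schwartzFT (mulLinear m (schwartzMul u v)) z‖ₑ ≤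
      paraproduct (fun p => ‖schwartzFT (mulLinear m u) p‖ₑ) (fun p => ‖schwartzFT v p‖ₑ) z +
      paraproduct (fun p => ‖schwartzFT (mulLinear m v) p‖ₑ) (fun p => ‖schwartzFT u p‖ₑ) z +
      ENNReal.ofReal (2 * D * |m.1|) *
        ((fun p => ‖schwartzFT u p‖ₑ) ⋆ₗ fun p => ‖schwartzFT v p‖ₑ) z := by
  by_cases hz : z.1 = 0
  · simp [hz]
  have hθ1 (p : ℝ × ℝ) : |inputCutoff z.1 p| ≤ 1 := by
    rw [abs_of_nonneg (inputCutoff_mem_Icc _ p).1]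
    exact (inputCutoff_mem_Icc _ p).2
  have hcompl1 (p : ℝ × ℝ) : |1 - inputCutoff z.1 (z - p)| ≤ 1 := by
    rw [abs_of_nonneg (sub_nonneg.mpr (inputCutoff_mem_Icc _ _).2)]
    exact sub_le_self _ (inputCutoff_mem_Icc _ _).1
  have hθ' (p : ℝ × ℝ) : |inputCutoffDeriv z.1 m p| ≤ |z.1|⁻¹ * (2 * D * |m.1|) :=
    (le_inv_mul_iff₀ (abs_pos.mpr hz)).mpr (mul_abs_inputCutoffDeriv_le hD hz m p)
  rw [mulLinear_schwartzMul]
  refine (mul_le_mul_right (enorm_schwartzFT_schwartzMul_le_enorm_integral _ _ z) _).trans ?_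
  rw [integral_schwartzFT_mulLinear_mul u v z m (continuous_inputCutoff z.1)
    (continuous_inputCutoffDeriv z.1 m) hθ1 hθ' (hasLineDerivAt_inputCutoff z.1 m)]
  refine (mul_le_mul_right (enorm_sub_le.trans (add_le_add_left (enorm_add_le _ _) _)) _).trans ?_
  rw [mul_add, mul_add]
  refine add_le_add (add_le_add ?_ ?_) ?_
  · exact mul_enorm_integral_le_paraproduct hθ1
      (fun _ => mem_firstDominantSet_of_inputCutoff_ne_zero hz) _ _
  · rw [← integral_sub_left_eq_self _ volume z]
    simp only [sub_sub_cancel, mul_right_comm _ (schwartzFT (mulLinear m v) _)]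
    exact mul_enorm_integral_le_paraproduct hcompl1 (fun _ hp =>
      mem_firstDominantSet_of_inputCutoff_sub_ne_one hz fun h => hp (by rw [h, sub_self])) _ _
  · have hI : ‖I‖ₑ = 1 := by rw [← ofReal_norm, norm_I, ENNReal.ofReal_one]
    rw [enorm_mul, hI, one_mul]
    exact mul_enorm_integral_le_lconvolution (mul_abs_inputCutoffDeriv_le hD hz m) _ _

end Pointwise

/-! ### The extended norms on Schwartz functions -/

section Conversion
open scoped SchwartzMap
variable {χ₀ χ : ℝ → ℝ} {a : ℝ}

lemma eXnorm_mono {b s : ℝ} {F G : ℝ × ℝ → ℝ≥0∞} (h : ∀ z, F z ≤ G z) :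
    eXnorm a χ₀ χ b s F ≤ eXnorm a χ₀ χ b s G := by
  unfold eXnorm
  gcongr with j
  refine eLpNorm_mono_enorm fun z => ?_
  simp only [enorm_eq_self, dyadicPiece]
  gcongr
  exact h z

lemma eXnorm_add_le (ha : 0 < a) (hχ : DyadicCutoffs χ₀ χ) {b s : ℝ} {F G : ℝ × ℝ → ℝ≥0∞}
    (hF : Measurable F) (hG : Measurable G) :
    eXnorm a χ₀ χ b s (F + G) ≤ eXnorm a χ₀ χ b s F + eXnorm a χ₀ χ b s G := by
  unfold eXnorm
  rw [← ENNReal.tsum_add]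
  gcongr with j
  rw [← mul_add]
  gcongr
  have hadd : dyadicPiece a χ₀ χ s j (F + G) =
      dyadicPiece a χ₀ χ s j F + dyadicPiece a χ₀ χ s j G := by
    ext z
    simp only [dyadicPiece, Pi.add_apply, mul_add]
  rw [hadd]
  exact eLpNorm_add_le (measurable_dyadicPiece ha hχ s j hF).aestronglyMeasurable
    (measurable_dyadicPiece ha hχ s j hG).aestronglyMeasurable (by norm_num)

lemma eXnorm_const_mul (ha : 0 < a) (hχ : DyadicCutoffs χ₀ χ) {b s : ℝ} (c : ℝ≥0∞)
    {F : ℝ × ℝ → ℝ≥0∞} (hF : Measurable F) :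
    eXnorm a χ₀ χ b s (fun z => c * F z) = c * eXnorm a χ₀ χ b s F := by
  unfold eXnorm
  rw [← ENNReal.tsum_mul_left]
  refine tsum_congr fun j => ?_
  rw [mul_left_comm,
    ← eLpNorm_const_mul_ennreal (by norm_num) c (measurable_dyadicPiece ha hχ s j hF)]
  congr 2
  ext z
  simp only [dyadicPiece]
  ring

lemma measurable_paraproduct {F V : ℝ × ℝ → ℝ≥0∞} (hF : Measurable F) (hV : Measurable V) :
    Measurable (paraproduct F V) := by
  have hind : Measurable (firstDominantSet.indicator fun w => F w.1 * V w.2) :=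
    Measurable.indicator (by fun_prop) measurableSet_firstDominantSet
  unfold paraproduct
  fun_prop

lemma abs_modulation_le (ha : -1 ≤ a) (ha1 : a ≤ 1) (z : ℝ × ℝ) :
    |modulation a z| ≤ 2 * (1 + ‖z‖) ^ 3 := by
  have hfst : |z.1| ≤ ‖z‖ := norm_fst_le z
  have hsnd : |z.2| ≤ ‖z‖ := norm_snd_le z
  have hnonneg : 0 ≤ ‖z‖ := norm_nonneg z
  have hpow : |z.1| ^ (1 + a) ≤ (1 + ‖z‖) ^ 2 :=
    calc |z.1| ^ (1 + a) ≤ (1 + ‖z‖) ^ (1 + a) :=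
          Real.rpow_le_rpow (abs_nonneg _) (by linarith) (by linarith)
      _ ≤ (1 + ‖z‖) ^ (2 : ℝ) := Real.rpow_le_rpow_of_exponent_le (by linarith) (by linarith)
      _ = _ := Real.rpow_two _
  calc |modulation a z| ≤ |z.2| + |disp a z.1| := abs_sub _ _
    _ = |z.2| + |z.1| * |z.1| ^ (1 + a) := by
        rw [disp, abs_mul, abs_of_nonneg (a := |z.1| ^ (1 + a)) (by positivity)]
    _ ≤ (1 + ‖z‖) + (1 + ‖z‖) * (1 + ‖z‖) ^ 2 := by
        gcongr <;> linarith
    _ ≤ _ := by nlinarith [sq_nonneg ‖z‖, pow_nonneg hnonneg 3]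

lemma two_pow_le_of_sqrtCutoff_ne_zero (ha : -1 ≤ a) (ha1 : a ≤ 1) (hχ : DyadicCutoffs χ₀ χ)
    {j : ℕ} {z : ℝ × ℝ} (h : sqrtCutoff a χ₀ χ j z ≠ 0) : (2 : ℝ) ^ j ≤ 4 * (1 + ‖z‖) ^ 3 := by
  have hchi : chiJ χ₀ χ j (modulation a z) ≠ 0 := fun hzero => h (by simp [sqrtCutoff, hzero])
  rcases eq_or_ne j 0 with rfl | hj
  · have : 1 ≤ (1 + ‖z‖) ^ 3 := one_le_pow₀ (by linarith [norm_nonneg z])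
    linarith
  · linarith [two_pow_le_of_chiJ_ne_zero hχ hj hchi, abs_modulation_le ha ha1 z]

lemma sobolevWeight_le {s : ℝ} (hs : s ≤ 1) (z : ℝ × ℝ) :
    sobolevWeight s z ≤ ENNReal.ofReal (1 + ‖z‖) := by
  have hz : |z.1| ≤ ‖z‖ := norm_fst_le z
  refine ENNReal.ofReal_le_ofReal ?_
  calc (1 + |z.1|) ^ s ≤ (1 + |z.1|) ^ (1 : ℝ) :=
        Real.rpow_le_rpow_of_exponent_le (by linarith [abs_nonneg z.1]) hs
    _ ≤ 1 + ‖z‖ := by rw [Real.rpow_one]; gcongr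

lemma exists_one_add_norm_pow_mul_norm_le {E F : Type*} [NormedAddCommGroup E] [NormedSpace ℝ E]
    [NormedAddCommGroup F] [NormedSpace ℝ F] (k : ℕ) (G : 𝓢(E, F)) :
    ∃ K, ∀ z, (1 + ‖z‖) ^ k * ‖G z‖ ≤ K := by
  refine ⟨2 ^ k * ((Finset.Iic (k, 0)).sup fun m => SchwartzMap.seminorm ℝ m.1 m.2) G,
    fun z => ?_⟩
  simpa using SchwartzMap.one_add_le_sup_seminorm_apply (𝕜 := ℝ) (m := (k, 0)) (k := k) (n := 0)
    le_rfl le_rfl G z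

lemma eLpNorm_inv_one_add_norm_sq_lt_top :
    eLpNorm (fun z : ℝ × ℝ => ENNReal.ofReal ((1 + ‖z‖) ^ 2)⁻¹) 2 volume < ∞ := by
  rw [eLpNorm_two_eq_lintegral]
  refine ENNReal.rpow_lt_top_of_nonneg (by norm_num) (ne_of_lt ?_)
  convert finite_integral_one_add_norm (E := ℝ × ℝ) (μ := volume) (r := 4) (by simp; norm_num)
    using 4 with z
  rw [← ENNReal.ofReal_pow (by positivity), Real.rpow_neg (by positivity),
    show (4 : ℝ) = ((4 : ℕ) : ℝ) by norm_num, Real.rpow_natCast, inv_pow, ← pow_mul]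

/-- On the support of the `j`-th cutoff `2^j` is at most cubic, so polynomial decay of order six
leaves a factor `2^{-j}` and a square integrable function. -/
lemma dyadicPiece_le_of_decay (ha : -1 ≤ a) (ha1 : a ≤ 1) (hχ : DyadicCutoffs χ₀ χ) {s : ℝ}
    (hs : s ≤ 1) {G : ℝ × ℝ → ℂ} {K : ℝ} (hK : ∀ z, (1 + ‖z‖) ^ 6 * ‖G z‖ ≤ K) (j : ℕ)
    (z : ℝ × ℝ) :
    dyadicPiece a χ₀ χ s j (fun p => ‖G p‖ₑ) z ≤
      ENNReal.ofReal (4 * K) * dyadicScale (-1) j * ENNReal.ofReal ((1 + ‖z‖) ^ 2)⁻¹ := by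
  by_cases hzero : sqrtCutoff a χ₀ χ j z = 0
  · simp [dyadicPiece, hzero]
  have hj := two_pow_le_of_sqrtCutoff_ne_zero ha ha1 hχ hzero
  have hK0 : 0 ≤ K := le_trans (by positivity) (hK 0)
  have hdecay : (1 + ‖z‖) * ‖G z‖ ≤ 4 * K * (2 ^ j)⁻¹ * ((1 + ‖z‖) ^ 2)⁻¹ := by
    rw [← div_eq_mul_inv, ← div_eq_mul_inv, le_div_iff₀ (by positivity),
      le_div_iff₀ (by positivity)]
    calc (1 + ‖z‖) * ‖G z‖ * (1 + ‖z‖) ^ 2 * 2 ^ j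
        ≤ (1 + ‖z‖) * ‖G z‖ * (1 + ‖z‖) ^ 2 * (4 * (1 + ‖z‖) ^ 3) := by gcongr
      _ = 4 * ((1 + ‖z‖) ^ 6 * ‖G z‖) := by ring
      _ ≤ 4 * K := by gcongr; exact hK z
  have hscale : dyadicScale (-1) j = ENNReal.ofReal (2 ^ j)⁻¹ := by
    rw [dyadicScale, mul_neg_one, Real.rpow_neg two_pos.le, Real.rpow_natCast]
  calc dyadicPiece a χ₀ χ s j (fun p => ‖G p‖ₑ) z
      ≤ 1 * (ENNReal.ofReal (1 + ‖z‖) * ‖G z‖ₑ) := by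
        unfold dyadicPiece
        gcongr
        exacts [sqrtCutoff_le_one hχ j z, sobolevWeight_le hs z]
    _ = ENNReal.ofReal ((1 + ‖z‖) * ‖G z‖) := by
        rw [one_mul, ENNReal.ofReal_mul (by positivity), ofReal_norm]
    _ ≤ ENNReal.ofReal (4 * K * (2 ^ j)⁻¹ * ((1 + ‖z‖) ^ 2)⁻¹) := ENNReal.ofReal_le_ofReal hdecay
    _ = _ := by
        rw [ENNReal.ofReal_mul (by positivity), ENNReal.ofReal_mul (by positivity), hscale]

lemma eXnorm_schwartz_lt_top (ha : -1 ≤ a) (ha1 : a ≤ 1) (hχ : DyadicCutoffs χ₀ χ) {b s : ℝ}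
    (hb : b < 1) (hs : s ≤ 1) (G : 𝓢(ℝ × ℝ, ℂ)) :
    eXnorm a χ₀ χ b s (fun p => ‖G p‖ₑ) < ∞ := by
  obtain ⟨K, hK⟩ := exists_one_add_norm_pow_mul_norm_le 6 G
  set N := eLpNorm (fun z : ℝ × ℝ => ENNReal.ofReal ((1 + ‖z‖) ^ 2)⁻¹) 2 volume
  have hpiece (j : ℕ) : eLpNorm (dyadicPiece a χ₀ χ s j fun p => ‖G p‖ₑ) 2 volume ≤
      ENNReal.ofReal (4 * K) * dyadicScale (-1) j * N := by
    rw [← eLpNorm_const_mul_ennreal (by norm_num) _ (by fun_prop)]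
    exact eLpNorm_mono_enorm fun z => by
      simpa only [enorm_eq_self] using dyadicPiece_le_of_decay ha ha1 hχ hs hK j z
  calc eXnorm a χ₀ χ b s (fun p => ‖G p‖ₑ)
      ≤ ∑' j, dyadicScale b j * (ENNReal.ofReal (4 * K) * dyadicScale (-1) j * N) :=
        ENNReal.tsum_le_tsum fun j => by gcongr; exact hpiece j
    _ = ENNReal.ofReal (4 * K) * N * ∑' j, dyadicScale (b + -1) j := by
        rw [← ENNReal.tsum_mul_left]
        refine tsum_congr fun j => ?_
        rw [dyadicScale_add]
        ring
    _ < ∞ := ENNReal.mul_lt_top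
        (ENNReal.mul_lt_top ENNReal.ofReal_lt_top eLpNorm_inv_one_add_norm_sq_lt_top)
        (tsum_dyadicScale_lt_top (by linarith))

lemma integral_chiJ_rpow_half_eq_toReal_eLpNorm (ha : 0 < a) (hχ : DyadicCutoffs χ₀ χ) (s : ℝ)
    (j : ℕ) {f : ℝ × ℝ → ℂ} (hf : Measurable f) :
    (∫ p, chiJ χ₀ χ j (modulation a p) * (1 + |p.1|) ^ (2 * s) * ‖f p‖ ^ 2) ^ (1 / 2 : ℝ) =
      (eLpNorm (dyadicPiece a χ₀ χ s j fun p => ‖f p‖ₑ) 2 volume).toReal := by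
  have hchi (p : ℝ × ℝ) : 0 ≤ chiJ χ₀ χ j (modulation a p) := (chiJ_mem_Icc hχ j _).1
  have hmeas : Measurable fun p : ℝ × ℝ =>
      chiJ χ₀ χ j (modulation a p) * (1 + |p.1|) ^ (2 * s) * ‖f p‖ ^ 2 :=
    (((contDiff_chiJ hχ j).continuous.measurable.comp (measurable_modulation ha)).mul
      (by fun_prop)).mul (by fun_prop)
  have hsq (p : ℝ × ℝ) :
      ENNReal.ofReal (chiJ χ₀ χ j (modulation a p) * (1 + |p.1|) ^ (2 * s) * ‖f p‖ ^ 2) =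
        dyadicPiece a χ₀ χ s j (fun p => ‖f p‖ₑ) p ^ 2 := by
    have hweight : (1 + |p.1|) ^ (2 * s) = ((1 + |p.1|) ^ s) ^ 2 := by
      rw [← Real.rpow_natCast _ 2, ← Real.rpow_mul (by positivity), mul_comm s]
      norm_num
    rw [hweight, ENNReal.ofReal_mul (mul_nonneg (hchi p) (by positivity)),
      ENNReal.ofReal_mul (hchi p), ENNReal.ofReal_pow (by positivity),
      ENNReal.ofReal_pow (by positivity), ofReal_norm, dyadicPiece, mul_pow, mul_pow, sqrtCutoff,
      rpow_half_sq, sobolevWeight, mul_assoc]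
  rw [integral_eq_lintegral_of_nonneg_ae
    (.of_forall fun p => mul_nonneg (mul_nonneg (hchi p) (by positivity)) (by positivity))
    hmeas.aestronglyMeasurable, lintegral_congr hsq, eLpNorm_two_eq_lintegral,
    ENNReal.toReal_rpow]

/-- Finiteness of `eXnorm` excludes the junk values of `∫` and `∑'` in `Xnorm`. -/
lemma Xnorm_eq_toReal_eXnorm (ha : 0 < a) (ha1 : a ≤ 1) (hχ : DyadicCutoffs χ₀ χ) {b s : ℝ}
    (hb : b < 1) (hs : s ≤ 1) (u : 𝓢(ℝ × ℝ, ℂ)) :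
    Xnorm a χ₀ χ b s (fun p => u p) =
      (eXnorm a χ₀ χ b s (fun p => ‖schwartzFT u p‖ₑ)).toReal := by
  have hfin := (eXnorm_schwartz_lt_top (by linarith) ha1 hχ hb hs (schwartzFT u)).ne
  unfold eXnorm at hfin ⊢
  rw [ENNReal.tsum_toReal_eq fun j => ENNReal.ne_top_of_tsum_ne_top hfin j, Xnorm]
  refine tsum_congr fun j => ?_
  rw [ENNReal.toReal_mul, dyadicScale, ENNReal.toReal_ofReal (by positivity),
    ← integral_chiJ_rpow_half_eq_toReal_eLpNorm ha hχ s j (schwartzFT u).continuous.measurable]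
  simp only [schwartzFT_apply, modulation]

end Conversion

/-! ### The bilinear estimate -/

section Assembly
open scoped SchwartzMap LineDeriv
variable {χ₀ χ : ℝ → ℝ} {a : ℝ}

lemma schwartz_hasLineDerivAt (w : 𝓢(ℝ × ℝ, ℂ)) (p m : ℝ × ℝ) :
    HasLineDerivAt ℝ w ((∂_{m} w) p) p m := by
  rw [SchwartzMap.lineDerivOp_apply_eq_fderiv]
  exact (w.hasFDerivAt p).hasLineDerivAt m

lemma schwartz_hasDerivAt_fst (w : 𝓢(ℝ × ℝ, ℂ)) (x y : ℝ) :
    HasDerivAt (fun x => w (x, y)) ((∂_{((1 : ℝ), (0 : ℝ))} w) (x, y)) x := by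
  rw [SchwartzMap.lineDerivOp_apply_eq_fderiv]
  exact (w.hasFDerivAt (x, y)).comp_hasDerivAt x ((hasDerivAt_id x).prodMk (hasDerivAt_const x y))

/-- The derivative `∂ₓ(uv)` as a Schwartz function. -/
def derivMul (u v : 𝓢(ℝ × ℝ, ℂ)) : 𝓢(ℝ × ℝ, ℂ) := ∂_{((1 : ℝ), (0 : ℝ))} (schwartzMul u v)

lemma derivMul_apply (u v : 𝓢(ℝ × ℝ, ℂ)) (p : ℝ × ℝ) :
    derivMul u v p = deriv (fun x => u (x, p.2) * v (x, p.2)) p.1 := by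
  simpa only [schwartzMul_apply] using!
    (schwartz_hasDerivAt_fst (schwartzMul u v) p.1 p.2).deriv.symm

lemma schwartzFT_add (u v : 𝓢(ℝ × ℝ, ℂ)) : schwartzFT (u + v) = schwartzFT u + schwartzFT v := by
  simp only [schwartzFT, map_add, FourierTransform.fourierInv_add]

lemma schwartzFT_smul (c : ℂ) (u : 𝓢(ℝ × ℝ, ℂ)) : schwartzFT (c • u) = c • schwartzFT u := by
  simp only [schwartzFT, map_smul, FourierTransform.fourierInv_smul]

lemma lineDeriv_mulLinear (m n : ℝ × ℝ) (w : 𝓢(ℝ × ℝ, ℂ)) :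
    ∂_{n} (mulLinear m w) =
      mulLinear m (∂_{n} w) + ((n.1 * m.1 + n.2 * m.2 : ℝ) : ℂ) • w := by
  ext p
  have hform : HasDerivAt (fun t : ℝ => (p + t • n).1 * m.1 + (p + t • n).2 * m.2)
      (n.1 * m.1 + n.2 * m.2) 0 := by
    refine ((((hasDerivAt_id (0 : ℝ)).mul_const (n.1 * m.1 + n.2 * m.2)).const_add
      (p.1 * m.1 + p.2 * m.2)).congr_deriv (one_mul _)).congr_of_eventuallyEq
      (.of_forall fun t => ?_)
    simp only [Prod.fst_add, Prod.snd_add, Prod.smul_fst, Prod.smul_snd, smul_eq_mul, id_eq]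
    ring
  have hprod := hform.ofReal_comp.mul (schwartz_hasLineDerivAt w p n)
  have hunique := HasDerivAt.unique (schwartz_hasLineDerivAt (mulLinear m w) p n)
    (hprod.congr_of_eventuallyEq (.of_forall fun t => mulLinear_apply m w (p + t • n)))
  rw [hunique, add_apply, smul_apply, mulLinear_apply]
  simp only [zero_smul, add_zero, smul_eq_mul]
  ring

lemma mulLinear_derivMul (m : ℝ × ℝ) (u v : 𝓢(ℝ × ℝ, ℂ)) :
    mulLinear m (derivMul u v) =
      ∂_{((1 : ℝ), (0 : ℝ))} (mulLinear m (schwartzMul u v)) + (-(m.1 : ℂ)) • schwartzMul u v := by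
  rw [lineDeriv_mulLinear, derivMul]
  simp

lemma enorm_schwartzFT_mulLinear_derivMul_le {D : ℝ}
    (hD : ∀ y, |deriv Real.smoothTransition y| ≤ D) (u v : 𝓢(ℝ × ℝ, ℂ)) (z m : ℝ × ℝ) :
    ‖schwartzFT (mulLinear m (derivMul u v)) z‖ₑ ≤
      paraproduct (fun p => ‖schwartzFT (mulLinear m u) p‖ₑ) (fun p => ‖schwartzFT v p‖ₑ) z +
      paraproduct (fun p => ‖schwartzFT (mulLinear m v) p‖ₑ) (fun p => ‖schwartzFT u p‖ₑ) z +
      ENNReal.ofReal ((2 * D + 1) * |m.1|) *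
        ((fun p => ‖schwartzFT u p‖ₑ) ⋆ₗ fun p => ‖schwartzFT v p‖ₑ) z := by
  have hD0 : 0 ≤ D := (abs_nonneg _).trans (hD 0)
  have henorm (x : ℝ) : ‖(x : ℂ)‖ₑ = ENNReal.ofReal |x| := by
    rw [← ofReal_norm, Complex.norm_real, Real.norm_eq_abs]
  have hI : ‖I‖ₑ = 1 := by rw [← ofReal_norm]; simp
  have hconst : ENNReal.ofReal ((2 * D + 1) * |m.1|) =
      ENNReal.ofReal (2 * D * |m.1|) + ENNReal.ofReal |m.1| := by
    rw [← ENNReal.ofReal_add (by positivity) (by positivity), add_mul, one_mul]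
  have htriangle : ‖schwartzFT (mulLinear m (derivMul u v)) z‖ₑ ≤
      ENNReal.ofReal |z.1| * ‖schwartzFT (mulLinear m (schwartzMul u v)) z‖ₑ +
        ENNReal.ofReal |m.1| * ‖schwartzFT (schwartzMul u v) z‖ₑ := by
    rw [mulLinear_derivMul, schwartzFT_add, schwartzFT_smul, schwartzFT_lineDeriv, add_apply,
      smul_apply, neg_apply, smul_apply, mulLinear_apply]
    refine (enorm_add_le _ _).trans_eq ?_
    simp only [mul_one, mul_zero, add_zero, enorm_neg, enorm_smul, enorm_mul, hI, one_mul, henorm]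
  refine htriangle.trans ?_
  rw [hconst, add_mul, ← add_assoc]
  exact add_le_add (mul_enorm_schwartzFT_mulLinear_schwartzMul_le hD u v z m)
    (mul_le_mul_right (enorm_schwartzFT_schwartzMul_le u v z) _)

end Assembly

section SchwartzNorms
open scoped SchwartzMap LineDeriv
variable {χ₀ χ : ℝ → ℝ} {a : ℝ}

/-- The norm `Xnorm` of a Schwartz function with values in `[0, ∞]`, which avoids the junk values
of integrals and series. -/
def schwartzXnorm (a : ℝ) (χ₀ χ : ℝ → ℝ) (b s : ℝ) (u : 𝓢(ℝ × ℝ, ℂ)) : ℝ≥0∞ :=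
  eXnorm a χ₀ χ b s fun p => ‖schwartzFT u p‖ₑ

/-- The norm `Ynorm` of a Schwartz function with values in `[0, ∞]`. -/
def schwartzYnorm (a : ℝ) (χ₀ χ : ℝ → ℝ) (b s₀ s₁ : ℝ) (u : 𝓢(ℝ × ℝ, ℂ)) : ℝ≥0∞ :=
  schwartzXnorm a χ₀ χ b s₀ (mulLinear (1, 0) u) + schwartzXnorm a χ₀ χ b s₁ (mulLinear (0, 1) u)

/-- The factor `‖v‖_X + ‖v‖_X^{1/2} ‖v‖_Y^{1/2}` by which the low frequency input enters the
bilinear estimate. -/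
def lowFrequencyFactor (a : ℝ) (χ₀ χ : ℝ → ℝ) (v : 𝓢(ℝ × ℝ, ℂ)) : ℝ≥0∞ :=
  schwartzXnorm a χ₀ χ (1 / 2) (1 / 2 + a / 2) v +
    schwartzXnorm a χ₀ χ (1 / 2) (1 / 2 + a / 2) v ^ (1 / 2 : ℝ) *
      schwartzYnorm a χ₀ χ (1 / 2) (-(1 / 2 + a / 2)) (1 / 2 + a / 2) v ^ (1 / 2 : ℝ)

lemma schwartzXnorm_ne_top (ha : -1 ≤ a) (ha1 : a ≤ 1) (hχ : DyadicCutoffs χ₀ χ) {b s : ℝ}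
    (hb : b < 1) (hs : s ≤ 1) (u : 𝓢(ℝ × ℝ, ℂ)) : schwartzXnorm a χ₀ χ b s u ≠ ∞ :=
  (eXnorm_schwartz_lt_top ha ha1 hχ hb hs (schwartzFT u)).ne

lemma schwartzYnorm_ne_top (ha : -1 ≤ a) (ha1 : a ≤ 1) (hχ : DyadicCutoffs χ₀ χ) {b s₀ s₁ : ℝ}
    (hb : b < 1) (hs₀ : s₀ ≤ 1) (hs₁ : s₁ ≤ 1) (u : 𝓢(ℝ × ℝ, ℂ)) :
    schwartzYnorm a χ₀ χ b s₀ s₁ u ≠ ∞ :=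
  ENNReal.add_ne_top.2
    ⟨schwartzXnorm_ne_top ha ha1 hχ hb hs₀ _, schwartzXnorm_ne_top ha ha1 hχ hb hs₁ _⟩

lemma toReal_schwartzXnorm (ha : 0 < a) (ha1 : a ≤ 1) (hχ : DyadicCutoffs χ₀ χ) {b s : ℝ}
    (hb : b < 1) (hs : s ≤ 1) (u : 𝓢(ℝ × ℝ, ℂ)) :
    (schwartzXnorm a χ₀ χ b s u).toReal = Xnorm a χ₀ χ b s (fun p => u p) :=
  (Xnorm_eq_toReal_eXnorm ha ha1 hχ hb hs u).symm

lemma toReal_schwartzYnorm (ha : 0 < a) (ha1 : a ≤ 1) (hχ : DyadicCutoffs χ₀ χ) {b s₀ s₁ : ℝ}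
    (hb : b < 1) (hs₀ : s₀ ≤ 1) (hs₁ : s₁ ≤ 1) (u : 𝓢(ℝ × ℝ, ℂ)) :
    (schwartzYnorm a χ₀ χ b s₀ s₁ u).toReal = Ynorm a χ₀ χ b s₀ s₁ (fun p => u p) := by
  have ha' : -1 ≤ a := by linarith
  rw [schwartzYnorm, ENNReal.toReal_add (schwartzXnorm_ne_top ha' ha1 hχ hb hs₀ _)
    (schwartzXnorm_ne_top ha' ha1 hχ hb hs₁ _), toReal_schwartzXnorm ha ha1 hχ hb hs₀,
    toReal_schwartzXnorm ha ha1 hχ hb hs₁, Ynorm]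
  simp only [mulLinear_apply, mul_one, mul_zero, add_zero, zero_add]

lemma lowFrequencyFactor_ne_top (ha : -1 ≤ a) (ha1 : a ≤ 1) (hχ : DyadicCutoffs χ₀ χ)
    (v : 𝓢(ℝ × ℝ, ℂ)) : lowFrequencyFactor a χ₀ χ v ≠ ∞ := by
  have hX := schwartzXnorm_ne_top (b := 1 / 2) (s := 1 / 2 + a / 2) ha ha1 hχ (by norm_num)
    (by linarith) v
  have hY := schwartzYnorm_ne_top (b := 1 / 2) (s₀ := -(1 / 2 + a / 2)) (s₁ := 1 / 2 + a / 2) ha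
    ha1 hχ (by norm_num) (by linarith) (by linarith) v
  exact ENNReal.add_ne_top.2 ⟨hX, ENNReal.mul_ne_top
    (ENNReal.rpow_ne_top_of_nonneg (by norm_num) hX)
    (ENNReal.rpow_ne_top_of_nonneg (by norm_num) hY)⟩

lemma toReal_lowFrequencyFactor (ha : 0 < a) (ha1 : a ≤ 1) (hχ : DyadicCutoffs χ₀ χ)
    (v : 𝓢(ℝ × ℝ, ℂ)) :
    (lowFrequencyFactor a χ₀ χ v).toReal =
      Xnorm a χ₀ χ (1 / 2) (1 / 2 + a / 2) (fun p => v p) +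
        Xnorm a χ₀ χ (1 / 2) (1 / 2 + a / 2) (fun p => v p) ^ (1 / 2 : ℝ) *
          Ynorm a χ₀ χ (1 / 2) (-(1 / 2 + a / 2)) (1 / 2 + a / 2) (fun p => v p) ^ (1 / 2 : ℝ) := by
  have hsum := ENNReal.add_ne_top.1 (lowFrequencyFactor_ne_top (by linarith) ha1 hχ v)
  rw [lowFrequencyFactor, ENNReal.toReal_add hsum.1 hsum.2, ENNReal.toReal_mul,
    ← ENNReal.toReal_rpow, ← ENNReal.toReal_rpow,
    toReal_schwartzXnorm ha ha1 hχ (by norm_num) (by linarith),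
    toReal_schwartzYnorm ha ha1 hχ (by norm_num) (by linarith) (by linarith)]

/-- The constant with which `lowFrequencyFactor` dominates the norms of `timeMajorant`, when the
derivatives of the cutoffs are at most `M * 2^{-j}`. -/
def lowFrequencyConst (M : ℝ) : ℝ≥0∞ := 2 + (ENNReal.ofReal (3 * M) ^ (1 / 2 : ℝ) * 4 + 1)

lemma lowFrequencyConst_lt_top (M : ℝ) : lowFrequencyConst M < ∞ := by
  have : ENNReal.ofReal (3 * M) ^ (1 / 2 : ℝ) < ∞ :=
    ENNReal.rpow_lt_top_of_nonneg (by norm_num) ENNReal.ofReal_ne_top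
  unfold lowFrequencyConst
  finiteness

lemma enorm_lineDeriv_schwartzFT (m : ℝ × ℝ) (v : 𝓢(ℝ × ℝ, ℂ)) (p : ℝ × ℝ) :
    ‖(∂_{m} (schwartzFT v)) p‖ₑ = ‖schwartzFT (mulLinear m v) p‖ₑ := by
  rw [lineDeriv_schwartzFT, smul_apply, enorm_smul, ← ofReal_norm I, Complex.norm_I,
    ENNReal.ofReal_one, one_mul]

lemma tsum_eLpNorm_timeMajorant_schwartzFT_le (ha : 0 < a) (hχ : DyadicCutoffs χ₀ χ) (M : ℝ)
    (v : 𝓢(ℝ × ℝ, ℂ)) :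
    ∑' j, dyadicScale (1 / 2) j * eLpNorm (timeMajorant a χ₀ χ M j (schwartzFT v)
        fun p => (∂_{((1 : ℝ), (0 : ℝ))} (schwartzFT v)) p) 2 volume +
      schwartzXnorm a χ₀ χ (1 / 2) (1 / 2 + a / 2) v ≤
        lowFrequencyConst M * lowFrequencyFactor a χ₀ χ v := by
  have hmajorant := tsum_eLpNorm_timeMajorant_le ha hχ M (schwartzFT v).continuous
    (∂_{((1 : ℝ), (0 : ℝ))} (schwartzFT v)).continuous
  simp only [enorm_lineDeriv_schwartzFT] at hmajorant
  set X := schwartzXnorm a χ₀ χ (1 / 2) (1 / 2 + a / 2) v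
  set Y := schwartzYnorm a χ₀ χ (1 / 2) (-(1 / 2 + a / 2)) (1 / 2 + a / 2) v
  set k := ENNReal.ofReal (3 * M) ^ (1 / 2 : ℝ)
  have hXY : schwartzXnorm a χ₀ χ (1 / 2) (-(1 / 2 + a / 2)) (mulLinear (1, 0) v) ≤ Y :=
    le_self_add
  calc _ ≤ 2 * (X ^ (1 / 2 : ℝ) * Y ^ (1 / 2 : ℝ)) + k * (4 * X) + X := by
        gcongr
        refine hmajorant.trans ?_
        gcongr
        exacts [le_rfl, hXY, le_rfl]
    _ = 2 * (X ^ (1 / 2 : ℝ) * Y ^ (1 / 2 : ℝ)) + (k * 4 + 1) * X := by ring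
    _ ≤ lowFrequencyConst M * (X ^ (1 / 2 : ℝ) * Y ^ (1 / 2 : ℝ)) + lowFrequencyConst M * X := by
        gcongr
        exacts [le_self_add, le_add_self]
    _ = _ := by rw [lowFrequencyFactor]; ring

lemma measurable_enorm_schwartzFT (u : 𝓢(ℝ × ℝ, ℂ)) : Measurable fun p => ‖schwartzFT u p‖ₑ :=
  (schwartzFT u).continuous.enorm.measurable

lemma eXnorm_paraproduct_schwartzFT_le (ha : 0 < a) (ha1 : a ≤ 1) (hχ : DyadicCutoffs χ₀ χ)
    {M : ℝ} (hM : ∀ j y, |deriv (chiJ χ₀ χ j) y| ≤ M * (2 ^ j)⁻¹) {s : ℝ}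
    (hs : s = 1 / 2 + a / 2 ∨ s = -(1 / 2 + a / 2)) (u v : 𝓢(ℝ × ℝ, ℂ)) :
    eXnorm a χ₀ χ (-(1 / 2 - a / 16)) s
        (paraproduct (fun p => ‖schwartzFT u p‖ₑ) (fun p => ‖schwartzFT v p‖ₑ)) ≤
      paraproductConst a * lowFrequencyConst M *
        (schwartzXnorm a χ₀ χ (1 / 2) s u * lowFrequencyFactor a χ₀ χ v) := by
  have hV₁ := (∂_{((1 : ℝ), (0 : ℝ))} (schwartzFT v)).continuous
  refine (eXnorm_paraproduct_le ha ha1 hχ hs (measurable_enorm_schwartzFT u)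
    (measurable_enorm_schwartzFT v)
    (fun j => measurable_timeMajorant ha hχ M j (schwartzFT v).continuous hV₁)
    fun j q => sqrtCutoff_mul_le_timeMajorant ha ha1 hχ hM hV₁
      (schwartz_hasDerivAt_fst (schwartzFT v)) j q).trans ?_
  refine (mul_le_mul_right (tsum_eLpNorm_timeMajorant_schwartzFT_le ha hχ M v) _).trans_eq ?_
  exact mul_mul_mul_comm ..

lemma schwartzXnorm_mulLinear_derivMul_le (ha : 0 < a) (ha1 : a ≤ 1) (hχ : DyadicCutoffs χ₀ χ)
    {D M : ℝ} (hD : ∀ y, |deriv Real.smoothTransition y| ≤ D)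
    (hM : ∀ j y, |deriv (chiJ χ₀ χ j) y| ≤ M * (2 ^ j)⁻¹) {s : ℝ}
    (hs : s = 1 / 2 + a / 2 ∨ s = -(1 / 2 + a / 2)) (m : ℝ × ℝ) (u v : 𝓢(ℝ × ℝ, ℂ)) :
    schwartzXnorm a χ₀ χ (-(1 / 2 - a / 16)) s (mulLinear m (derivMul u v)) ≤
      paraproductConst a * lowFrequencyConst M *
        (schwartzXnorm a χ₀ χ (1 / 2) s (mulLinear m u) * lowFrequencyFactor a χ₀ χ v) +
      paraproductConst a * lowFrequencyConst M *
        (schwartzXnorm a χ₀ χ (1 / 2) s (mulLinear m v) * lowFrequencyFactor a χ₀ χ u) +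
      ENNReal.ofReal ((2 * D + 1) * |m.1|) * eXnorm a χ₀ χ (-(1 / 2 - a / 16)) s
        ((fun p => ‖schwartzFT u p‖ₑ) ⋆ₗ fun p => ‖schwartzFT v p‖ₑ) := by
  have hmeas := measurable_enorm_schwartzFT
  have hpara (u v : 𝓢(ℝ × ℝ, ℂ)) := measurable_paraproduct (hmeas (mulLinear m u)) (hmeas v)
  have hconv := measurable_lconvolution volume (hmeas u) (hmeas v)
  refine (eXnorm_mono (enorm_schwartzFT_mulLinear_derivMul_le hD u v · m)).trans ?_
  refine (eXnorm_add_le ha hχ ((hpara u v).add (hpara v u)) (hconv.const_mul _)).trans ?_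
  rw [eXnorm_const_mul ha hχ _ hconv]
  gcongr
  exact (eXnorm_add_le ha hχ (hpara u v) (hpara v u)).trans (add_le_add
    (eXnorm_paraproduct_schwartzFT_le ha ha1 hχ hM hs _ v)
    (eXnorm_paraproduct_schwartzFT_le ha ha1 hχ hM hs _ u))

/-- The constant of the bilinear estimate, in terms of bounds `D` and `M` for the derivatives of the
cutoffs. -/
def bilinearConst (a D M : ℝ) : ℝ≥0∞ :=
  paraproductConst a * lowFrequencyConst M +
    ENNReal.ofReal (2 * D + 1) * productConst a (-(1 / 2 - a / 16))

lemma bilinearConst_lt_top (ha : 0 < a) (ha1 : a ≤ 1) (D M : ℝ) : bilinearConst a D M < ∞ :=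
  ENNReal.add_lt_top.2
    ⟨ENNReal.mul_lt_top (paraproductConst_lt_top ha) (lowFrequencyConst_lt_top M),
      ENNReal.mul_lt_top ENNReal.ofReal_lt_top (productConst_lt_top ha (by linarith))⟩

lemma schwartzYnorm_derivMul_le (ha : 0 < a) (ha1 : a ≤ 1) (hχ : DyadicCutoffs χ₀ χ) {D M : ℝ}
    (hD : ∀ y, |deriv Real.smoothTransition y| ≤ D)
    (hM : ∀ j y, |deriv (chiJ χ₀ χ j) y| ≤ M * (2 ^ j)⁻¹) (u v : 𝓢(ℝ × ℝ, ℂ)) :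
    schwartzYnorm a χ₀ χ (-(1 / 2 - a / 16)) (-(1 / 2 + a / 2)) (1 / 2 + a / 2) (derivMul u v) ≤
      bilinearConst a D M *
        (schwartzYnorm a χ₀ χ (1 / 2) (-(1 / 2 + a / 2)) (1 / 2 + a / 2) u *
            lowFrequencyFactor a χ₀ χ v +
          schwartzYnorm a χ₀ χ (1 / 2) (-(1 / 2 + a / 2)) (1 / 2 + a / 2) v *
            lowFrequencyFactor a χ₀ χ u +
          schwartzXnorm a χ₀ χ (1 / 2) (1 / 2 + a / 2) u *
            schwartzXnorm a χ₀ χ (1 / 2) (1 / 2 + a / 2) v) := by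
  have hx := schwartzXnorm_mulLinear_derivMul_le ha ha1 hχ hD hM (.inr rfl) (1, 0) u v
  have ht := schwartzXnorm_mulLinear_derivMul_le ha ha1 hχ hD hM (.inl rfl) (0, 1) u v
  have hproduct := eXnorm_lconvolution_le ha hχ (-(1 / 2 - a / 16))
    (measurable_enorm_schwartzFT u) (measurable_enorm_schwartzFT v)
  simp only [abs_one, mul_one, abs_zero, mul_zero, ENNReal.ofReal_zero, zero_mul, add_zero]
    at hx ht
  set k := paraproductConst a * lowFrequencyConst M
  set c := ENNReal.ofReal (2 * D + 1) * productConst a (-(1 / 2 - a / 16)) with hc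
  set Q := schwartzYnorm a χ₀ χ (1 / 2) (-(1 / 2 + a / 2)) (1 / 2 + a / 2) u *
      lowFrequencyFactor a χ₀ χ v +
    schwartzYnorm a χ₀ χ (1 / 2) (-(1 / 2 + a / 2)) (1 / 2 + a / 2) v *
      lowFrequencyFactor a χ₀ χ u with hQ
  set P := schwartzXnorm a χ₀ χ (1 / 2) (1 / 2 + a / 2) u *
    schwartzXnorm a χ₀ χ (1 / 2) (1 / 2 + a / 2) v with hP
  calc _ ≤ k * Q + c * P := by
        have hx' := hx.trans (add_le_add_right (mul_le_mul_right hproduct _) _)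
        refine (add_le_add hx' ht).trans_eq ?_
        simp only [hQ, hP, hc, schwartzYnorm, schwartzXnorm]
        ring
    _ ≤ bilinearConst a D M * Q + bilinearConst a D M * P := by
        gcongr
        exacts [le_self_add, le_add_self]
    _ = _ := (mul_add ..).symm

lemma exists_schwartzYnorm_derivMul_le (ha : 0 < a) (ha1 : a ≤ 1) (hχ : DyadicCutoffs χ₀ χ) :
    ∃ C : ℝ, 0 < C ∧ ∀ u v : 𝓢(ℝ × ℝ, ℂ),
      schwartzYnorm a χ₀ χ (-(1 / 2 - a / 16)) (-(1 / 2 + a / 2)) (1 / 2 + a / 2)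
          (derivMul u v) ≤
        ENNReal.ofReal C *
          (schwartzYnorm a χ₀ χ (1 / 2) (-(1 / 2 + a / 2)) (1 / 2 + a / 2) u *
              lowFrequencyFactor a χ₀ χ v +
            schwartzYnorm a χ₀ χ (1 / 2) (-(1 / 2 + a / 2)) (1 / 2 + a / 2) v *
              lowFrequencyFactor a χ₀ χ u +
            schwartzXnorm a χ₀ χ (1 / 2) (1 / 2 + a / 2) u *
              schwartzXnorm a χ₀ χ (1 / 2) (1 / 2 + a / 2) v) := by
  obtain ⟨D, hD⟩ := exists_deriv_smoothTransition_le
  obtain ⟨M, hM⟩ := exists_deriv_chiJ_le hχ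
  refine ⟨(bilinearConst a D M).toReal + 1, by positivity, fun u v =>
    (schwartzYnorm_derivMul_le ha ha1 hχ hD hM u v).trans ?_⟩
  gcongr
  exact (ENNReal.le_ofReal_iff_toReal_le (bilinearConst_lt_top ha ha1 D M).ne (by positivity)).2
    (by linarith)

end SchwartzNorms

theorem statement9_general (a : ℝ) (ha : a ∈ Set.Ioc (0 : ℝ) 1)
    (χ₀ χ : ℝ → ℝ) (hχ : DyadicCutoffs χ₀ χ) :
    ∃ b ∈ Set.Ioo (0 : ℝ) (1 / 2), ∃ C > 0,
      ∀ u v : SchwartzMap (ℝ × ℝ) ℂ,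
        Ynorm a χ₀ χ (-b) (-(1 / 2 + a / 2)) (1 / 2 + a / 2)
            (fun p : ℝ × ℝ => deriv (fun x => u (x, p.2) * v (x, p.2)) p.1) ≤
          C * Ynorm a χ₀ χ (1 / 2) (-(1 / 2 + a / 2)) (1 / 2 + a / 2) (fun p => u p) *
              (Xnorm a χ₀ χ (1 / 2) (1 / 2 + a / 2) (fun p => v p) +
                Xnorm a χ₀ χ (1 / 2) (1 / 2 + a / 2) (fun p => v p) ^ ((1 : ℝ) / 2) *
                  Ynorm a χ₀ χ (1 / 2) (-(1 / 2 + a / 2)) (1 / 2 + a / 2)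
                    (fun p => v p) ^ ((1 : ℝ) / 2)) +
            C * Ynorm a χ₀ χ (1 / 2) (-(1 / 2 + a / 2)) (1 / 2 + a / 2) (fun p => v p) *
              (Xnorm a χ₀ χ (1 / 2) (1 / 2 + a / 2) (fun p => u p) +
                Xnorm a χ₀ χ (1 / 2) (1 / 2 + a / 2) (fun p => u p) ^ ((1 : ℝ) / 2) *
                  Ynorm a χ₀ χ (1 / 2) (-(1 / 2 + a / 2)) (1 / 2 + a / 2)
                    (fun p => u p) ^ ((1 : ℝ) / 2)) +
            C * Xnorm a χ₀ χ (1 / 2) (1 / 2 + a / 2) (fun p => u p) *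
              Xnorm a χ₀ χ (1 / 2) (1 / 2 + a / 2) (fun p => v p) := by
  obtain ⟨ha0, ha1⟩ := ha
  obtain ⟨C, hC, hbilinear⟩ := exists_schwartzYnorm_derivMul_le ha0 ha1 hχ
  refine ⟨1 / 2 - a / 16, ⟨by linarith, by linarith⟩, C, hC, fun u v => ?_⟩
  have hX := schwartzXnorm_ne_top (b := 1 / 2) (s := 1 / 2 + a / 2) (by linarith) ha1 hχ
    (by norm_num) (by linarith)
  have hY := schwartzYnorm_ne_top (b := 1 / 2) (s₀ := -(1 / 2 + a / 2)) (s₁ := 1 / 2 + a / 2)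
    (by linarith) ha1 hχ (by norm_num) (by linarith) (by linarith)
  have hlow := lowFrequencyFactor_ne_top (by linarith) ha1 hχ
  have huv := ENNReal.mul_ne_top (hY u) (hlow v)
  have hvu := ENNReal.mul_ne_top (hY v) (hlow u)
  have hXX := ENNReal.mul_ne_top (hX u) (hX v)
  have hreal := ENNReal.toReal_mono (ENNReal.mul_ne_top ENNReal.ofReal_ne_top
    (ENNReal.add_ne_top.2 ⟨ENNReal.add_ne_top.2 ⟨huv, hvu⟩, hXX⟩)) (hbilinear u v)
  rw [ENNReal.toReal_mul, ENNReal.toReal_ofReal hC.le,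
    ENNReal.toReal_add (ENNReal.add_ne_top.2 ⟨huv, hvu⟩) hXX, ENNReal.toReal_add huv hvu] at hreal
  simp only [ENNReal.toReal_mul, toReal_lowFrequencyFactor ha0 ha1 hχ] at hreal
  rw [toReal_schwartzYnorm ha0 ha1 hχ (by linarith) (by linarith) (by linarith),
    toReal_schwartzYnorm ha0 ha1 hχ (by norm_num) (by linarith) (by linarith),
    toReal_schwartzYnorm ha0 ha1 hχ (by norm_num) (by linarith) (by linarith),
    toReal_schwartzXnorm ha0 ha1 hχ (by norm_num) (by linarith),
    toReal_schwartzXnorm ha0 ha1 hχ (by norm_num) (by linarith)] at hreal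
  simp only [derivMul_apply] at hreal
  exact hreal.trans_eq (by ring)

theorem statement9 (a : ℝ) (ha : a ∈ Set.Ioo (0 : ℝ) 1)
    (χ₀ χ : ℝ → ℝ) (hχ : DyadicCutoffs χ₀ χ) :
    ∃ b ∈ Set.Ioo (0 : ℝ) (1 / 2), ∃ C > 0,
      ∀ u v : SchwartzMap (ℝ × ℝ) ℂ,
        Ynorm a χ₀ χ (-b) (-(1 / 2 + a / 2)) (1 / 2 + a / 2)
            (fun p : ℝ × ℝ => deriv (fun x => u (x, p.2) * v (x, p.2)) p.1) ≤
          C * Ynorm a χ₀ χ (1 / 2) (-(1 / 2 + a / 2)) (1 / 2 + a / 2) (fun p => u p) *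
              (Xnorm a χ₀ χ (1 / 2) (1 / 2 + a / 2) (fun p => v p) +
                Xnorm a χ₀ χ (1 / 2) (1 / 2 + a / 2) (fun p => v p) ^ ((1 : ℝ) / 2) *
                  Ynorm a χ₀ χ (1 / 2) (-(1 / 2 + a / 2)) (1 / 2 + a / 2)
                    (fun p => v p) ^ ((1 : ℝ) / 2)) +
            C * Ynorm a χ₀ χ (1 / 2) (-(1 / 2 + a / 2)) (1 / 2 + a / 2) (fun p => v p) *
              (Xnorm a χ₀ χ (1 / 2) (1 / 2 + a / 2) (fun p => u p) +
                Xnorm a χ₀ χ (1 / 2) (1 / 2 + a / 2) (fun p => u p) ^ ((1 : ℝ) / 2) *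
                  Ynorm a χ₀ χ (1 / 2) (-(1 / 2 + a / 2)) (1 / 2 + a / 2)
                    (fun p => u p) ^ ((1 : ℝ) / 2)) +
            C * Xnorm a χ₀ χ (1 / 2) (1 / 2 + a / 2) (fun p => u p) *
              Xnorm a χ₀ χ (1 / 2) (1 / 2 + a / 2) (fun p => v p) :=
  statement9_general a ⟨ha.1, ha.2.le⟩ χ₀ χ hχ
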